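/- Assume (H4.1) and (H4.2) and suppose the Isaacs condition holds: H⁻(t,x,y,p,X) = H⁺(t,x,y,p,X) for all (t,x,y,p,X) ∈ [0,T]×ℝⁿ×ℝ×ℝⁿ×Sⁿ. If W ∈ Θ is a viscosity solution of ∂_t W + H⁻(t,x,W,DW,D²W) = 0 on [0,T)×ℝⁿ with W(T,x) = Φ(x), and U ∈ Θ is a viscosity solution of ∂_t U + H⁺(t,x,U,DU,D²U) = 0 on [0,T)×ℝⁿ with U(T,x) = Φ(x), then W(t,x) = U(t,x) for all (t,x) ∈ [0,T]×ℝⁿ. -/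

import Mathlib

noncomputable section

open scoped RealInnerProductSpace Matrix

attribute [local instance] Matrix.frobeniusNormedAddCommGroup

/-- The Euclidean state space `ℝⁿ`. -/
abbrev Eucl (n : ℕ) := EuclideanSpace ℝ (Fin n)

/-- Time derivative `∂φ/∂t (t,x)` of a function `φ : ℝ × ℝⁿ → ℝ`. -/
def timeDeriv {n : ℕ} (φ : ℝ → Eucl n → ℝ) (t : ℝ) (x : Eucl n) : ℝ :=
  deriv (fun s => φ s x) t

/-- Spatial gradient `Dφ(t,x) ∈ ℝⁿ`. -/
def spaceGrad {n : ℕ} (φ : ℝ → Eucl n → ℝ) (t : ℝ) (x : Eucl n) : Eucl n :=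
  gradient (fun y => φ t y) x

/-- Spatial Hessian `D²φ(t,x)` as an `n × n` matrix. -/
def spaceHess {n : ℕ} (φ : ℝ → Eucl n → ℝ) (t : ℝ) (x : Eucl n) :
    Matrix (Fin n) (Fin n) ℝ :=
  Matrix.of fun i j =>
    fderiv ℝ (fun y => fderiv ℝ (fun y' => φ t y') y (EuclideanSpace.single j (1 : ℝ))) x
      (EuclideanSpace.single i (1 : ℝ))

/-- The row vector `pᵀσ ∈ ℝᵈ`. -/
def rowMul {n d : ℕ} (p : Eucl n) (M : Matrix (Fin n) (Fin d) ℝ) : Eucl d :=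
  (WithLp.equiv 2 (Fin d → ℝ)).symm fun j => ∑ i, p i * M i j

/-- `φ ∈ C³_{l,b}([0,T]×ℝⁿ)`: three times continuously differentiable with all
derivatives of order 1 to 3 bounded. -/
def IsTestFunction {n : ℕ} (φ : ℝ → Eucl n → ℝ) : Prop :=
  ContDiff ℝ 3 (fun p : ℝ × Eucl n => φ p.1 p.2) ∧
  ∀ i : ℕ, 1 ≤ i → i ≤ 3 →
    ∃ M : ℝ, ∀ p : ℝ × Eucl n,
      ‖iteratedFDeriv ℝ i (fun q : ℝ × Eucl n => φ q.1 q.2) p‖ ≤ M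

/-- Viscosity subsolution of `∂_t w + G(t,x,w,Dw,D²w) = 0` on `[0,T)×ℝⁿ`
with terminal condition `w(T,·) = g`. -/
def IsViscositySubsolution {n : ℕ} (T : ℝ)
    (G : ℝ → Eucl n → ℝ → Eucl n → Matrix (Fin n) (Fin n) ℝ → ℝ)
    (g : Eucl n → ℝ) (w : ℝ → Eucl n → ℝ) : Prop :=
  (∀ x : Eucl n, w T x ≤ g x) ∧
  ∀ φ : ℝ → Eucl n → ℝ, IsTestFunction φ →
    ∀ t ∈ Set.Ico (0 : ℝ) T, ∀ x : Eucl n,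
      IsLocalMaxOn (fun p : ℝ × Eucl n => w p.1 p.2 - φ p.1 p.2)
        (Set.Icc (0 : ℝ) T ×ˢ (Set.univ : Set (Eucl n))) (t, x) →
      0 ≤ timeDeriv φ t x + G t x (φ t x) (spaceGrad φ t x) (spaceHess φ t x)

/-- Viscosity supersolution of `∂_t w + G(t,x,w,Dw,D²w) = 0` on `[0,T)×ℝⁿ`
with terminal condition `w(T,·) = g`. -/
def IsViscositySupersolution {n : ℕ} (T : ℝ)
    (G : ℝ → Eucl n → ℝ → Eucl n → Matrix (Fin n) (Fin n) ℝ → ℝ)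
    (g : Eucl n → ℝ) (w : ℝ → Eucl n → ℝ) : Prop :=
  (∀ x : Eucl n, g x ≤ w T x) ∧
  ∀ φ : ℝ → Eucl n → ℝ, IsTestFunction φ →
    ∀ t ∈ Set.Ico (0 : ℝ) T, ∀ x : Eucl n,
      IsLocalMinOn (fun p : ℝ × Eucl n => w p.1 p.2 - φ p.1 p.2)
        (Set.Icc (0 : ℝ) T ×ˢ (Set.univ : Set (Eucl n))) (t, x) →
      timeDeriv φ t x + G t x (φ t x) (spaceGrad φ t x) (spaceHess φ t x) ≤ 0

/-- Viscosity solution: both a sub- and a supersolution. -/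
def IsViscositySolution {n : ℕ} (T : ℝ)
    (G : ℝ → Eucl n → ℝ → Eucl n → Matrix (Fin n) (Fin n) ℝ → ℝ)
    (g : Eucl n → ℝ) (w : ℝ → Eucl n → ℝ) : Prop :=
  IsViscositySubsolution T G g w ∧ IsViscositySupersolution T G g w

/-- The lower Hamiltonian `H⁻`. -/
def lowerHamiltonian {n d : ℕ} {U V : Type*}
    (b : ℝ → Eucl n → U → V → Eucl n)
    (σ : ℝ → Eucl n → U → V → Matrix (Fin n) (Fin d) ℝ)
    (f : ℝ → Eucl n → ℝ → Eucl d → U → V → ℝ)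
    (t : ℝ) (x : Eucl n) (y : ℝ) (p : Eucl n) (X : Matrix (Fin n) (Fin n) ℝ) : ℝ :=
  ⨆ u : U, ⨅ v : V,
    (1 / 2) * Matrix.trace (σ t x u v * (σ t x u v)ᵀ * X)
      + ⟪p, b t x u v⟫
      + f t x y (rowMul p (σ t x u v)) u v

/-- The upper Hamiltonian `H⁺`. -/
def upperHamiltonian {n d : ℕ} {U V : Type*}
    (b : ℝ → Eucl n → U → V → Eucl n)
    (σ : ℝ → Eucl n → U → V → Matrix (Fin n) (Fin d) ℝ)
    (f : ℝ → Eucl n → ℝ → Eucl d → U → V → ℝ)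
    (t : ℝ) (x : Eucl n) (y : ℝ) (p : Eucl n) (X : Matrix (Fin n) (Fin n) ℝ) : ℝ :=
  ⨅ v : V, ⨆ u : U,
    (1 / 2) * Matrix.trace (σ t x u v * (σ t x u v)ᵀ * X)
      + ⟪p, b t x u v⟫
      + f t x y (rowMul p (σ t x u v)) u v

/-- Membership in the class `Θ` of continuous functions on `[0,T]×ℝⁿ` satisfying the
growth condition `φ(t,x)·exp{−Ã[log((|x|²+1)^{1/2})]²} → 0` as `|x| → ∞`,
uniformly in `t ∈ [0,T]`. -/
def MemTheta {n : ℕ} (T : ℝ) (φ : ℝ → Eucl n → ℝ) : Prop :=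
  ContinuousOn (fun p : ℝ × Eucl n => φ p.1 p.2)
      (Set.Icc (0 : ℝ) T ×ˢ (Set.univ : Set (Eucl n))) ∧
  ∃ A : ℝ, 0 < A ∧ ∀ ε > (0 : ℝ), ∃ R : ℝ, ∀ t ∈ Set.Icc (0 : ℝ) T, ∀ x : Eucl n,
    R ≤ ‖x‖ →
      |φ t x| * Real.exp (-A * (Real.log ((‖x‖ ^ 2 + 1) ^ ((1 : ℝ) / 2))) ^ 2) ≤ ε

/-!
Under the Isaacs condition both functions solve the same equation, so uniqueness is a comparison
principle in `Θ`. Suppose `w - v` exceeds a strict supersolution `θ` of the linearised extremal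
equation inside a cylinder but not on its boundary. Doubling the time and space variables and
maximising `w - θ - v` with a quadratic penalty gives, after regularisation by sup-convolutions and
Jensen's argument (semiconvex functions have second-order expansions at points where a small tilt
is maximal), a pair of opposite superjets; the two viscosity inequalities at these jets contradict
strictness of `θ`.

A solution in `Θ` may grow like `exp (A (log |x|)²)`. The barrier
`l exp ((L (t₁ - t) + G) (1 + log (1 + |x|²)^{1/2})²) + K exp (-m (t - a))` is strict for large `L`
as long as its exponent stays bounded, that is when `L (t₁ - a) ≤ 1`. Letting `m → ∞` and then
`l → 0` proves comparison on such a short interval, and these intervals are chained backwards from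
the terminal time.
-/

section ViscosityComparison

open Set Filter Topology MeasureTheory Metric Pointwise

section SecondOrderExpansion

variable {F : Type*} [NormedAddCommGroup F]

section Differentiability

variable [NormedSpace ℝ F] [FiniteDimensional ℝ F] [MeasurableSpace F] [BorelSpace F]

theorem eventually_exists_add_mem_norm_sub_le {μ : Measure F} [μ.IsAddHaarMeasure] {K : Set F}
    {ζ : F} (hζ : Tendsto (fun r => μ (K ∩ closedBall ζ r) / μ (closedBall ζ r)) (𝓝[>] 0) (𝓝 1))
    {ε : ℝ} (hε : 0 < ε) :
    ∀ᶠ h in 𝓝[≠] (0 : F), ∃ k, ζ + k ∈ K ∧ ‖h - k‖ ≤ ε * ‖h‖ := by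
  obtain ⟨t, -, htfin, htcover⟩ :=
    (isCompact_closedBall (0 : F) 1).finite_cover_balls (half_pos hε)
  have hmeet : ∀ᶠ ρ in 𝓝[>] (0 : ℝ), ∀ c ∈ t, (K ∩ ({ζ} + ρ • ball c (ε / 2))).Nonempty :=
    (eventually_all_finite htfin).2 fun c _ =>
      Measure.eventually_nonempty_inter_smul_of_density_one μ K ζ hζ _ measurableSet_ball
        (measure_ball_pos μ c (half_pos hε)).ne'
  have hnorm : Tendsto (fun h : F => ‖h‖) (𝓝[≠] 0) (𝓝[>] 0) := tendsto_norm_nhdsNE_zero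
  filter_upwards [hnorm.eventually hmeet, self_mem_nhdsWithin] with h hh h0
  have hpos : 0 < ‖h‖ := norm_pos_iff.2 h0
  have hunit : ‖h‖⁻¹ • h ∈ closedBall (0 : F) 1 := by simp [norm_smul, hpos.ne']
  obtain ⟨c, hct, hc⟩ := mem_iUnion₂.1 (htcover hunit)
  obtain ⟨-, hyK, _, rfl, _, ⟨e, he, rfl⟩, rfl⟩ := hh c hct
  refine ⟨‖h‖ • e, hyK, ?_⟩
  calc ‖h - ‖h‖ • e‖ = ‖h‖ * dist (‖h‖⁻¹ • h) e := by
        rw [dist_eq_norm, ← norm_smul_of_nonneg hpos.le, smul_sub, smul_inv_smul₀ hpos.ne']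
    _ ≤ ‖h‖ * ε := by
        gcongr
        rw [mem_ball] at hc he
        linarith [dist_triangle_right (‖h‖⁻¹ • h) e c]
    _ = ε * ‖h‖ := mul_comm _ _

variable {G : Type*} [NormedAddCommGroup G] [NormedSpace ℝ G]

/- Near a density point every increment is approximated, to relative precision `ε`, by one that
stays in `K`; the Lipschitz estimate absorbs the discrepancy. -/
theorem hasFDerivAt_of_density_one {μ : Measure F} [μ.IsAddHaarMeasure] {K : Set F} {ζ : F}
    (hζ : Tendsto (fun r => μ (K ∩ closedBall ζ r) / μ (closedBall ζ r)) (𝓝[>] 0) (𝓝 1))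
    {q : F → G} {Λ : ℝ} (hΛ : 0 ≤ Λ) (hq : ∀ k ∈ K, ∀ y, ‖q y - q k‖ ≤ Λ * ‖y - k‖)
    {A : F →L[ℝ] G} (hA : HasFDerivWithinAt q A K ζ) : HasFDerivAt q A ζ := by
  rw [hasFDerivAt_iff_isLittleO_nhds_zero, Asymptotics.isLittleO_iff]
  intro κ hκ
  obtain ⟨ε, hε, hε1, hεκ⟩ : ∃ ε > 0, ε ≤ 1 ∧ (Λ + ‖A‖) * ε ≤ κ / 2 := by
    refine ⟨min 1 (κ / (2 * (Λ + ‖A‖ + 1))), by positivity, min_le_left _ _, ?_⟩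
    calc (Λ + ‖A‖) * min 1 (κ / (2 * (Λ + ‖A‖ + 1)))
        ≤ (Λ + ‖A‖ + 1) * (κ / (2 * (Λ + ‖A‖ + 1))) :=
          mul_le_mul (by linarith) (min_le_right _ _) (by positivity) (by positivity)
      _ = κ / 2 := by field_simp
  obtain ⟨ρ, hρ, hlin⟩ := Metric.mem_nhdsWithin_iff.1
    (hA.isLittleO.def (show 0 < κ / 4 by positivity))
  have hsmall : ∀ᶠ h in 𝓝[≠] (0 : F), h ∈ ball 0 (ρ / 2) :=
    mem_nhdsWithin_of_mem_nhds (ball_mem_nhds 0 (half_pos hρ))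
  have hpunctured : ∀ᶠ h in 𝓝[≠] (0 : F), ‖q (ζ + h) - q ζ - A h‖ ≤ κ * ‖h‖ := by
    filter_upwards [eventually_exists_add_mem_norm_sub_le hζ hε, hsmall] with h ⟨k, hkK, hhk⟩ hh
    rw [mem_ball_zero_iff] at hh
    have hk : ‖k‖ ≤ 2 * ‖h‖ := by
      have hkh : ‖h - k‖ ≤ ‖h‖ := hhk.trans (mul_le_of_le_one_left (norm_nonneg _) hε1)
      linarith [norm_le_norm_add_norm_sub h k]
    have hlin_k : ‖q (ζ + k) - q ζ - A k‖ ≤ κ / 4 * ‖k‖ := by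
      simpa using hlin ⟨mem_ball_iff_norm.2 (by rw [add_sub_cancel_left]; linarith), hkK⟩
    have hlip := hq _ hkK (ζ + h)
    rw [add_sub_add_left_eq_sub] at hlip
    calc ‖q (ζ + h) - q ζ - A h‖
        = ‖(q (ζ + h) - q (ζ + k)) + (q (ζ + k) - q ζ - A k) + A (k - h)‖ := by
          rw [map_sub]; abel_nf
      _ ≤ ‖q (ζ + h) - q (ζ + k)‖ + ‖q (ζ + k) - q ζ - A k‖ + ‖A (k - h)‖ := norm_add₃_le
      _ ≤ Λ * ‖h - k‖ + κ / 4 * ‖k‖ + ‖A‖ * ‖h - k‖ := by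
          gcongr
          exact norm_sub_rev h k ▸ A.le_opNorm _
      _ ≤ Λ * (ε * ‖h‖) + κ / 4 * (2 * ‖h‖) + ‖A‖ * (ε * ‖h‖) := by gcongr
      _ = (Λ + ‖A‖) * ε * ‖h‖ + κ / 2 * ‖h‖ := by ring
      _ ≤ κ / 2 * ‖h‖ + κ / 2 * ‖h‖ := by gcongr
      _ = κ * ‖h‖ := by ring
  refine (eventually_nhdsWithin_iff.1 hpunctured).mono fun h hh => ?_
  rcases eq_or_ne h 0 with rfl | h0
  · simp
  · exact hh h0

/- By Rademacher's theorem and Lebesgue density, almost every point of a set of positive measure is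
a density point at which `q` is differentiable along the set. -/
theorem exists_differentiableAt_of_measure_ne_zero [FiniteDimensional ℝ G] {μ : Measure F}
    [μ.IsAddHaarMeasure] {K : Set F} (hK : μ K ≠ 0) {q : F → G} {Λ : ℝ} (hΛ : 0 ≤ Λ)
    (hq : ∀ k ∈ K, ∀ y, ‖q y - q k‖ ≤ Λ * ‖y - k‖) : ∃ ζ ∈ K, DifferentiableAt ℝ q ζ := by
  have hLip : LipschitzOnWith ⟨Λ, hΛ⟩ q K := LipschitzOnWith.of_dist_le_mul fun y _ k hk => by
    rw [dist_eq_norm, dist_eq_norm]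
    exact hq k hk y
  have hdiff : ∀ᵐ ζ ∂μ.restrict K, ζ ∈ K → DifferentiableWithinAt ℝ q K ζ :=
    ae_restrict_of_ae hLip.ae_differentiableWithinAt_of_mem
  obtain ⟨ζ, hζ, hdiff_ζ, hdens_ζ⟩ := Measure.exists_mem_of_measure_ne_zero_of_ae hK
    (hdiff.and (Besicovitch.ae_tendsto_measure_inter_div μ K))
  obtain ⟨A, hA⟩ := hdiff_ζ hζ
  exact ⟨ζ, hζ, (hasFDerivAt_of_density_one hdens_ζ hΛ hq hA).differentiableAt⟩

end Differentiability

theorem exists_differentiableAt_of_ball_subset_image [NormedSpace ℝ F] [FiniteDimensional ℝ F]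
    {K : Set F} {q : F → F} {Λ : ℝ} (hΛ : 0 ≤ Λ)
    (hq : ∀ k ∈ K, ∀ y, ‖q y - q k‖ ≤ Λ * ‖y - k‖) {r : ℝ} (hr : 0 < r)
    (hsurj : ball 0 r ⊆ q '' K) : ∃ ζ ∈ K, DifferentiableAt ℝ q ζ := by
  let _ : MeasurableSpace F := borel F
  have : BorelSpace F := ⟨rfl⟩
  have hLip : LipschitzOnWith ⟨Λ, hΛ⟩ q K := LipschitzOnWith.of_dist_le_mul fun y _ k hk => by
    rw [dist_eq_norm, dist_eq_norm]
    exact hq k hk y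
  refine exists_differentiableAt_of_measure_ne_zero (μ := μH[Module.finrank ℝ F])
    (fun hK => ?_) hΛ hq
  have himage : μH[Module.finrank ℝ F] (q '' K) = 0 := by
    have hle := hLip.hausdorffMeasure_image_le (d := Module.finrank ℝ F) (by positivity)
    rwa [hK, mul_zero, nonpos_iff_eq_zero] at hle
  exact (measure_ball_pos μH[Module.finrank ℝ F] (0 : F) hr).ne' (measure_mono_null hsurj himage)

theorem abs_sub_le_of_forall_abs_sub_le_add_sq {g : ℝ → ℝ} {κ D : ℝ}
    (hg : ∀ s ∈ Icc (0 : ℝ) 1, ∀ s' ∈ Icc (0 : ℝ) 1, s ≤ s' →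
      |g s' - g s| ≤ κ * (s' - s) + D * (s' - s) ^ 2) : |g 1 - g 0| ≤ κ := by
  have hpartition : ∀ m : ℕ, 0 < m → |g 1 - g 0| ≤ κ + D / m := by
    intro m hm
    have hm' : (0 : ℝ) < m := Nat.cast_pos.2 hm
    have hmem : ∀ {k : ℕ}, k ≤ m → (k / m : ℝ) ∈ Icc (0 : ℝ) 1 := fun hk =>
      ⟨by positivity, (div_le_one hm').2 (Nat.cast_le.2 hk)⟩
    have hsum := dist_le_range_sum_of_dist_le (f := fun k : ℕ => g (k / m))
      (d := fun _ => κ / m + D / m ^ 2) m fun {k} hk => by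
        rw [dist_comm, Real.dist_eq]
        have hstep : ((k + 1 : ℕ) / m : ℝ) - k / m = 1 / m := by push_cast; ring
        refine (hg _ (hmem hk.le) _ (hmem hk) (by gcongr; simp)).trans_eq ?_
        rw [hstep]
        ring
    rw [Finset.sum_const, Finset.card_range, nsmul_eq_mul, dist_comm, Real.dist_eq,
      div_self hm'.ne', Nat.cast_zero, zero_div] at hsum
    exact hsum.trans_eq (by field_simp)
  have hlim : Tendsto (fun m : ℕ => κ + D / m) atTop (𝓝 (κ + 0)) :=
    tendsto_const_nhds.add (tendsto_const_div_atTop_nhds_zero_nat D)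
  rw [add_zero] at hlim
  exact ge_of_tendsto hlim ((eventually_gt_atTop 0).mono hpartition)

theorem abs_sub_sub_half_le_of_subslope {j c : ℝ → ℝ} {B a κ : ℝ}
    (hj : ∀ s s', j s + c s * (s' - s) - B * (s' - s) ^ 2 ≤ j s')
    (hc : ∀ s ∈ Icc (0 : ℝ) 1, |c s - a * s| ≤ κ) : |j 1 - j 0 - a / 2| ≤ κ := by
  have hinc : |(j 1 - a * 1 ^ 2 / 2) - (j 0 - a * 0 ^ 2 / 2)| ≤ κ := by
    refine abs_sub_le_of_forall_abs_sub_le_add_sq (g := fun s => j s - a * s ^ 2 / 2)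
      (D := |B| + |a|) fun s hs s' hs' hss => ?_
    have he : 0 ≤ s' - s := sub_nonneg.2 hss
    have hlower := hj s s'
    have hupper := hj s' s
    have hcs := mul_le_mul_of_nonneg_right (abs_le.1 (hc s hs)).1 he
    have hcs' := mul_le_mul_of_nonneg_right (abs_le.1 (hc s' hs')).2 he
    have hB := mul_le_mul_of_nonneg_right (le_abs_self B) (sq_nonneg (s' - s))
    have ha := mul_le_mul_of_nonneg_right (le_abs_self a) (sq_nonneg (s' - s))
    have ha' := mul_le_mul_of_nonneg_right (neg_abs_le a) (sq_nonneg (s' - s))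
    rw [abs_le]
    constructor <;> linarith
  rwa [show j 1 - a * 1 ^ 2 / 2 - (j 0 - a * 0 ^ 2 / 2) = j 1 - j 0 - a / 2 by ring] at hinc

variable [InnerProductSpace ℝ F]

/-- Semiconvexity of `w` with constant `Λ`, with `q` a selection of slopes: at every `y` the
paraboloid of slope `q y` and opening `-Λ` touches `w` from below. -/
def HasSemiconvexSlope (w : F → ℝ) (Λ : ℝ) (q : F → F) : Prop :=
  ∀ y y', w y + ⟪q y, y' - y⟫ - Λ / 2 * ‖y' - y‖ ^ 2 ≤ w y'

/-- `p` is a (global) supergradient of `w` at `ζ`: the affine function of slope `p` touches `w`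
from above at `ζ`. -/
def IsSupergradientAt (w : F → ℝ) (p ζ : F) : Prop :=
  ∀ y, w y ≤ w ζ + ⟪p, y - ζ⟫

/-- Peano's second order expansion of `w` at `ζ`, with gradient `p` and Hessian `X`; `w` need not
be twice differentiable in any other sense. -/
def HasSecondOrderExpansionAt (w : F → ℝ) (p : F) (X : F →L[ℝ] F) (ζ : F) : Prop :=
  (fun h => w (ζ + h) - w ζ - ⟪p, h⟫ - 1 / 2 * ⟪X h, h⟫) =o[𝓝 0] fun h => ‖h‖ ^ 2

theorem HasSecondOrderExpansionAt.eventually_abs_le {w : F → ℝ} {p ζ : F} {X : F →L[ℝ] F}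
    (hw : HasSecondOrderExpansionAt w p X ζ) {κ : ℝ} (hκ : 0 < κ) :
    ∀ᶠ h in 𝓝 0, |w (ζ + h) - w ζ - ⟪p, h⟫ - 1 / 2 * ⟪X h, h⟫| ≤ κ * ‖h‖ ^ 2 := by
  simpa using hw.def hκ

theorem norm_le_mul_of_forall_inner_le {a : F} {Λ r : ℝ} (hΛ : 0 ≤ Λ) (hr : 0 ≤ r)
    (h : ∀ k, ⟪a, k⟫ ≤ Λ / 2 * (‖k‖ ^ 2 + r ^ 2)) : ‖a‖ ≤ Λ * r := by
  have hlarger : ∀ s > r, ‖a‖ ≤ Λ * s := by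
    intro s hs
    have hs0 : 0 < s := hr.trans_lt hs
    rcases eq_or_ne a 0 with rfl | ha
    · simpa using mul_nonneg hΛ hs0.le
    have ha' : 0 < ‖a‖ := norm_pos_iff.2 ha
    have hk := h ((s / ‖a‖) • a)
    rw [inner_smul_right, real_inner_self_eq_norm_sq, norm_smul,
      Real.norm_of_nonneg (by positivity), div_mul_cancel₀ _ ha'.ne'] at hk
    have hsa : s / ‖a‖ * ‖a‖ ^ 2 = s * ‖a‖ := by field_simp
    have hrs : Λ / 2 * (s ^ 2 + r ^ 2) ≤ Λ / 2 * (s ^ 2 + s ^ 2) := by gcongr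
    refine le_of_mul_le_mul_left ?_ hs0
    linarith
  have hlim : Tendsto (fun s => Λ * s) (𝓝[>] r) (𝓝 (Λ * r)) :=
    (tendsto_id.const_mul Λ).mono_left nhdsWithin_le_nhds
  exact ge_of_tendsto hlim (eventually_mem_nhdsWithin.mono hlarger)

namespace HasSemiconvexSlope

variable {w : F → ℝ} {Λ : ℝ} {q : F → F} {p ζ : F}

theorem slope_eq (hq : HasSemiconvexSlope w Λ q) (hΛ : 0 ≤ Λ) (hp : IsSupergradientAt w p ζ) :
    q ζ = p := by
  have h0 : ‖q ζ - p‖ ≤ Λ * 0 := norm_le_mul_of_forall_inner_le hΛ le_rfl fun k => by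
    have hlower := hq ζ (ζ + k)
    have hupper := hp (ζ + k)
    rw [add_sub_cancel_left] at hlower hupper
    rw [inner_sub_left]
    linarith
  rw [mul_zero, norm_le_zero_iff, sub_eq_zero] at h0
  exact h0

theorem norm_slope_sub_le (hq : HasSemiconvexSlope w Λ q) (hΛ : 0 ≤ Λ)
    (hζ : IsSupergradientAt w (q ζ) ζ) (y : F) : ‖q y - q ζ‖ ≤ Λ * ‖y - ζ‖ :=
  norm_le_mul_of_forall_inner_le hΛ (norm_nonneg _) fun k => by
    have hlower := hq y (y + k)
    have hupper := hζ (y + k)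
    have hback := hq ζ y
    rw [add_sub_cancel_left] at hlower
    rw [add_sub_right_comm, inner_add_right] at hupper
    rw [inner_sub_left]
    linarith

theorem hasSecondOrderExpansionAt (hq : HasSemiconvexSlope w Λ q) {X : F →L[ℝ] F}
    (hX : HasFDerivAt q X ζ) : HasSecondOrderExpansionAt w (q ζ) X ζ := by
  refine Asymptotics.IsLittleO.of_bound fun κ hκ => ?_
  obtain ⟨ρ, hρ, hslope⟩ := Metric.eventually_nhds_iff.1
    ((hasFDerivAt_iff_isLittleO_nhds_zero.1 hX).def hκ)
  filter_upwards [ball_mem_nhds (0 : F) hρ] with h hh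
  rw [mem_ball_zero_iff] at hh
  rw [Real.norm_eq_abs, Real.norm_of_nonneg (sq_nonneg ‖h‖)]
  have hray := abs_sub_sub_half_le_of_subslope (j := fun s => w (ζ + s • h) - ⟪q ζ, s • h⟫)
    (c := fun s => ⟪q (ζ + s • h) - q ζ, h⟫) (B := Λ / 2 * ‖h‖ ^ 2) (a := ⟪X h, h⟫)
    (κ := κ * ‖h‖ ^ 2) (fun s s' => ?_) fun s hs => ?_
  · simp only [one_smul, zero_smul, add_zero, inner_zero_right, sub_zero] at hray
    convert hray using 2
    ring
  · have hsub := hq (ζ + s • h) (ζ + s' • h)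
    rw [add_sub_add_left_eq_sub, ← sub_smul, inner_smul_right, norm_smul, mul_pow,
      Real.norm_eq_abs, sq_abs] at hsub
    simp only [inner_smul_right, inner_sub_left]
    linarith
  · have hsh : ‖s • h‖ ≤ ‖h‖ := by
      rw [norm_smul, Real.norm_of_nonneg hs.1]
      exact mul_le_of_le_one_left (norm_nonneg _) hs.2
    have hq_s : ‖q (ζ + s • h) - q ζ - X (s • h)‖ ≤ κ * ‖s • h‖ :=
      hslope (by rw [dist_zero_right]; exact hsh.trans_lt hh)
    calc |⟪q (ζ + s • h) - q ζ, h⟫ - ⟪X h, h⟫ * s|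
        = |⟪q (ζ + s • h) - q ζ - X (s • h), h⟫| := by
          rw [inner_sub_left _ (X _), map_smul, real_inner_smul_left, mul_comm s]
      _ ≤ ‖q (ζ + s • h) - q ζ - X (s • h)‖ * ‖h‖ := abs_real_inner_le_norm _ _
      _ ≤ κ * ‖h‖ * ‖h‖ := by gcongr; exact hq_s.trans (by gcongr)
      _ = κ * ‖h‖ ^ 2 := by ring

/-- **Jensen's lemma**, in the form needed for the theorem on sums. -/
theorem exists_hasSecondOrderExpansionAt [FiniteDimensional ℝ F] (hq : HasSemiconvexSlope w Λ q)
    (hΛ : 0 ≤ Λ) {r : ℝ} (hr : 0 < r) (hmax : ∀ p : F, ‖p‖ < r → ∃ ζ, IsSupergradientAt w p ζ) :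
    ∃ (ζ p : F) (X : F →L[ℝ] F), ‖p‖ < r ∧ IsSupergradientAt w p ζ ∧
      HasSecondOrderExpansionAt w p X ζ := by
  set K : Set F := {ζ | ‖q ζ‖ < r ∧ IsSupergradientAt w (q ζ) ζ}
  have hsurj : ball 0 r ⊆ q '' K := fun p hp => by
    rw [mem_ball_zero_iff] at hp
    obtain ⟨ζ, hζ⟩ := hmax p hp
    obtain rfl := hq.slope_eq hΛ hζ
    exact ⟨ζ, ⟨hp, hζ⟩, rfl⟩
  obtain ⟨ζ, ⟨hζr, hζ⟩, X, hX⟩ := exists_differentiableAt_of_ball_subset_image hΛ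
    (fun k hk y => hq.norm_slope_sub_le hΛ hk.2 y) hr hsurj
  exact ⟨ζ, q ζ, X, hζr, hζ, hq.hasSecondOrderExpansionAt hX⟩

end HasSemiconvexSlope

end SecondOrderExpansion

section QuadraticForms

variable {F : Type*} [NormedAddCommGroup F] [InnerProductSpace ℝ F]

theorem real_inner_self_le_opNorm_mul_sq (A : F →L[ℝ] F) (z : F) : ⟪A z, z⟫ ≤ ‖A‖ * ‖z‖ ^ 2 :=
  calc ⟪A z, z⟫ ≤ ‖A z‖ * ‖z‖ := real_inner_le_norm _ _
    _ ≤ ‖A‖ * ‖z‖ * ‖z‖ := by gcongr; exact A.le_opNorm z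
    _ = ‖A‖ * ‖z‖ ^ 2 := by ring

theorem inner_map_add_self_of_isSymmetric {A : F →L[ℝ] F} (hA : (A : F →ₗ[ℝ] F).IsSymmetric)
    (x y : F) : ⟪A (x + y), x + y⟫ = ⟪A x, x⟫ + 2 * ⟪A x, y⟫ + ⟪A y, y⟫ := by
  have hsymm : ⟪A y, x⟫ = ⟪A x, y⟫ := (hA y x).trans (real_inner_comm _ _)
  rw [map_add, inner_add_left, inner_add_right, inner_add_right, hsymm]
  ring

theorem hasSemiconvexSlope_neg_inner_map_self {A : F →L[ℝ] F}
    (hA : (A : F →ₗ[ℝ] F).IsSymmetric) :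
    HasSemiconvexSlope (fun z => -(1 / 2 * ⟪A z, z⟫)) ‖A‖ fun z => -A z := by
  intro y y'
  have hexp := inner_map_add_self_of_isSymmetric hA y (y' - y)
  rw [add_sub_cancel] at hexp
  have hquad := real_inner_self_le_opNorm_mul_sq A (y' - y)
  rw [inner_neg_left]
  linarith

theorem HasSemiconvexSlope.add {w w' : F → ℝ} {Λ Λ' : ℝ} {q q' : F → F}
    (hw : HasSemiconvexSlope w Λ q) (hw' : HasSemiconvexSlope w' Λ' q') :
    HasSemiconvexSlope (fun z => w z + w' z) (Λ + Λ') fun z => q z + q' z := by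
  intro y y'
  have h := hw y y'
  have h' := hw' y y'
  rw [inner_add_left]
  linarith

theorem HasSecondOrderExpansionAt.of_sub_quadratic {w : F → ℝ} {A X : F →L[ℝ] F} {p ζ : F}
    (hA : (A : F →ₗ[ℝ] F).IsSymmetric)
    (hw : HasSecondOrderExpansionAt (fun z => w z + -(1 / 2 * ⟪A z, z⟫)) p X ζ) :
    HasSecondOrderExpansionAt w (p + A ζ) (X + A) ζ := by
  refine hw.congr_left fun h => ?_
  beta_reduce
  rw [inner_map_add_self_of_isSymmetric hA, add_apply, inner_add_left, inner_add_left]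
  ring

theorem nonpos_of_eventually_le_mul_norm_sq {Q : F → ℝ} (hQ : ∀ (s : ℝ) g, Q (s • g) = s ^ 2 * Q g)
    (h : ∀ κ > 0, ∀ᶠ g in 𝓝 0, Q g ≤ κ * ‖g‖ ^ 2) (g : F) : Q g ≤ 0 := by
  have hscale : Tendsto (fun s : ℝ => s • g) (𝓝[>] 0) (𝓝 0) := by
    have hcont : Continuous fun s : ℝ => s • g := by fun_prop
    exact (hcont.tendsto' 0 0 (zero_smul ℝ g)).mono_left nhdsWithin_le_nhds
  have hsmall : ∀ κ > 0, Q g ≤ κ * ‖g‖ ^ 2 := fun κ hκ => by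
    obtain ⟨s, hs, hs0⟩ := ((hscale.eventually (h κ hκ)).and self_mem_nhdsWithin).exists
    rw [hQ, norm_smul, mul_pow, Real.norm_eq_abs, sq_abs, mul_left_comm] at hs
    exact le_of_mul_le_mul_left hs (pow_pos hs0 2)
  have hlim : Tendsto (fun κ : ℝ => κ * ‖g‖ ^ 2) (𝓝[>] 0) (𝓝 0) :=
    tendsto_nhdsWithin_of_tendsto_nhds ((continuous_mul_const _).tendsto' 0 0 (zero_mul _))
  exact ge_of_tendsto hlim (eventually_mem_nhdsWithin.mono hsmall)

end QuadraticForms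

section SupConvolution

variable {F : Type*} [NormedAddCommGroup F] {S : Set F} {u : F → ℝ} {c : ℝ}

/-- The sup-convolution of `u` over `S` with a paraboloid of opening `c`. On a compact set `S` the
supremum is attained, so the junk value of an unbounded supremum does not occur. -/
def supConvolution (c : ℝ) (S : Set F) (u : F → ℝ) (z : F) : ℝ :=
  ⨆ y : S, (u y - c * ‖(y : F) - z‖ ^ 2)

theorem le_supConvolution (hS : IsCompact S) (hu : ContinuousOn u S) {y : F} (hy : y ∈ S) (z : F) :
    u y - c * ‖y - z‖ ^ 2 ≤ supConvolution c S u z := by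
  have hbdd := hS.bddAbove_image (f := fun y => u y - c * ‖y - z‖ ^ 2) (hu.sub (by fun_prop))
  rw [image_eq_range] at hbdd
  exact le_ciSup hbdd ⟨y, hy⟩

theorem self_le_supConvolution (hS : IsCompact S) (hu : ContinuousOn u S) {y : F} (hy : y ∈ S) :
    u y ≤ supConvolution c S u y := by
  simpa using le_supConvolution hS hu (c := c) hy y

theorem exists_supConvolution_eq (hS : IsCompact S) (hne : S.Nonempty) (hu : ContinuousOn u S)
    (c : ℝ) (z : F) : ∃ y ∈ S, supConvolution c S u z = u y - c * ‖y - z‖ ^ 2 := by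
  obtain ⟨y, hy, hmax⟩ := hS.exists_isMaxOn hne
    (f := fun y => u y - c * ‖y - z‖ ^ 2) (hu.sub (by fun_prop))
  have := hne.to_subtype
  exact ⟨y, hy, le_antisymm (ciSup_le fun y' => hmax y'.2) (le_supConvolution hS hu hy z)⟩

theorem continuous_supConvolution (hS : IsCompact S) (hu : ContinuousOn u S) :
    Continuous (supConvolution c S u) := by
  have := isCompact_iff_compactSpace.1 hS
  have hcont := isCompact_univ.continuous_sSup
    (f := fun (z : F) (y : S) => u y - c * ‖(y : F) - z‖ ^ 2)
    ((hu.domRestrict.comp continuous_snd).sub (by fun_prop))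
  simp only [image_univ] at hcont
  exact hcont

theorem supConvolution_le_of_norm_le (hS : IsCompact S) (hne : S.Nonempty) (hu : ContinuousOn u S)
    (hc : 0 ≤ c) {M R : ℝ} (hM : ∀ y ∈ S, u y ≤ M) (hR : ∀ y ∈ S, ‖y‖ ≤ R) (z : F) :
    supConvolution c S u z ≤ M + c * R ^ 2 - c / 2 * ‖z‖ ^ 2 := by
  obtain ⟨y, hy, hyz⟩ := exists_supConvolution_eq hS hne hu c z
  have htri : ‖z‖ ≤ R + ‖y - z‖ := by
    linarith [hR y hy, norm_sub_norm_le z y, norm_sub_rev z y]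
  have hsq : ‖z‖ ^ 2 ≤ 2 * R ^ 2 + 2 * ‖y - z‖ ^ 2 := by
    nlinarith [norm_nonneg z, sq_nonneg (R - ‖y - z‖)]
  linarith [hM y hy, mul_le_mul_of_nonneg_left hsq hc]

theorem supConvolution_add {F' : Type*} [NormedAddCommGroup F'] {S' : Set F'} {v : F' → ℝ}
    (hS : IsCompact S) (hne : S.Nonempty) (hu : ContinuousOn u S)
    (hS' : IsCompact S') (hne' : S'.Nonempty) (hv : ContinuousOn v S') (z : WithLp 2 (F × F')) :
    supConvolution c {z | z.fst ∈ S ∧ z.snd ∈ S'} (fun z => u z.fst + v z.snd) z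
      = supConvolution c S u z.fst + supConvolution c S' v z.snd := by
  have hsplit : ∀ y : WithLp 2 (F × F'), u y.fst + v y.snd - c * ‖y - z‖ ^ 2
      = (u y.fst - c * ‖y.fst - z.fst‖ ^ 2) + (v y.snd - c * ‖y.snd - z.snd‖ ^ 2) := fun y => by
    rw [WithLp.prod_norm_sq_eq_of_L2, WithLp.sub_fst, WithLp.sub_snd]
    ring
  obtain ⟨y, hy, hyz⟩ := exists_supConvolution_eq hS hne hu c z.fst
  obtain ⟨y', hy', hyz'⟩ := exists_supConvolution_eq hS' hne' hv c z.snd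
  have : Nonempty {z : WithLp 2 (F × F') | z.fst ∈ S ∧ z.snd ∈ S'} :=
    ⟨⟨WithLp.toLp 2 (y, y'), hy, hy'⟩⟩
  rw [hyz, hyz']
  refine IsLUB.ciSup_eq (IsGreatest.isLUB ⟨⟨⟨WithLp.toLp 2 (y, y'), hy, hy'⟩, hsplit _⟩, ?_⟩)
  rw [← hyz, ← hyz']
  rintro _ ⟨⟨x, hx, hx'⟩, rfl⟩
  exact (hsplit x).trans_le
    (add_le_add (le_supConvolution hS hu hx _) (le_supConvolution hS' hv hx' _))

variable [InnerProductSpace ℝ F]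

/-- `u` admits, relative to `S` at `y`, a second order upper expansion with gradient `p` and
Hessian `X`: the pair `(p, X)` belongs to the superjet `J^{2,+}_S u(y)`. -/
def HasSuperjetOn (u : F → ℝ) (S : Set F) (y p : F) (X : F →L[ℝ] F) : Prop :=
  ∀ κ > 0, ∀ᶠ h in 𝓝 (0 : F), y + h ∈ S →
    u (y + h) ≤ u y + ⟪p, h⟫ + 1 / 2 * ⟪X h, h⟫ + κ * ‖h‖ ^ 2

theorem hasSemiconvexSlope_supConvolution (hS : IsCompact S) (hu : ContinuousOn u S) {m : F → F}
    (hmem : ∀ z, m z ∈ S) (hm : ∀ z, supConvolution c S u z = u (m z) - c * ‖m z - z‖ ^ 2) :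
    HasSemiconvexSlope (supConvolution c S u) (2 * c) fun z => (2 * c) • (m z - z) := by
  intro z z'
  have hle := le_supConvolution hS hu (c := c) (hmem z) z'
  rw [← sub_sub_sub_cancel_right (m z) z' z, norm_sub_sq_real] at hle
  rw [hm, real_inner_smul_left]
  linarith

/- The point `y` at which the supremum defining the sup-convolution at `ζ` is attained inherits
the jet of the sup-convolution at `ζ`, because both may be translated simultaneously. -/
theorem HasSecondOrderExpansionAt.hasSuperjetOn_of_supConvolution (hS : IsCompact S)
    (hu : ContinuousOn u S) {y ζ p : F} {X : F →L[ℝ] F}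
    (hX : HasSecondOrderExpansionAt (supConvolution c S u) p X ζ)
    (hy : supConvolution c S u ζ = u y - c * ‖y - ζ‖ ^ 2) : HasSuperjetOn u S y p X := by
  intro κ hκ
  filter_upwards [hX.eventually_abs_le hκ] with h hh hmem
  have hle := le_supConvolution hS hu (c := c) hmem (ζ + h)
  rw [add_sub_add_right_eq_sub] at hle
  linarith [(abs_le.1 hh).2]

variable {A : F →L[ℝ] F}

theorem exists_isSupergradientAt_supConvolution [FiniteDimensional ℝ F] (hS : IsCompact S)
    (hne : S.Nonempty) (hu : ContinuousOn u S) (hA : A.IsPositive) (hc : 0 < c) (p : F) :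
    ∃ ζ, IsSupergradientAt (fun z => supConvolution c S u z + -(1 / 2 * ⟪A z, z⟫)) p ζ := by
  obtain ⟨M, hM⟩ := hS.bddAbove_image hu
  obtain ⟨R, hR⟩ := hS.isBounded.exists_norm_le
  set φ : F → ℝ := fun z => supConvolution c S u z + -(1 / 2 * ⟪A z, z⟫) - ⟪p, z⟫ with hφ_def
  have hφ : Continuous φ :=
    ((continuous_supConvolution hS hu).add (by fun_prop)).sub (by fun_prop)
  have hbound : ∀ z, φ z ≤ M + c * R ^ 2 + ‖z‖ * (‖p‖ + -(c / 2) * ‖z‖) := fun z => by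
    have hsup := supConvolution_le_of_norm_le hS hne hu hc.le (forall_mem_image.1 hM) hR z
    have hinner := (neg_le_abs ⟪p, z⟫).trans (abs_real_inner_le_norm p z)
    have hAz := hA.inner_nonneg_left z
    simp only [hφ_def]
    linarith
  have hlim : Tendsto (fun r => M + c * R ^ 2 + r * (‖p‖ + -(c / 2) * r)) atTop atBot :=
    tendsto_atBot_add_const_left _ _ <| tendsto_id.atTop_mul_atBot₀ <|
      tendsto_atBot_add_const_left _ _ (tendsto_id.const_mul_atTop_of_neg (by linarith))
  have hcoercive : Tendsto φ (cocompact F) atBot :=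
    tendsto_atBot_mono hbound (hlim.comp tendsto_norm_cocompact_atTop)
  obtain ⟨ζ, hζ⟩ := hφ.exists_forall_ge' 0 (hcoercive.eventually_le_atBot _)
  refine ⟨ζ, fun z => ?_⟩
  have hmax := hζ z
  simp only [hφ_def] at hmax
  rw [inner_sub_right]
  linarith

/- Comparing `ζ` with `y` itself bounds the gap `c * ‖y - ζ‖ ^ 2` by a linear function of
`‖y - ζ‖`. -/
theorem IsSupergradientAt.opening_mul_norm_sub_le {y ζ p : F}
    (hζ : IsSupergradientAt (fun z => supConvolution c S u z + -(1 / 2 * ⟪A z, z⟫)) p ζ)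
    (hS : IsCompact S) (hu : ContinuousOn u S) (hA : A.IsPositive) (hyS : y ∈ S)
    (hy : supConvolution c S u ζ = u y - c * ‖y - ζ‖ ^ 2) :
    c * ‖y - ζ‖ ≤ ‖A‖ * ‖y‖ + ‖p‖ := by
  rcases (norm_nonneg (y - ζ)).eq_or_lt with h0 | hpos
  · rw [← h0, mul_zero]
    positivity
  refine le_of_mul_le_mul_right ?_ hpos
  have hcontact : _ ≤ _ := hζ y
  have hself := self_le_supConvolution hS hu (c := c) hyS
  have hexp := inner_map_add_self_of_isSymmetric hA.isSymmetric y (ζ - y)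
  rw [add_sub_cancel, ← neg_sub y ζ, inner_neg_right] at hexp
  have hquad := hA.inner_nonneg_left (-(y - ζ))
  have hp := real_inner_le_norm p (y - ζ)
  have hAy : ⟪A y, y - ζ⟫ ≤ ‖A‖ * ‖y‖ * ‖y - ζ‖ :=
    (real_inner_le_norm _ _).trans (by gcongr; exact A.le_opNorm y)
  beta_reduce at hcontact
  linarith

theorem IsSupergradientAt.sub_quadratic_le_of_supConvolution {y ζ p : F} {R ρ : ℝ}
    (hζ : IsSupergradientAt (fun z => supConvolution c S u z + -(1 / 2 * ⟪A z, z⟫)) p ζ)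
    (hS : IsCompact S) (hu : ContinuousOn u S) (hA : A.IsPositive) (hc : 0 ≤ c)
    (hR : ∀ z ∈ S, ‖z‖ ≤ R) (hyS : y ∈ S)
    (hy : supConvolution c S u ζ = u y - c * ‖y - ζ‖ ^ 2) (hp : ‖p‖ ≤ ρ) (hyζ : ‖y - ζ‖ ≤ ρ)
    {z : F} (hz : z ∈ S) :
    u z - 1 / 2 * ⟪A z, z⟫ ≤ u y - 1 / 2 * ⟪A y, y⟫ + ρ * (‖A‖ * R + (2 * R + ρ)) := by
  have hρ : 0 ≤ ρ := (norm_nonneg p).trans hp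
  have hcontact : _ ≤ _ := hζ z
  have hself := self_le_supConvolution hS hu (c := c) hz
  have hexp := inner_map_add_self_of_isSymmetric hA.isSymmetric y (ζ - y)
  rw [add_sub_cancel, ← neg_sub y ζ, inner_neg_right] at hexp
  have hquad := hA.inner_nonneg_left (-(y - ζ))
  have hpz : ⟪p, z - ζ⟫ ≤ ρ * (2 * R + ρ) := by
    have htri : ‖z - ζ‖ ≤ 2 * R + ρ := by
      linarith [norm_sub_le_norm_sub_add_norm_sub z y ζ, norm_sub_le z y, hR z hz, hR y hyS]
    exact (real_inner_le_norm _ _).trans (by gcongr)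
  have hAy : ⟪A y, y - ζ⟫ ≤ ‖A‖ * R * ρ := by
    refine (real_inner_le_norm _ _).trans (mul_le_mul ?_ hyζ (norm_nonneg _) ?_)
    · exact (A.le_opNorm y).trans (by gcongr; exact hR y hyS)
    · exact mul_nonneg (norm_nonneg A) ((norm_nonneg y).trans (hR y hyS))
  have hgap : 0 ≤ c * ‖y - ζ‖ ^ 2 := by positivity
  beta_reduce at hcontact
  linarith

theorem exists_supConvolution_contact [FiniteDimensional ℝ F] (hS : IsCompact S)
    (hne : S.Nonempty) (hu : ContinuousOn u S) (hA : A.IsPositive) {η : ℝ} (hη : 0 < η) :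
    ∃ (c : ℝ) (y ζ p : F) (X : F →L[ℝ] F), y ∈ S ∧
      supConvolution c S u ζ = u y - c * ‖y - ζ‖ ^ 2 ∧
      (∀ z ∈ S, u z - 1 / 2 * ⟪A z, z⟫ ≤ u y - 1 / 2 * ⟪A y, y⟫ + η) ∧
      ‖p - A y‖ ≤ η ∧ HasSecondOrderExpansionAt (supConvolution c S u) p X ζ ∧
      ∀ h, supConvolution c S u (ζ + h)
        ≤ supConvolution c S u ζ + ⟪p, h⟫ + 1 / 2 * ⟪A h, h⟫ := by
  obtain ⟨R, hR0, hR⟩ := hS.isBounded.exists_pos_norm_le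
  set N := ‖A‖ * R + (2 * R + 1) + (1 + ‖A‖)
  have hN : 0 < N := by positivity
  set ρ := min 1 (η / N)
  have hρ0 : 0 < ρ := lt_min one_pos (div_pos hη hN)
  have hρ1 : ρ ≤ 1 := min_le_left _ _
  have hρN : ρ * N ≤ η := (le_div_iff₀ hN).1 (min_le_right _ _)
  set c := (‖A‖ * R + 1) / ρ with hc_def
  have hc : 0 < c := by positivity
  choose m hmem hm using exists_supConvolution_eq hS hne hu c
  obtain ⟨ζ, p, X, hp, hζ, hX⟩ := ((hasSemiconvexSlope_supConvolution hS hu hmem hm).add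
    (hasSemiconvexSlope_neg_inner_map_self hA.isSymmetric)).exists_hasSecondOrderExpansionAt
    (by positivity) hρ0 fun p _ => exists_isSupergradientAt_supConvolution hS hne hu hA hc p
  have hgap : ‖m ζ - ζ‖ ≤ ρ := by
    have hgap := hζ.opening_mul_norm_sub_le hS hu hA (hmem ζ) (hm ζ)
    rw [hc_def, div_mul_eq_mul_div, div_le_iff₀ hρ0, mul_comm] at hgap
    refine le_of_mul_le_mul_right (hgap.trans ?_) (show 0 < ‖A‖ * R + 1 by positivity)
    rw [mul_comm]
    gcongr
    exacts [hR _ (hmem ζ), hp.le.trans hρ1]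
  refine ⟨c, m ζ, ζ, p + A ζ, X + A, hmem ζ, hm ζ, fun z hz => ?_, ?_,
    hX.of_sub_quadratic hA.isSymmetric, fun h => ?_⟩
  · refine (hζ.sub_quadratic_le_of_supConvolution hS hu hA hc.le hR (hmem ζ) (hm ζ) hp.le hgap
      hz).trans (add_le_add_right (le_trans ?_ hρN) _)
    gcongr
    linarith [norm_nonneg A]
  · calc ‖p + A ζ - A (m ζ)‖ = ‖p - A (m ζ - ζ)‖ := by rw [map_sub]; abel_nf
      _ ≤ ‖p‖ + ‖A (m ζ - ζ)‖ := norm_sub_le _ _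
      _ ≤ ρ + ‖A‖ * ρ := add_le_add hp.le ((A.le_opNorm _).trans (by gcongr))
      _ ≤ ρ * N := by
        rw [show ρ + ‖A‖ * ρ = ρ * (1 + ‖A‖) by ring]
        gcongr
        exact le_add_of_nonneg_left (by positivity)
      _ ≤ η := hρN
  · have hcontact : _ ≤ _ := hζ (ζ + h)
    beta_reduce at hcontact
    rw [add_sub_cancel_left, inner_map_add_self_of_isSymmetric hA.isSymmetric] at hcontact
    rw [inner_add_left]
    linarith

end SupConvolution

section Doubling

/- The increments of a function `f z.fst + g z.snd` add up along the two axes, so the mixed second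
order terms are invisible and only the diagonal blocks of its Hessian are constrained. -/
theorem HasSecondOrderExpansionAt.inner_diagonal_le {E E' : Type*} [NormedAddCommGroup E]
    [InnerProductSpace ℝ E] [NormedAddCommGroup E'] [InnerProductSpace ℝ E']
    {u : E → ℝ} {v : E' → ℝ} {w : WithLp 2 (E × E') → ℝ} {p ζ : WithLp 2 (E × E')}
    {B : WithLp 2 (E × E') →L[ℝ] WithLp 2 (E × E')} (hB : HasSecondOrderExpansionAt w p B ζ)
    (hsum : ∀ z, w z = u z.fst + v z.snd) {A : WithLp 2 (E × E') →L[ℝ] WithLp 2 (E × E')}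
    (hA : ∀ h, w (ζ + h) ≤ w ζ + ⟪p, h⟫ + 1 / 2 * ⟪A h, h⟫) (h : E) (h' : E') :
    ⟪B (WithLp.toLp 2 (h, 0)), WithLp.toLp 2 (h, 0)⟫
      + ⟪B (WithLp.toLp 2 (0, h')), WithLp.toLp 2 (0, h')⟫
      ≤ ⟪A (WithLp.toLp 2 (h, h')), WithLp.toLp 2 (h, h')⟫ := by
  have hι : Continuous fun g : WithLp 2 (E × E') => WithLp.toLp 2 (g.fst, (0 : E')) :=
    (WithLp.prod_continuous_toLp 2 E E').comp
      ((WithLp.continuous_fst 2 E E').prodMk continuous_const)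
  have hι' : Continuous fun g : WithLp 2 (E × E') => WithLp.toLp 2 ((0 : E), g.snd) :=
    (WithLp.prod_continuous_toLp 2 E E').comp
      (continuous_const.prodMk (WithLp.continuous_snd 2 E E'))
  have hnonpos := nonpos_of_eventually_le_mul_norm_sq
    (Q := fun g : WithLp 2 (E × E') =>
      ⟪B (WithLp.toLp 2 (g.fst, 0)), WithLp.toLp 2 (g.fst, 0)⟫
      + ⟪B (WithLp.toLp 2 (0, g.snd)), WithLp.toLp 2 (0, g.snd)⟫ - ⟪A g, g⟫) ?_ ?_
    (WithLp.toLp 2 (h, h'))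
  · exact sub_nonpos.1 hnonpos
  · intro s g
    have hfst : WithLp.toLp 2 ((s • g).fst, (0 : E')) = s • WithLp.toLp 2 (g.fst, (0 : E')) := by
      rw [WithLp.smul_fst, ← WithLp.toLp_smul, Prod.smul_mk, smul_zero]
    have hsnd : WithLp.toLp 2 ((0 : E), (s • g).snd) = s • WithLp.toLp 2 ((0 : E), g.snd) := by
      rw [WithLp.smul_snd, ← WithLp.toLp_smul, Prod.smul_mk, smul_zero]
    simp only [hfst, hsnd, map_smul, real_inner_smul_left, real_inner_smul_right]
    ring
  · intro κ hκ
    filter_upwards [(hι.tendsto' 0 0 rfl).eventually (hB.eventually_abs_le (half_pos hκ)),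
      (hι'.tendsto' 0 0 rfl).eventually (hB.eventually_abs_le (half_pos hκ))] with g hg hg'
    have hcontact := hA g
    have hinner : ⟪p, g⟫
        = ⟪p, WithLp.toLp 2 (g.fst, (0 : E'))⟫ + ⟪p, WithLp.toLp 2 ((0 : E), g.snd)⟫ := by
      simp [WithLp.prod_inner_apply]
    rw [WithLp.norm_toLp_fst] at hg
    rw [WithLp.norm_toLp_snd] at hg'
    simp only [hsum, WithLp.add_fst, WithLp.add_snd, WithLp.toLp_fst, WithLp.toLp_snd, add_zero]
      at hg hg' hcontact
    rw [WithLp.prod_norm_sq_eq_of_L2]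
    linarith [(abs_le.1 hg).1, (abs_le.1 hg').1]

variable {E E' : Type*} [NormedAddCommGroup E] [InnerProductSpace ℝ E] [CompleteSpace E]
  [NormedAddCommGroup E'] [InnerProductSpace ℝ E'] [CompleteSpace E']

theorem adjoint_fstL_apply (h : E) :
    ContinuousLinearMap.adjoint (WithLp.fstL 2 ℝ E E') h = WithLp.toLp 2 (h, 0) :=
  ext_inner_right ℝ fun z => by
    rw [ContinuousLinearMap.adjoint_inner_left, WithLp.prod_inner_apply]
    simp

theorem adjoint_sndL_apply (h : E') :
    ContinuousLinearMap.adjoint (WithLp.sndL 2 ℝ E E') h = WithLp.toLp 2 (0, h) :=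
  ext_inner_right ℝ fun z => by
    rw [ContinuousLinearMap.adjoint_inner_left, WithLp.prod_inner_apply]
    simp

/-- The quadratic form `⟨A (x - x'), x - x'⟩` on the product, as an operator. -/
def doublingOp (A : E →L[ℝ] E) : WithLp 2 (E × E) →L[ℝ] WithLp 2 (E × E) :=
  ContinuousLinearMap.adjoint (WithLp.fstL 2 ℝ E E - WithLp.sndL 2 ℝ E E) ∘L A ∘L
    (WithLp.fstL 2 ℝ E E - WithLp.sndL 2 ℝ E E)

theorem inner_doublingOp_apply (A : E →L[ℝ] E) (z : WithLp 2 (E × E)) :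
    ⟪doublingOp A z, z⟫ = ⟪A (z.fst - z.snd), z.fst - z.snd⟫ := by
  rw [doublingOp, ContinuousLinearMap.comp_apply, ContinuousLinearMap.comp_apply,
    ContinuousLinearMap.adjoint_inner_left]
  rfl

theorem doublingOp_apply (A : E →L[ℝ] E) (z : WithLp 2 (E × E)) :
    doublingOp A z = WithLp.toLp 2 (A (z.fst - z.snd), -A (z.fst - z.snd)) := by
  rw [doublingOp, map_sub, ContinuousLinearMap.comp_apply, sub_apply, adjoint_fstL_apply,
    adjoint_sndL_apply, ← WithLp.toLp_sub, Prod.mk_sub_mk, sub_zero, zero_sub]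
  rfl

variable {S : Set E} {u : E → ℝ} {S' : Set E'} {v : E' → ℝ} {y p : WithLp 2 (E × E')}
  {B : WithLp 2 (E × E') →L[ℝ] WithLp 2 (E × E')}

theorem HasSuperjetOn.fst
    (hB : HasSuperjetOn (fun z => u z.fst + v z.snd) {z | z.fst ∈ S ∧ z.snd ∈ S'} y p B)
    (hy : y.snd ∈ S') :
    HasSuperjetOn u S y.fst p.fst
      (WithLp.fstL 2 ℝ E E' ∘L B ∘L ContinuousLinearMap.adjoint (WithLp.fstL 2 ℝ E E')) := by
  set ι := ContinuousLinearMap.adjoint (WithLp.fstL 2 ℝ E E')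
  intro κ hκ
  filter_upwards [(ι.continuous.tendsto' 0 0 (map_zero ι)).eventually (hB κ hκ)] with h hh hmem
  have hp : ⟪p, ι h⟫ = ⟪p.fst, h⟫ := ContinuousLinearMap.adjoint_inner_right _ _ _
  have hBh : ⟪B (ι h), ι h⟫ = ⟪(B (ι h)).fst, h⟫ := ContinuousLinearMap.adjoint_inner_right _ _ _
  have hι : ι h = WithLp.toLp 2 (h, 0) := adjoint_fstL_apply h
  rw [hp, hBh, hι] at hh
  simp only [WithLp.add_fst, WithLp.add_snd, WithLp.toLp_fst, WithLp.toLp_snd, add_zero,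
    WithLp.norm_toLp_fst] at hh
  have hjet := hh ⟨hmem, hy⟩
  rw [ContinuousLinearMap.comp_apply, ContinuousLinearMap.comp_apply, WithLp.fstL_apply, hι]
  linarith

theorem HasSuperjetOn.snd
    (hB : HasSuperjetOn (fun z => u z.fst + v z.snd) {z | z.fst ∈ S ∧ z.snd ∈ S'} y p B)
    (hy : y.fst ∈ S) :
    HasSuperjetOn v S' y.snd p.snd
      (WithLp.sndL 2 ℝ E E' ∘L B ∘L ContinuousLinearMap.adjoint (WithLp.sndL 2 ℝ E E')) := by
  set ι := ContinuousLinearMap.adjoint (WithLp.sndL 2 ℝ E E')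
  intro κ hκ
  filter_upwards [(ι.continuous.tendsto' 0 0 (map_zero ι)).eventually (hB κ hκ)] with h hh hmem
  have hp : ⟪p, ι h⟫ = ⟪p.snd, h⟫ := ContinuousLinearMap.adjoint_inner_right _ _ _
  have hBh : ⟪B (ι h), ι h⟫ = ⟪(B (ι h)).snd, h⟫ := ContinuousLinearMap.adjoint_inner_right _ _ _
  have hι : ι h = WithLp.toLp 2 (0, h) := adjoint_sndL_apply h
  rw [hp, hBh, hι] at hh
  simp only [WithLp.add_fst, WithLp.add_snd, WithLp.toLp_fst, WithLp.toLp_snd, add_zero,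
    WithLp.norm_toLp_snd] at hh
  have hjet := hh ⟨hy, hmem⟩
  rw [ContinuousLinearMap.comp_apply, ContinuousLinearMap.comp_apply, WithLp.sndL_apply, hι]
  linarith

/- **The theorem on sums** (Crandall--Ishii), with the doubled penalty `⟨A (x - x'), x - x'⟩`. -/
theorem exists_superjets_of_doubling {E : Type*} [NormedAddCommGroup E] [InnerProductSpace ℝ E]
    [FiniteDimensional ℝ E] {S : Set E} (hS : IsCompact S) (hne : S.Nonempty) {u v : E → ℝ}
    (hu : ContinuousOn u S) (hv : ContinuousOn v S) {A : E →L[ℝ] E} (hA : A.IsPositive)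
    {η : ℝ} (hη : 0 < η) :
    ∃ y ∈ S, ∃ y' ∈ S, ∃ (p p' : E) (X Y : E →L[ℝ] E),
      (∀ z ∈ S, ∀ z' ∈ S, u z + v z' - 1 / 2 * ⟪A (z - z'), z - z'⟫
        ≤ u y + v y' - 1 / 2 * ⟪A (y - y'), y - y'⟫ + η) ∧
      ‖p - A (y - y')‖ ≤ η ∧ ‖p' + A (y - y')‖ ≤ η ∧
      HasSuperjetOn u S y p X ∧ HasSuperjetOn v S y' p' Y ∧
      ∀ h h', ⟪X h, h⟫ + ⟪Y h', h'⟫ ≤ ⟪A (h - h'), h - h'⟫ := by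
  have : CompleteSpace E := FiniteDimensional.complete ℝ E
  set K : Set (WithLp 2 (E × E)) := {z | z.fst ∈ S ∧ z.snd ∈ S}
  have hK : IsCompact K := (WithLp.prodContinuousLinearEquiv 2 ℝ E E).toHomeomorph
    |>.isCompact_preimage.2 (hS.prod hS)
  have hKne : K.Nonempty := let ⟨s, hs⟩ := hne; ⟨WithLp.toLp 2 (s, s), hs, hs⟩
  have huv : ContinuousOn (fun z : WithLp 2 (E × E) => u z.fst + v z.snd) K :=
    (hu.comp (WithLp.continuous_fst 2 E E).continuousOn fun _ hz => hz.1).add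
      (hv.comp (WithLp.continuous_snd 2 E E).continuousOn fun _ hz => hz.2)
  have hpos : (doublingOp A).IsPositive := hA.adjoint_conj _
  obtain ⟨c, y, ζ, p, B, ⟨hy, hy'⟩, hyζ, hmax, hp, hB, hcontact⟩ :=
    exists_supConvolution_contact hK hKne huv hpos hη
  have hjet := hB.hasSuperjetOn_of_supConvolution hK huv hyζ
  simp only [inner_doublingOp_apply] at hmax
  rw [doublingOp_apply] at hp
  refine ⟨y.fst, hy, y.snd, hy', p.fst, p.snd, _, _, fun z hz z' hz' =>
    hmax (WithLp.toLp 2 (z, z')) ⟨hz, hz'⟩, ?_, ?_, hjet.fst hy', hjet.snd hy, fun h h' => ?_⟩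
  · exact (WithLp.norm_fst_le _ _).trans hp
  · have hsnd : ‖p.snd - -A (y.fst - y.snd)‖ ≤ η := (WithLp.norm_snd_le _ _).trans hp
    rwa [sub_neg_eq_add] at hsnd
  · have hdiag := hB.inner_diagonal_le
      (supConvolution_add hS hne hu hS hne hv) hcontact h h'
    rw [inner_doublingOp_apply, ← adjoint_fstL_apply, ← adjoint_sndL_apply] at hdiag
    simp only [ContinuousLinearMap.adjoint_inner_right] at hdiag
    exact hdiag

end Doubling

section TestFunctions

variable {n d : ℕ}

/-- The `k`-th column of a matrix, as a Euclidean vector. -/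
def euclColumn (M : Matrix (Fin n) (Fin d) ℝ) (k : Fin d) : Eucl n :=
  WithLp.toLp 2 fun i => M i k

theorem sum_norm_euclColumn_sq (M : Matrix (Fin n) (Fin d) ℝ) :
    ∑ k, ‖euclColumn M k‖ ^ 2 = ‖M‖ ^ 2 := by
  rw [Matrix.frobenius_norm_def, ← Real.sqrt_eq_rpow, Real.sq_sqrt (by positivity),
    Finset.sum_comm]
  simp [EuclideanSpace.norm_sq_eq, euclColumn]

theorem euclColumn_sub (M N : Matrix (Fin n) (Fin d) ℝ) (k : Fin d) :
    euclColumn (M - N) k = euclColumn M k - euclColumn N k := rfl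

theorem continuous_euclColumn (k : Fin d) :
    Continuous fun M : Matrix (Fin n) (Fin d) ℝ => euclColumn M k :=
  (PiLp.continuous_toLp 2 _).comp (continuous_pi fun _ => by fun_prop)

theorem rowMul_apply (p : Eucl n) (M : Matrix (Fin n) (Fin d) ℝ) (k : Fin d) :
    rowMul p M k = ⟪p, euclColumn M k⟫ := by
  simp [rowMul, euclColumn, PiLp.inner_apply, mul_comm]

theorem norm_rowMul_le (p : Eucl n) (M : Matrix (Fin n) (Fin d) ℝ) :
    ‖rowMul p M‖ ≤ ‖p‖ * ‖M‖ := by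
  refine le_of_sq_le_sq ?_ (by positivity)
  rw [EuclideanSpace.norm_sq_eq, mul_pow, ← sum_norm_euclColumn_sq, Finset.mul_sum]
  refine Finset.sum_le_sum fun k _ => ?_
  rw [rowMul_apply, ← mul_pow]
  gcongr
  exact norm_inner_le_norm _ _

theorem rowMul_add_left (p q : Eucl n) (M : Matrix (Fin n) (Fin d) ℝ) :
    rowMul (p + q) M = rowMul p M + rowMul q M := by
  ext k
  simp only [rowMul_apply, PiLp.add_apply, inner_add_left]

theorem rowMul_sub_left (p q : Eucl n) (M : Matrix (Fin n) (Fin d) ℝ) :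
    rowMul (p - q) M = rowMul p M - rowMul q M := by
  ext k
  simp only [rowMul_apply, PiLp.sub_apply, inner_sub_left]

theorem rowMul_sub_right (p : Eucl n) (M N : Matrix (Fin n) (Fin d) ℝ) :
    rowMul p (M - N) = rowMul p M - rowMul p N := by
  ext k
  simp only [rowMul_apply, PiLp.sub_apply, euclColumn_sub, inner_sub_right]

theorem continuous_rowMul (p : Eucl n) :
    Continuous fun M : Matrix (Fin n) (Fin d) ℝ => rowMul p M :=
  (PiLp.continuous_toLp 2 _).comp (continuous_pi fun _ => by fun_prop)

/-- The second derivative of `φ t` at `x` in the direction `m`. Expressed through the columns of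
`σ`, the trace term of the Hamiltonians only involves these (`trace_mul_spaceHess`). -/
def secondDirDeriv (φ : ℝ → Eucl n → ℝ) (t : ℝ) (x m : Eucl n) : ℝ :=
  deriv (deriv fun s : ℝ => φ t (x + s • m)) 0

variable {φ θ : ℝ → Eucl n → ℝ} {t : ℝ} {x : Eucl n}

theorem hasDerivAt_line {F : Type*} [NormedAddCommGroup F] [NormedSpace ℝ F] (x e : F) (s : ℝ) :
    HasDerivAt (fun s : ℝ => x + s • e) e s := by
  simpa using ((hasDerivAt_id s).smul_const e).const_add x

theorem contDiff_slice {m : WithTop ℕ∞} (hφ : ContDiff ℝ m fun q : ℝ × Eucl n => φ q.1 q.2)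
    (t : ℝ) : ContDiff ℝ m (φ t) :=
  hφ.comp (contDiff_const.prodMk contDiff_id)

theorem inner_spaceGrad (hφ : DifferentiableAt ℝ (φ t) x) (e : Eucl n) :
    ⟪spaceGrad φ t x, e⟫ = deriv (fun s : ℝ => φ t (x + s • e)) 0 := by
  rw [spaceGrad, gradient, InnerProductSpace.toDual_symm_apply]
  have hline : HasFDerivAt (φ t) (fderiv ℝ (φ t) x) (x + (0 : ℝ) • e) := by
    simpa using hφ.hasFDerivAt
  exact (hline.comp_hasDerivAt (0 : ℝ) (hasDerivAt_line x e 0)).deriv.symm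

theorem differentiable_fderiv_of_contDiff_two {F : Type*} [NormedAddCommGroup F]
    [NormedSpace ℝ F] {g : F → ℝ} (hg : ContDiff ℝ 2 g) : Differentiable ℝ (fderiv ℝ g) :=
  (hg.fderiv_right (m := 1) (by norm_num)).differentiable (by norm_num)

theorem spaceHess_apply (hφ : ContDiff ℝ 2 (φ t)) (i j : Fin n) : spaceHess φ t x i j =
    fderiv ℝ (fderiv ℝ (φ t)) x (EuclideanSpace.single i 1) (EuclideanSpace.single j 1) := by
  rw [spaceHess, Matrix.of_apply, fderiv_clm_apply (differentiable_fderiv_of_contDiff_two hφ x)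
    (differentiableAt_const _)]
  simp

theorem isSymm_spaceHess (hφ : ContDiff ℝ 2 (φ t)) : (spaceHess φ t x).IsSymm := by
  ext i j
  rw [Matrix.transpose_apply, spaceHess_apply hφ, spaceHess_apply hφ]
  exact (hφ.contDiffAt.isSymmSndFDerivAt (by simp)).eq _ _

theorem secondDirDeriv_eq (hφ : ContDiff ℝ 2 (φ t)) (e : Eucl n) :
    secondDirDeriv φ t x e = fderiv ℝ (fderiv ℝ (φ t)) x e e := by
  have hfirst : (deriv fun s : ℝ => φ t (x + s • e)) = fun s => fderiv ℝ (φ t) (x + s • e) e :=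
    funext fun s => ((hφ.differentiable (by norm_num) _).hasFDerivAt.comp_hasDerivAt s
      (hasDerivAt_line x e s)).deriv
  have hfderiv : HasFDerivAt (fderiv ℝ (φ t)) (fderiv ℝ (fderiv ℝ (φ t)) x)
      (x + (0 : ℝ) • e) := by
    simpa using (differentiable_fderiv_of_contDiff_two hφ x).hasFDerivAt
  rw [secondDirDeriv, hfirst]
  exact ((ContinuousLinearMap.apply ℝ ℝ e).hasFDerivAt.comp_hasDerivAt (0 : ℝ)
    (hfderiv.comp_hasDerivAt (0 : ℝ) (hasDerivAt_line x e 0))).deriv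

theorem continuous_secondDirDeriv (hφ : ContDiff ℝ 2 (φ t)) :
    Continuous fun m => secondDirDeriv φ t x m := by
  simp only [secondDirDeriv_eq hφ]
  exact (ContinuousLinearMap.continuous _).clm_apply continuous_id

theorem sum_smul_single (m : Eucl n) : ∑ i, m i • EuclideanSpace.single i (1 : ℝ) = m := by
  ext j
  simp [Finset.sum_apply, Pi.single_apply]

theorem secondDirDeriv_eq_sum (hφ : ContDiff ℝ 2 (φ t)) (m : Eucl n) :
    secondDirDeriv φ t x m = ∑ i, ∑ j, m i * m j * spaceHess φ t x i j := by
  rw [secondDirDeriv_eq hφ]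
  conv_lhs => rw [← sum_smul_single m]
  simp only [map_sum, map_smul, sum_apply, smul_apply, smul_eq_mul, Finset.mul_sum,
    spaceHess_apply hφ]
  rw [Finset.sum_comm]
  exact Finset.sum_congr rfl fun i _ => Finset.sum_congr rfl fun j _ => by ring

theorem trace_mul_transpose_mul (M : Matrix (Fin n) (Fin d) ℝ) (X : Matrix (Fin n) (Fin n) ℝ) :
    (M * Mᵀ * X).trace = ∑ k, ∑ i, ∑ j, M i k * M j k * X i j := by
  simp only [Matrix.trace, Matrix.diag_apply, Matrix.mul_apply, Matrix.transpose_apply,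
    Finset.sum_mul]
  calc ∑ j, ∑ i, ∑ k, M j k * M i k * X i j
      = ∑ i, ∑ j, ∑ k, M j k * M i k * X i j := Finset.sum_comm
    _ = ∑ i, ∑ k, ∑ j, M i k * M j k * X i j := Finset.sum_congr rfl fun i _ => by
        rw [Finset.sum_comm]
        simp only [mul_comm (M i _)]
    _ = ∑ k, ∑ i, ∑ j, M i k * M j k * X i j := Finset.sum_comm

theorem trace_mul_spaceHess (hφ : ContDiff ℝ 2 (φ t)) (M : Matrix (Fin n) (Fin d) ℝ) :
    (M * Mᵀ * spaceHess φ t x).trace = ∑ k, secondDirDeriv φ t x (euclColumn M k) := by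
  simp only [trace_mul_transpose_mul, secondDirDeriv_eq_sum hφ, euclColumn]

theorem contDiff_line {m : WithTop ℕ∞} (hφ : ContDiff ℝ m (φ t)) (x e : Eucl n) :
    ContDiff ℝ m fun s : ℝ => φ t (x + s • e) :=
  hφ.comp (by fun_prop)

theorem secondDirDeriv_add (hφ : ContDiff ℝ 2 (φ t)) (hθ : ContDiff ℝ 2 (θ t)) (e : Eucl n) :
    secondDirDeriv (fun s y => φ s y + θ s y) t x e
      = secondDirDeriv φ t x e + secondDirDeriv θ t x e := by
  have hφ' := contDiff_line hφ x e
  have hθ' := contDiff_line hθ x e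
  have hfirst : (deriv fun s : ℝ => φ t (x + s • e) + θ t (x + s • e))
      = fun s => deriv (fun s : ℝ => φ t (x + s • e)) s + deriv (fun s : ℝ => θ t (x + s • e)) s :=
    funext fun s => deriv_fun_add (hφ'.differentiable (by norm_num) s)
      (hθ'.differentiable (by norm_num) s)
  rw [secondDirDeriv, hfirst]
  exact deriv_fun_add (hφ'.differentiable_deriv_two 0) (hθ'.differentiable_deriv_two 0)

theorem spaceGrad_add (hφ : DifferentiableAt ℝ (φ t) x) (hθ : DifferentiableAt ℝ (θ t) x) :
    spaceGrad (fun s y => φ s y + θ s y) t x = spaceGrad φ t x + spaceGrad θ t x := by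
  simp only [spaceGrad, gradient]
  rw [fderiv_fun_add hφ hθ, map_add]

theorem timeDeriv_add (hφ : DifferentiableAt ℝ (fun q : ℝ × Eucl n => φ q.1 q.2) (t, x))
    (hθ : DifferentiableAt ℝ (fun q : ℝ × Eucl n => θ q.1 q.2) (t, x)) :
    timeDeriv (fun s y => φ s y + θ s y) t x = timeDeriv φ t x + timeDeriv θ t x :=
  have hslice : ∀ {ψ : ℝ → Eucl n → ℝ},
      DifferentiableAt ℝ (fun q : ℝ × Eucl n => ψ q.1 q.2) (t, x) →
        DifferentiableAt ℝ (fun s => ψ s x) t := fun {ψ} hψ =>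
    DifferentiableAt.comp (f := fun s : ℝ => (s, x)) (g := fun q : ℝ × Eucl n => ψ q.1 q.2) t hψ
      (differentiableAt_id.prodMk (differentiableAt_const x))
  deriv_fun_add (hslice hφ) (hslice hθ)

theorem exists_isTestFunction_eventuallyEq (hφ : ContDiff ℝ 3 fun q : ℝ × Eucl n => φ q.1 q.2)
    (t : ℝ) (x : Eucl n) : ∃ φ' : ℝ → Eucl n → ℝ, IsTestFunction φ' ∧
      (fun q : ℝ × Eucl n => φ' q.1 q.2) =ᶠ[𝓝 (t, x)] fun q => φ q.1 q.2 := by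
  let χ : ContDiffBump ((t, x) : ℝ × Eucl n) := ⟨1, 2, one_pos, one_lt_two⟩
  refine ⟨fun s y => χ (s, y) * φ s y, ?_, ?_⟩
  · have hsmooth : ContDiff ℝ 3 fun q : ℝ × Eucl n => χ q * φ q.1 q.2 := χ.contDiff.mul hφ
    refine ⟨hsmooth, fun i _ hi => ?_⟩
    have hcpt : HasCompactSupport fun q : ℝ × Eucl n => χ q * φ q.1 q.2 :=
      χ.hasCompactSupport.mul_right
    exact (hcpt.iteratedFDeriv (𝕜 := ℝ) i).exists_bound_of_continuous
      (hsmooth.continuous_iteratedFDeriv (by exact_mod_cast hi))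
  · filter_upwards [χ.eventuallyEq_one] with q hq
    rw [show χ (q.1, q.2) = 1 from hq, one_mul]

end TestFunctions

section ViscosityJets

variable {n d : ℕ}

/-- Space-time with its Euclidean structure, in which the variables are doubled. -/
abbrev SpaceTime (n : ℕ) := WithLp 2 (ℝ × Eucl n)

/-- The embedding of space directions into space-time. -/
def spaceDir (m : Eucl n) : SpaceTime n := WithLp.toLp 2 (0, m)

theorem norm_spaceDir (m : Eucl n) : ‖spaceDir m‖ = ‖m‖ :=
  WithLp.norm_toLp_snd 2 ℝ (Eucl n) m

theorem spaceDir_sub (m m' : Eucl n) : spaceDir (m - m') = spaceDir m - spaceDir m' :=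
  congrArg (WithLp.toLp 2) (Prod.ext (sub_zero (0 : ℝ)).symm rfl)

theorem continuous_spaceDir : Continuous (spaceDir : Eucl n → SpaceTime n) :=
  (WithLp.prod_continuous_toLp 2 ℝ (Eucl n)).comp (Continuous.prodMk_right (0 : ℝ))

theorem inner_spaceDir (p : SpaceTime n) (m : Eucl n) : ⟪p, spaceDir m⟫ = ⟪p.snd, m⟫ := by
  rw [WithLp.prod_inner_apply, spaceDir, inner_zero_right, zero_add]
  rfl

/-- The quadratic form of a space-time operator, restricted to space directions. -/
def spatialForm (X : SpaceTime n →L[ℝ] SpaceTime n) (m : Eucl n) : ℝ :=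
  ⟪X (spaceDir m), spaceDir m⟫

theorem continuous_spatialForm (X : SpaceTime n →L[ℝ] SpaceTime n) :
    Continuous (spatialForm X) :=
  (X.continuous.comp continuous_spaceDir).inner continuous_spaceDir

theorem spatialForm_neg (X : SpaceTime n →L[ℝ] SpaceTime n) (m : Eucl n) :
    spatialForm (-X) m = -spatialForm X m := by
  rw [spatialForm, neg_apply, inner_neg_left, spatialForm]

theorem spatialForm_add_smul_id (X : SpaceTime n →L[ℝ] SpaceTime n) (c : ℝ) (m : Eucl n) :
    spatialForm (X + c • ContinuousLinearMap.id ℝ (SpaceTime n)) m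
      = spatialForm X m + c * ‖m‖ ^ 2 := by
  rw [spatialForm, add_apply, smul_apply, ContinuousLinearMap.id_apply, inner_add_left,
    real_inner_smul_left, real_inner_self_eq_norm_sq, norm_spaceDir, spatialForm]

/-- The quadratic function `⟪p, h⟫ + ½⟪X h, h⟫` with `h = (s, y) - z`. -/
def quadTest (z p : SpaceTime n) (X : SpaceTime n →L[ℝ] SpaceTime n) (s : ℝ) (y : Eucl n) : ℝ :=
  ⟪p, WithLp.toLp 2 (s, y) - z⟫
    + 1 / 2 * ⟪X (WithLp.toLp 2 (s, y) - z), WithLp.toLp 2 (s, y) - z⟫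

theorem contDiff_quadTest {k : WithTop ℕ∞} (z p : SpaceTime n)
    (X : SpaceTime n →L[ℝ] SpaceTime n) :
    ContDiff ℝ k fun q : ℝ × Eucl n => quadTest z p X q.1 q.2 := by
  have hsub : ContDiff ℝ k fun q : ℝ × Eucl n => (WithLp.toLp 2 (q.1, q.2) - z : SpaceTime n) :=
    (WithLp.prodContinuousLinearEquiv 2 ℝ ℝ (Eucl n)).symm.contDiff.sub contDiff_const
  exact (contDiff_const.inner ℝ hsub).add
    (contDiff_const.mul ((X.contDiff.comp hsub).inner ℝ hsub))

theorem quadTest_self (t : ℝ) (x : Eucl n) (p : SpaceTime n)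
    (X : SpaceTime n →L[ℝ] SpaceTime n) : quadTest (WithLp.toLp 2 (t, x)) p X t x = 0 := by
  simp [quadTest]

theorem quadTest_neg (z p : SpaceTime n) (X : SpaceTime n →L[ℝ] SpaceTime n) (s : ℝ)
    (y : Eucl n) : quadTest z (-p) (-X) s y = -quadTest z p X s y := by
  simp only [quadTest, inner_neg_left, neg_apply]
  ring

theorem quadTest_smul {z : SpaceTime n} (p : SpaceTime n) (X : SpaceTime n →L[ℝ] SpaceTime n)
    {s r : ℝ} {y : Eucl n} {e : SpaceTime n} (he : WithLp.toLp 2 (s, y) - z = r • e) :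
    quadTest z p X s y = r * ⟪p, e⟫ + r ^ 2 * (1 / 2 * ⟪X e, e⟫) := by
  rw [quadTest, he, map_smul, real_inner_smul_right, real_inner_smul_right, real_inner_smul_left]
  ring

theorem deriv_quadratic (a b : ℝ) :
    deriv (fun s : ℝ => s * a + s ^ 2 * b) = fun s => a + 2 * s * b := by
  funext s
  refine (((hasDerivAt_id s).mul_const a).add ((hasDerivAt_pow 2 s).mul_const b)).deriv.trans ?_
  simp

theorem quadTest_line (t : ℝ) (x : Eucl n) (p : SpaceTime n) (X : SpaceTime n →L[ℝ] SpaceTime n)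
    (m : Eucl n) : (fun s : ℝ => quadTest (WithLp.toLp 2 (t, x)) p X t (x + s • m))
      = fun s => s * ⟪p.snd, m⟫ + s ^ 2 * (1 / 2 * spatialForm X m) := by
  funext s
  have hstep : (WithLp.toLp 2 (t, x + s • m) - WithLp.toLp 2 (t, x) : SpaceTime n)
      = s • spaceDir m :=
    congrArg (WithLp.toLp 2)
      (Prod.ext ((sub_self t).trans (mul_zero s).symm) (add_sub_cancel_left x (s • m)))
  rw [quadTest_smul p X hstep, inner_spaceDir, spatialForm]

theorem secondDirDeriv_quadTest (t : ℝ) (x : Eucl n) (p : SpaceTime n)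
    (X : SpaceTime n →L[ℝ] SpaceTime n) (m : Eucl n) :
    secondDirDeriv (quadTest (WithLp.toLp 2 (t, x)) p X) t x m = spatialForm X m := by
  rw [secondDirDeriv, quadTest_line, deriv_quadratic]
  refine ((((hasDerivAt_id (0 : ℝ)).const_mul 2).mul_const
    (1 / 2 * spatialForm X m)).const_add ⟪p.snd, m⟫).deriv.trans ?_
  ring

theorem spaceGrad_quadTest (t : ℝ) (x : Eucl n) (p : SpaceTime n)
    (X : SpaceTime n →L[ℝ] SpaceTime n) :
    spaceGrad (quadTest (WithLp.toLp 2 (t, x)) p X) t x = p.snd := by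
  refine ext_inner_right ℝ fun m => ?_
  have hdiff := (contDiff_slice (contDiff_quadTest (k := 1) (WithLp.toLp 2 (t, x)) p X)
    t).differentiable one_ne_zero x
  rw [inner_spaceGrad hdiff, quadTest_line, deriv_quadratic]
  simp only [mul_zero, zero_mul, add_zero]

theorem timeDeriv_quadTest (t : ℝ) (x : Eucl n) (p : SpaceTime n)
    (X : SpaceTime n →L[ℝ] SpaceTime n) :
    timeDeriv (quadTest (WithLp.toLp 2 (t, x)) p X) t x = p.fst := by
  set e : SpaceTime n := WithLp.toLp 2 (1, 0) with he
  have hpe : ⟪p, e⟫ = p.fst := by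
    rw [WithLp.prod_inner_apply]
    simp [he]
  have hline : (fun s : ℝ => quadTest (WithLp.toLp 2 (t, x)) p X s x)
      = fun s => (s - t) * p.fst + (s - t) ^ 2 * (1 / 2 * ⟪X e, e⟫) := by
    funext s
    rw [quadTest_smul p X (r := s - t) (e := e), hpe]
    rw [← WithLp.toLp_sub, Prod.mk_sub_mk, sub_self, he, ← WithLp.toLp_smul, Prod.smul_mk,
      smul_zero, smul_eq_mul, mul_one]
  rw [timeDeriv, hline, deriv_comp_sub_const
    (f := fun s : ℝ => s * p.fst + s ^ 2 * (1 / 2 * ⟪X e, e⟫)), deriv_quadratic]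
  simp

theorem HasSuperjetOn.eventually_le_quadTest {v : ℝ → Eucl n → ℝ} {S : Set (SpaceTime n)}
    {t : ℝ} {x : Eucl n} {p : SpaceTime n} {X : SpaceTime n →L[ℝ] SpaceTime n}
    (hv : HasSuperjetOn (fun z : SpaceTime n => v z.fst z.snd) S (WithLp.toLp 2 (t, x)) p X)
    (hS : S ∈ 𝓝 (WithLp.toLp 2 (t, x))) {κ : ℝ} (hκ : 0 < κ) :
    ∀ᶠ q in 𝓝 (t, x), v q.1 q.2 ≤ v t x + quadTest (WithLp.toLp 2 (t, x)) p
      (X + (2 * κ) • ContinuousLinearMap.id ℝ (SpaceTime n)) q.1 q.2 := by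
  have htoLp : Continuous fun q : ℝ × Eucl n => (WithLp.toLp 2 q : SpaceTime n) :=
    WithLp.prod_continuous_toLp 2 ℝ (Eucl n)
  have hzero : Tendsto
      (fun q : ℝ × Eucl n => (WithLp.toLp 2 q - WithLp.toLp 2 (t, x) : SpaceTime n))
      (𝓝 (t, x)) (𝓝 0) :=
    (htoLp.sub continuous_const).tendsto' _ _ (sub_self _)
  filter_upwards [hzero.eventually (hv κ hκ), (htoLp.tendsto (t, x)).eventually hS] with q hq hqS
  rw [add_sub_cancel] at hq
  have hjet : v q.1 q.2 ≤ v t x + _ + _ + _ := hq hqS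
  rw [quadTest, add_apply, smul_apply, ContinuousLinearMap.id_apply, inner_add_left,
    real_inner_smul_left, real_inner_self_eq_norm_sq]
  linarith

variable {φ φ' θ : ℝ → Eucl n → ℝ} {t : ℝ} {x : Eucl n}

theorem spaceGrad_eq_of_eventuallyEq (h : φ' t =ᶠ[𝓝 x] φ t) :
    spaceGrad φ' t x = spaceGrad φ t x := by
  rw [spaceGrad, spaceGrad, gradient, gradient, h.fderiv_eq]

theorem spaceHess_eq_of_eventuallyEq (h : φ' t =ᶠ[𝓝 x] φ t) :
    spaceHess φ' t x = spaceHess φ t x := by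
  ext i j
  have hcolumn : (fun y => fderiv ℝ (φ' t) y (EuclideanSpace.single j (1 : ℝ)))
      =ᶠ[𝓝 x] fun y => fderiv ℝ (φ t) y (EuclideanSpace.single j (1 : ℝ)) :=
    (h.fderiv (𝕜 := ℝ)).mono fun y hy => congrArg (fun L => L (EuclideanSpace.single j 1)) hy
  rw [spaceHess, spaceHess, Matrix.of_apply, Matrix.of_apply, hcolumn.fderiv_eq]

/- Only the derivatives of a test function are visible to the equation: its value at the contact
point may be prescribed by adding a constant. -/
theorem exists_isTestFunction_prescribed (hφ : ContDiff ℝ 3 fun q : ℝ × Eucl n => φ q.1 q.2)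
    (t : ℝ) (x : Eucl n) (y : ℝ) : ∃ φ' : ℝ → Eucl n → ℝ, IsTestFunction φ' ∧
      φ' t x = y ∧ timeDeriv φ' t x = timeDeriv φ t x ∧ spaceGrad φ' t x = spaceGrad φ t x ∧
      spaceHess φ' t x = spaceHess φ t x ∧
      ∀ᶠ q in 𝓝 (t, x), φ' q.1 q.2 = φ q.1 q.2 + (y - φ t x) := by
  obtain ⟨φ', hφ', heq⟩ := exists_isTestFunction_eventuallyEq
    (φ := fun s z => φ s z + (y - φ t x)) (hφ.add contDiff_const) t x
  have htime : (fun s => φ' s x) =ᶠ[𝓝 t] fun s => φ s x + (y - φ t x) :=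
    ((Continuous.prodMk_left x).tendsto t).eventually heq
  have hspace : φ' t =ᶠ[𝓝 x] fun z => φ t z + (y - φ t x) :=
    ((Continuous.prodMk_right t).tendsto x).eventually heq
  refine ⟨φ', hφ', ?_, ?_, ?_, ?_, heq⟩
  · simpa using heq.eq_of_nhds
  · rw [timeDeriv, htime.deriv_eq, deriv_add_const, timeDeriv]
  · rw [spaceGrad_eq_of_eventuallyEq (φ := fun s z => φ s z + (y - φ t x)) hspace]
    simp only [spaceGrad, gradient, fderiv_add_const]
  · rw [spaceHess_eq_of_eventuallyEq (φ := fun s z => φ s z + (y - φ t x)) hspace]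
    simp only [spaceHess, fderiv_add_const]

variable {T : ℝ} {G : ℝ → Eucl n → ℝ → Eucl n → Matrix (Fin n) (Fin n) ℝ → ℝ} {g : Eucl n → ℝ}
  {w : ℝ → Eucl n → ℝ}

theorem IsViscositySubsolution.of_isLocalMax (hw : IsViscositySubsolution T G g w)
    (hφ : ContDiff ℝ 3 fun q : ℝ × Eucl n => φ q.1 q.2) (ht : t ∈ Ico 0 T)
    (hmax : ∀ᶠ q in 𝓝 (t, x), w q.1 q.2 - φ q.1 q.2 ≤ w t x - φ t x) (y : ℝ) :
    0 ≤ timeDeriv φ t x + G t x y (spaceGrad φ t x) (spaceHess φ t x) := by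
  obtain ⟨φ', hφ', hval, htime, hgrad, hhess, heq⟩ := exists_isTestFunction_prescribed hφ t x y
  have hineq := hw.2 φ' hφ' t ht x ?_
  · rwa [hval, htime, hgrad, hhess] at hineq
  · refine eventually_nhdsWithin_of_eventually_nhds ?_
    filter_upwards [hmax, heq] with q hq hq'
    rw [hq', hval]
    linarith

theorem IsViscositySupersolution.of_isLocalMin (hw : IsViscositySupersolution T G g w)
    (hφ : ContDiff ℝ 3 fun q : ℝ × Eucl n => φ q.1 q.2) (ht : t ∈ Ico 0 T)
    (hmin : ∀ᶠ q in 𝓝 (t, x), w t x - φ t x ≤ w q.1 q.2 - φ q.1 q.2) (y : ℝ) :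
    timeDeriv φ t x + G t x y (spaceGrad φ t x) (spaceHess φ t x) ≤ 0 := by
  obtain ⟨φ', hφ', hval, htime, hgrad, hhess, heq⟩ := exists_isTestFunction_prescribed hφ t x y
  have hineq := hw.2 φ' hφ' t ht x ?_
  · rwa [hval, htime, hgrad, hhess] at hineq
  · refine eventually_nhdsWithin_of_eventually_nhds ?_
    filter_upwards [hmin, heq] with q hq hq'
    rw [hq', hval]
    linarith

variable {U V : Type*} {b : ℝ → Eucl n → U → V → Eucl n}
  {σ : ℝ → Eucl n → U → V → Matrix (Fin n) (Fin d) ℝ}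
  {f : ℝ → Eucl n → ℝ → Eucl d → U → V → ℝ}

/-- The expression under `sup inf` in the lower Hamiltonian, with the Hessian replaced by a function
`Q` of the columns of `σ` and the value of the solution by `0`; the latter is harmless because test
functions may be shifted by constants. -/
def gameIntegrand (b : ℝ → Eucl n → U → V → Eucl n)
    (σ : ℝ → Eucl n → U → V → Matrix (Fin n) (Fin d) ℝ)
    (f : ℝ → Eucl n → ℝ → Eucl d → U → V → ℝ) (t : ℝ) (x p : Eucl n) (Q : Eucl n → ℝ)
    (u : U) (v : V) : ℝ :=
  1 / 2 * ∑ k, Q (euclColumn (σ t x u v) k) + ⟪p, b t x u v⟫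
    + f t x 0 (rowMul p (σ t x u v)) u v

theorem lowerHamiltonian_eq_iSup_iInf_gameIntegrand (hφ : ContDiff ℝ 2 (φ t)) (p : Eucl n) :
    lowerHamiltonian b σ f t x 0 p (spaceHess φ t x)
      = ⨆ u, ⨅ v, gameIntegrand b σ f t x p (secondDirDeriv φ t x) u v := by
  simp only [lowerHamiltonian, trace_mul_spaceHess hφ, gameIntegrand]

theorem IsViscositySubsolution.of_le_quadTest
    (hw : IsViscositySubsolution T (lowerHamiltonian b σ f) g w)
    (hθ : ContDiff ℝ 3 fun q : ℝ × Eucl n => θ q.1 q.2) (ht : t ∈ Ico 0 T)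
    {p : SpaceTime n} {X : SpaceTime n →L[ℝ] SpaceTime n}
    (hle : ∀ᶠ q in 𝓝 (t, x), w q.1 q.2 - θ q.1 q.2
      ≤ w t x - θ t x + quadTest (WithLp.toLp 2 (t, x)) p X q.1 q.2) :
    0 ≤ timeDeriv θ t x + p.fst + ⨆ u, ⨅ v, gameIntegrand b σ f t x (spaceGrad θ t x + p.snd)
      (fun m => secondDirDeriv θ t x m + spatialForm X m) u v := by
  set Q := quadTest (WithLp.toLp 2 (t, x)) p X with hQ
  have hQ₃ : ContDiff ℝ 3 fun q : ℝ × Eucl n => Q q.1 q.2 := contDiff_quadTest _ p X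
  have hsum := hθ.add hQ₃
  have hθ₂ : ContDiff ℝ 2 (θ t) := (contDiff_slice hθ t).of_le (by norm_num)
  have hQ₂ : ContDiff ℝ 2 (Q t) := (contDiff_slice hQ₃ t).of_le (by norm_num)
  have hineq := hw.of_isLocalMax (φ := fun s y => θ s y + Q s y) hsum ht
    (by filter_upwards [hle] with q hq; rw [hQ, quadTest_self]; linarith) 0
  rw [lowerHamiltonian_eq_iSup_iInf_gameIntegrand (hθ₂.add hQ₂),
    timeDeriv_add (hθ.differentiable (by norm_num) _) (hQ₃.differentiable (by norm_num) _),
    spaceGrad_add (hθ₂.differentiable (by norm_num) _) (hQ₂.differentiable (by norm_num) _),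
    timeDeriv_quadTest, spaceGrad_quadTest] at hineq
  have hsecond : secondDirDeriv (fun s y => θ s y + Q s y) t x
      = fun m => secondDirDeriv θ t x m + spatialForm X m :=
    funext fun m => by rw [secondDirDeriv_add hθ₂ hQ₂, secondDirDeriv_quadTest]
  rwa [hsecond] at hineq

theorem IsViscositySupersolution.of_neg_le_quadTest
    (hw : IsViscositySupersolution T (lowerHamiltonian b σ f) g w) (ht : t ∈ Ico 0 T)
    {p : SpaceTime n} {X : SpaceTime n →L[ℝ] SpaceTime n}
    (hle : ∀ᶠ q in 𝓝 (t, x),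
      -w q.1 q.2 ≤ -w t x + quadTest (WithLp.toLp 2 (t, x)) p X q.1 q.2) :
    -p.fst + ⨆ u, ⨅ v, gameIntegrand b σ f t x (-p.snd) (fun m => -spatialForm X m) u v ≤ 0 := by
  have hQ₃ : ContDiff ℝ 3 fun q : ℝ × Eucl n =>
    quadTest (WithLp.toLp 2 (t, x)) (-p) (-X) q.1 q.2 := contDiff_quadTest _ _ _
  have hineq := hw.of_isLocalMin hQ₃ ht
    (by filter_upwards [hle] with q hq; rw [quadTest_self, quadTest_neg]; linarith) 0
  rw [lowerHamiltonian_eq_iSup_iInf_gameIntegrand ((contDiff_slice hQ₃ t).of_le (by norm_num)),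
    timeDeriv_quadTest, spaceGrad_quadTest] at hineq
  have hsecond : secondDirDeriv (quadTest (WithLp.toLp 2 (t, x)) (-p) (-X)) t x
      = fun m => -spatialForm X m :=
    funext fun m => by rw [secondDirDeriv_quadTest, spatialForm_neg]
  rwa [hsecond] at hineq

end ViscosityJets

section Coefficients

theorem iSup_iInf_le_add {U V : Type*} [Nonempty U] [Nonempty V] {F G : U → V → ℝ} {B c : ℝ}
    (hF : ∀ u v, |F u v| ≤ B) (hG : ∀ u v, |G u v| ≤ B) (h : ∀ u v, F u v ≤ G u v + c) :
    ⨆ u, ⨅ v, F u v ≤ (⨆ u, ⨅ v, G u v) + c := by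
  have hbelow : ∀ {E : U → V → ℝ}, (∀ u v, |E u v| ≤ B) → ∀ u, BddBelow (range (E u)) :=
    fun hE u => ⟨-B, forall_mem_range.2 fun v => (abs_le.1 (hE u v)).1⟩
  obtain ⟨v₀⟩ := ‹Nonempty V›
  have habove : BddAbove (range fun u => ⨅ v, G u v) := ⟨B, forall_mem_range.2 fun u =>
    (ciInf_le (hbelow hG u) v₀).trans (abs_le.1 (hG u v₀)).2⟩
  have : Nonempty V := ⟨v₀⟩
  refine ciSup_le fun u => ?_
  have hinf : (⨅ v, F u v) - c ≤ ⨅ v, G u v := le_ciInf fun v => by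
    linarith [ciInf_le (hbelow hF u) v, h u v]
  linarith [le_ciSup habove u]

section Modulus

variable {U V X F : Type*} [TopologicalSpace U] [TopologicalSpace V]
  [SeminormedAddCommGroup X] [SeminormedAddCommGroup F] {I : Set ℝ} {C : ℝ}
  {g : ℝ → X → U → V → F}

theorem continuousOn_uncurry_of_lipschitz
    (hc : ∀ x, ContinuousOn (fun q : ℝ × U × V => g q.1 x q.2.1 q.2.2) (I ×ˢ univ))
    (hl : ∀ t ∈ I, ∀ x x' u v, ‖g t x u v - g t x' u v‖ ≤ C * ‖x - x'‖) :
    ContinuousOn (fun q : (ℝ × U × V) × X => g q.1.1 q.2 q.1.2.1 q.1.2.2)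
      ((I ×ˢ univ) ×ˢ univ) := by
  refine continuousOn_prod_of_continuousOn_lipschitzOnWith'
    (fun q : (ℝ × U × V) × X => g q.1.1 q.2 q.1.2.1 q.1.2.2) C.toNNReal ?_ fun x _ => hc x
  rintro ⟨t, u, v⟩ ⟨ht, -⟩
  refine LipschitzOnWith.of_dist_le_mul fun x _ x' _ => ?_
  rw [dist_eq_norm, dist_eq_norm]
  exact (hl t ht x x' u v).trans (by gcongr; exact Real.le_coe_toNNReal C)

variable [CompactSpace U] [CompactSpace V]

theorem exists_norm_le_of_lipschitz (hI : IsCompact I)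
    (hc : ∀ x, ContinuousOn (fun q : ℝ × U × V => g q.1 x q.2.1 q.2.2) (I ×ˢ univ))
    (hl : ∀ t ∈ I, ∀ x x' u v, ‖g t x u v - g t x' u v‖ ≤ C * ‖x - x'‖)
    {K : Set X} (hK : IsCompact K) : ∃ M, ∀ t ∈ I, ∀ x ∈ K, ∀ u v, ‖g t x u v‖ ≤ M := by
  obtain ⟨M, hM⟩ := ((hI.prod isCompact_univ).prod hK).exists_bound_of_continuousOn
    ((continuousOn_uncurry_of_lipschitz hc hl).mono (prod_mono_right (subset_univ K)))
  exact ⟨M, fun t ht x hx u v => hM ((t, u, v), x) ⟨⟨ht, mem_univ _⟩, hx⟩⟩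

/- The pairs of times at which `g` differs by `D` or more form a compact set off the diagonal. -/
theorem exists_time_modulus_of_lipschitz (hI : IsCompact I)
    (hc : ∀ x, ContinuousOn (fun q : ℝ × U × V => g q.1 x q.2.1 q.2.2) (I ×ˢ univ))
    (hl : ∀ t ∈ I, ∀ x x' u v, ‖g t x u v - g t x' u v‖ ≤ C * ‖x - x'‖)
    {K : Set X} (hK : IsCompact K) {D : ℝ} (hD : 0 < D) :
    ∃ ρ > 0, ∀ t ∈ I, ∀ s ∈ I, |t - s| < ρ → ∀ x ∈ K, ∀ u v,
      ‖g t x u v - g s x u v‖ ≤ D := by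
  have hcont := continuousOn_uncurry_of_lipschitz hc hl
  have hdiff : ContinuousOn (fun ω : (ℝ × ℝ) × X × U × V =>
      ‖g ω.1.1 ω.2.1 ω.2.2.1 ω.2.2.2 - g ω.1.2 ω.2.1 ω.2.2.1 ω.2.2.2‖)
      ((I ×ˢ I) ×ˢ (K ×ˢ univ)) :=
    ((hcont.comp (f := fun ω : (ℝ × ℝ) × X × U × V => ((ω.1.1, ω.2.2), ω.2.1)) (by fun_prop)
      fun ω hω => ⟨⟨hω.1.1, mem_univ _⟩, mem_univ _⟩).sub
    (hcont.comp (f := fun ω : (ℝ × ℝ) × X × U × V => ((ω.1.2, ω.2.2), ω.2.1)) (by fun_prop)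
      fun ω hω => ⟨⟨hω.1.2, mem_univ _⟩, mem_univ _⟩)).norm
  obtain ⟨B, hB, hBeq⟩ := continuousOn_iff_isClosed.1 hdiff (Ici D) isClosed_Ici
  have hbad : IsCompact (((I ×ˢ I) ×ˢ (K ×ˢ (univ : Set (U × V)))) ∩ B) :=
    ((hI.prod hI).prod (hK.prod isCompact_univ)).inter_right hB
  obtain ⟨ρ, hρ, hfar⟩ := hbad.exists_forall_le' (f := fun ω => |ω.1.1 - ω.1.2|) (a := 0)
    (by fun_prop) (by
      rintro ⟨⟨t, s⟩, x, u, v⟩ hω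
      refine abs_pos.2 (sub_ne_zero.2 fun hts => ?_)
      have hle : D ≤ ‖g t x u v - g s x u v‖ := (hBeq.ge ⟨hω.2, hω.1⟩).1
      rw [show t = s from hts, sub_self, norm_zero] at hle
      exact hD.not_ge hle)
  refine ⟨ρ, hρ, fun t ht s hs hts x hx u v => ?_⟩
  by_contra! hlt
  have hmem : ((t, s), x, u, v) ∈ ((I ×ˢ I) ×ˢ (K ×ˢ (univ : Set (U × V)))) :=
    ⟨⟨ht, hs⟩, hx, mem_univ _⟩
  exact hts.not_ge (hfar _ ⟨hmem, (hBeq.le ⟨hlt.le, hmem⟩).1⟩)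

end Modulus

variable {n d : ℕ} {U V : Type*} [TopologicalSpace U] [TopologicalSpace V]

/-- Assumptions (H4.1) and (H4.2) on `b`, `σ` and `f`, with a common Lipschitz constant `C`. -/
structure RegularCoefficients (T C : ℝ) (b : ℝ → Eucl n → U → V → Eucl n)
    (σ : ℝ → Eucl n → U → V → Matrix (Fin n) (Fin d) ℝ)
    (f : ℝ → Eucl n → ℝ → Eucl d → U → V → ℝ) : Prop where
  pos : 0 < C
  b_cont : ∀ x, ContinuousOn (fun q : ℝ × U × V => b q.1 x q.2.1 q.2.2) (Icc 0 T ×ˢ univ)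
  σ_cont : ∀ x, ContinuousOn (fun q : ℝ × U × V => σ q.1 x q.2.1 q.2.2) (Icc 0 T ×ˢ univ)
  f_cont : ∀ x y z,
    ContinuousOn (fun q : ℝ × U × V => f q.1 x y z q.2.1 q.2.2) (Icc 0 T ×ˢ univ)
  b_lip : ∀ t ∈ Icc 0 T, ∀ x x' u v, ‖b t x u v - b t x' u v‖ ≤ C * ‖x - x'‖
  σ_lip : ∀ t ∈ Icc 0 T, ∀ x x' u v, ‖σ t x u v - σ t x' u v‖ ≤ C * ‖x - x'‖
  f_lip : ∀ t ∈ Icc 0 T, ∀ x x' y y' z z' u v,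
    |f t x y z u v - f t x' y' z' u v| ≤ C * (‖x - x'‖ + |y - y'| + ‖z - z'‖)

variable {T C : ℝ} {b : ℝ → Eucl n → U → V → Eucl n}
  {σ : ℝ → Eucl n → U → V → Matrix (Fin n) (Fin d) ℝ}
  {f : ℝ → Eucl n → ℝ → Eucl d → U → V → ℝ}

theorem continuous_time_slice {F : Type*} [TopologicalSpace F] {h : ℝ → U → V → F}
    {I : Set ℝ} (hc : ContinuousOn (fun q : ℝ × U × V => h q.1 q.2.1 q.2.2) (I ×ˢ univ)) {t : ℝ}
    (ht : t ∈ I) : Continuous fun q : U × V => h t q.1 q.2 :=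
  hc.comp_continuous (f := fun q : U × V => (t, q.1, q.2)) (by fun_prop)
    fun _ => ⟨ht, mem_univ _⟩

namespace RegularCoefficients

theorem continuous_gameIntegrand (hr : RegularCoefficients T C b σ f) {t : ℝ}
    (ht : t ∈ Icc 0 T) (x p : Eucl n) {Q : Eucl n → ℝ} (hQ : Continuous Q) :
    Continuous fun q : U × V => gameIntegrand b σ f t x p Q q.1 q.2 := by
  have hb : Continuous fun q : U × V => b t x q.1 q.2 :=
    continuous_time_slice (h := fun t u v => b t x u v) (hr.b_cont x) ht
  have hσ : Continuous fun q : U × V => σ t x q.1 q.2 :=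
    continuous_time_slice (h := fun t u v => σ t x u v) (hr.σ_cont x) ht
  have hf : Continuous fun q : (U × V) × Eucl d => f t x 0 q.2 q.1.1 q.1.2 := by
    refine continuous_prod_of_continuous_lipschitzWith' _ C.toNNReal (fun q => ?_)
      fun z => continuous_time_slice (h := fun t u v => f t x 0 z u v) (hr.f_cont x 0 z) ht
    refine LipschitzWith.of_dist_le_mul fun z z' => ?_
    have hz := hr.f_lip t ht x x 0 0 z z' q.1 q.2
    rwa [sub_self, sub_self, norm_zero, abs_zero, zero_add, zero_add, ← Real.dist_eq,
      ← dist_eq_norm, ← Real.coe_toNNReal C hr.pos.le] at hz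
  exact ((continuous_const.mul (continuous_finsetSum _ fun k _ =>
    hQ.comp ((continuous_euclColumn k).comp hσ))).add (continuous_const.inner hb)).add
    (hf.comp (continuous_id.prodMk ((continuous_rowMul p).comp hσ)))

variable [CompactSpace U] [CompactSpace V]

theorem exists_abs_gameIntegrand_le (hr : RegularCoefficients T C b σ f) {t : ℝ}
    (ht : t ∈ Icc 0 T) (x p : Eucl n) {Q : Eucl n → ℝ} (hQ : Continuous Q) :
    ∃ B, ∀ u v, |gameIntegrand b σ f t x p Q u v| ≤ B := by
  obtain ⟨B, hB⟩ := isCompact_univ.exists_bound_of_continuousOn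
    (hr.continuous_gameIntegrand ht x p hQ).continuousOn
  exact ⟨B, fun u v => hB (u, v) (mem_univ _)⟩

theorem exists_bound (hr : RegularCoefficients T C b σ f) (R : ℝ) :
    ∃ M > 0, ∀ t ∈ Icc 0 T, ∀ x, ‖x‖ ≤ R → ∀ u v, ‖b t x u v‖ ≤ M ∧ ‖σ t x u v‖ ≤ M := by
  have hball : ∀ {x : Eucl n}, ‖x‖ ≤ R → x ∈ closedBall 0 R := mem_closedBall_zero_iff.2
  obtain ⟨Mb, hMb⟩ := exists_norm_le_of_lipschitz isCompact_Icc hr.b_cont hr.b_lip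
    (isCompact_closedBall 0 R)
  obtain ⟨Mσ, hMσ⟩ := exists_norm_le_of_lipschitz isCompact_Icc hr.σ_cont hr.σ_lip
    (isCompact_closedBall 0 R)
  exact ⟨max 1 (max Mb Mσ), by positivity, fun t ht x hx u v =>
    ⟨(hMb t ht x (hball hx) u v).trans ((le_max_left _ _).trans (le_max_right _ _)),
      (hMσ t ht x (hball hx) u v).trans ((le_max_right _ _).trans (le_max_right _ _))⟩⟩

theorem exists_time_modulus_f (hr : RegularCoefficients T C b σ f) (R Z : ℝ) {D : ℝ}
    (hD : 0 < D) : ∃ ρ > 0, ∀ t ∈ Icc 0 T, ∀ s ∈ Icc 0 T, |t - s| < ρ → ∀ x, ‖x‖ ≤ R →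
      ∀ z, ‖z‖ ≤ Z → ∀ u v, |f t x 0 z u v - f s x 0 z u v| ≤ D := by
  have hlip : ∀ t ∈ Icc 0 T, ∀ (ξ ξ' : Eucl n × Eucl d) (u : U) (v : V),
      ‖f t ξ.1 0 ξ.2 u v - f t ξ'.1 0 ξ'.2 u v‖ ≤ 2 * C * ‖ξ - ξ'‖ := fun t ht ξ ξ' u v => by
    refine (hr.f_lip t ht _ _ _ _ _ _ u v).trans ?_
    have hfst : ‖ξ.1 - ξ'.1‖ ≤ ‖ξ - ξ'‖ := norm_fst_le (ξ - ξ')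
    have hsnd : ‖ξ.2 - ξ'.2‖ ≤ ‖ξ - ξ'‖ := norm_snd_le (ξ - ξ')
    rw [sub_self, abs_zero, add_zero, mul_comm 2 C, mul_assoc, two_mul]
    exact mul_le_mul_of_nonneg_left (add_le_add hfst hsnd) hr.pos.le
  obtain ⟨ρ, hρ, hf⟩ := exists_time_modulus_of_lipschitz
    (g := fun t (ξ : Eucl n × Eucl d) u v => f t ξ.1 0 ξ.2 u v) isCompact_Icc
    (fun ξ => hr.f_cont ξ.1 0 ξ.2) hlip
    ((isCompact_closedBall 0 R).prod (isCompact_closedBall 0 Z)) hD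
  exact ⟨ρ, hρ, fun t ht s hs hts x hx z hz => hf t ht s hs hts (x, z)
    ⟨mem_closedBall_zero_iff.2 hx, mem_closedBall_zero_iff.2 hz⟩⟩

theorem exists_time_modulus (hr : RegularCoefficients T C b σ f) (R Z : ℝ) {D : ℝ} (hD : 0 < D) :
    ∃ ρ > 0, ∀ t ∈ Icc 0 T, ∀ s ∈ Icc 0 T, |t - s| < ρ → ∀ x, ‖x‖ ≤ R → ∀ u v,
      ‖b t x u v - b s x u v‖ ≤ D ∧ ‖σ t x u v - σ s x u v‖ ≤ D ∧
      ∀ z, ‖z‖ ≤ Z → |f t x 0 z u v - f s x 0 z u v| ≤ D := by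
  obtain ⟨ρb, hρb, hb⟩ := exists_time_modulus_of_lipschitz isCompact_Icc hr.b_cont hr.b_lip
    (isCompact_closedBall 0 R) hD
  obtain ⟨ρσ, hρσ, hσ⟩ := exists_time_modulus_of_lipschitz isCompact_Icc hr.σ_cont hr.σ_lip
    (isCompact_closedBall 0 R) hD
  obtain ⟨ρf, hρf, hf⟩ := hr.exists_time_modulus_f R Z hD
  refine ⟨min ρb (min ρσ ρf), by positivity, fun t ht s hs hts x hx u v => ?_⟩
  obtain ⟨hts_b, hts_σ, hts_f⟩ : |t - s| < ρb ∧ |t - s| < ρσ ∧ |t - s| < ρf := by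
    simpa only [lt_min_iff] using hts
  have hx' : x ∈ closedBall 0 R := mem_closedBall_zero_iff.2 hx
  exact ⟨hb t ht s hs hts_b x hx' u v, hσ t ht s hs hts_σ x hx' u v,
    fun z hz => hf t ht s hs hts_f x hx z hz u v⟩

end RegularCoefficients

end Coefficients

section LocalComparison

variable {n d : ℕ}

/-- The penalisation operator of the doubling of variables, with weights `δ⁻¹` in time and `ε⁻¹` in
space: time needs a much smaller scale, because the coefficients are merely continuous in it. -/
def penaltyOp (n : ℕ) (δ ε : ℝ) : SpaceTime n →L[ℝ] SpaceTime n :=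
  ((WithLp.prodContinuousLinearEquiv 2 ℝ ℝ (Eucl n)).symm : ℝ × Eucl n →L[ℝ] SpaceTime n) ∘L
    ((δ⁻¹ • ContinuousLinearMap.fst ℝ ℝ (Eucl n)).prod
      (ε⁻¹ • ContinuousLinearMap.snd ℝ ℝ (Eucl n))) ∘L
    ((WithLp.prodContinuousLinearEquiv 2 ℝ ℝ (Eucl n)) : SpaceTime n →L[ℝ] ℝ × Eucl n)

theorem penaltyOp_fst (δ ε : ℝ) (z : SpaceTime n) : (penaltyOp n δ ε z).fst = δ⁻¹ * z.fst := rfl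

theorem penaltyOp_snd (δ ε : ℝ) (z : SpaceTime n) : (penaltyOp n δ ε z).snd = ε⁻¹ • z.snd := rfl

theorem inner_penaltyOp (δ ε : ℝ) (z z' : SpaceTime n) :
    ⟪penaltyOp n δ ε z, z'⟫ = δ⁻¹ * (z.fst * z'.fst) + ε⁻¹ * ⟪z.snd, z'.snd⟫ := by
  rw [WithLp.prod_inner_apply]
  change ⟪(penaltyOp n δ ε z).fst, z'.fst⟫ + ⟪(penaltyOp n δ ε z).snd, z'.snd⟫ = _
  rw [penaltyOp_fst, penaltyOp_snd, real_inner_smul_left, RCLike.inner_apply, conj_trivial]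
  ring

theorem inner_penaltyOp_self (δ ε : ℝ) (z : SpaceTime n) :
    ⟪penaltyOp n δ ε z, z⟫ = δ⁻¹ * z.fst ^ 2 + ε⁻¹ * ‖z.snd‖ ^ 2 := by
  rw [inner_penaltyOp, real_inner_self_eq_norm_sq, ← sq]

theorem isPositive_penaltyOp {δ ε : ℝ} (hδ : 0 ≤ δ) (hε : 0 ≤ ε) :
    (penaltyOp n δ ε).IsPositive := by
  refine (ContinuousLinearMap.isPositive_iff _).2 ⟨fun z z' => ?_, fun z => ?_⟩
  · change ⟪penaltyOp n δ ε z, z'⟫ = ⟪z, penaltyOp n δ ε z'⟫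
    rw [real_inner_comm _ z, inner_penaltyOp, inner_penaltyOp, mul_comm z.fst,
      real_inner_comm z.snd]
  · rw [inner_penaltyOp_self]
    positivity

theorem spatialForm_penaltyOp (δ ε : ℝ) (m : Eucl n) :
    spatialForm (penaltyOp n δ ε) m = ε⁻¹ * ‖m‖ ^ 2 := by
  rw [spatialForm, inner_penaltyOp_self, spaceDir, WithLp.toLp_fst, WithLp.toLp_snd]
  ring

/-- The closed space-time cylinder `[a, t₁] × B(0, R)`. -/
def spaceTimeCylinder (n : ℕ) (a t₁ R : ℝ) : Set (SpaceTime n) :=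
  {z | z.fst ∈ Icc a t₁ ∧ ‖z.snd‖ ≤ R}

theorem isCompact_spaceTimeCylinder (n : ℕ) (a t₁ R : ℝ) :
    IsCompact (spaceTimeCylinder n a t₁ R) := by
  have hpreimage : spaceTimeCylinder n a t₁ R
      = WithLp.prodContinuousLinearEquiv 2 ℝ ℝ (Eucl n) ⁻¹' (Icc a t₁ ×ˢ closedBall 0 R) := by
    ext z
    exact and_congr_right' mem_closedBall_zero_iff.symm
  rw [hpreimage]
  exact (WithLp.prodContinuousLinearEquiv 2 ℝ ℝ (Eucl n)).toHomeomorph.isCompact_preimage.2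
    (isCompact_Icc.prod (isCompact_closedBall _ _))

theorem spaceTimeCylinder_mem_nhds {a t₁ R : ℝ} {z : SpaceTime n} (htime : z.fst ∈ Ioo a t₁)
    (hspace : ‖z.snd‖ < R) : spaceTimeCylinder n a t₁ R ∈ 𝓝 z := by
  filter_upwards [(WithLp.continuous_fst 2 ℝ (Eucl n)).continuousAt.eventually
      (Ioo_mem_nhds htime.1 htime.2),
    (WithLp.continuous_snd 2 ℝ (Eucl n)).norm.continuousAt.eventually (gt_mem_nhds hspace)]
    with y hy hy'
  exact ⟨⟨hy.1.le, hy.2.le⟩, hy'.le⟩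

theorem sum_column_forms_le {P P' : Eucl n → ℝ} {a c : ℝ} (ha : 0 ≤ a) (hc : 0 ≤ c)
    (hP : ∀ m m', P m + P' m' ≤ a * ‖m - m'‖ ^ 2 + c * (‖m‖ ^ 2 + ‖m'‖ ^ 2))
    {S S' : Matrix (Fin n) (Fin d) ℝ} {M Δ : ℝ} (hS : ‖S‖ ≤ M) (hS' : ‖S'‖ ≤ M)
    (hΔ : ‖S - S'‖ ≤ Δ) :
    ∑ k, P (euclColumn S k) + ∑ k, P' (euclColumn S' k) ≤ a * Δ ^ 2 + 2 * (c * M ^ 2) := by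
  calc ∑ k, P (euclColumn S k) + ∑ k, P' (euclColumn S' k)
      = ∑ k, (P (euclColumn S k) + P' (euclColumn S' k)) := Finset.sum_add_distrib.symm
    _ ≤ ∑ k, (a * ‖euclColumn (S - S') k‖ ^ 2
          + c * (‖euclColumn S k‖ ^ 2 + ‖euclColumn S' k‖ ^ 2)) :=
        Finset.sum_le_sum fun k _ => euclColumn_sub S S' k ▸ hP _ _
    _ = a * ‖S - S'‖ ^ 2 + c * (‖S‖ ^ 2 + ‖S'‖ ^ 2) := by
        rw [Finset.sum_add_distrib, ← Finset.mul_sum, ← Finset.mul_sum, Finset.sum_add_distrib,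
          sum_norm_euclColumn_sq, sum_norm_euclColumn_sq, sum_norm_euclColumn_sq]
    _ ≤ a * Δ ^ 2 + c * (M ^ 2 + M ^ 2) := by gcongr
    _ = a * Δ ^ 2 + 2 * (c * M ^ 2) := by ring

theorem inner_add_inner_le_of_norm_sub_le {E : Type*} [NormedAddCommGroup E]
    [InnerProductSpace ℝ E] {p p' q B B' : E} {η M Δ : ℝ} (hp : ‖p - q‖ ≤ η)
    (hp' : ‖p' + q‖ ≤ η) (hB : ‖B‖ ≤ M) (hB' : ‖B'‖ ≤ M) (hΔ : ‖B - B'‖ ≤ Δ) :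
    ⟪p, B⟫ + ⟪p', B'⟫ ≤ ‖q‖ * Δ + 2 * η * M := by
  have hη : 0 ≤ η := (norm_nonneg _).trans hp
  calc ⟪p, B⟫ + ⟪p', B'⟫ = ⟪q, B - B'⟫ + ⟪p - q, B⟫ + ⟪p' + q, B'⟫ := by
        rw [inner_sub_right, inner_sub_left, inner_add_left]
        ring
    _ ≤ ‖q‖ * ‖B - B'‖ + ‖p - q‖ * ‖B‖ + ‖p' + q‖ * ‖B'‖ :=
        add_le_add_three (real_inner_le_norm _ _) (real_inner_le_norm _ _)
          (real_inner_le_norm _ _)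
    _ ≤ ‖q‖ * Δ + η * M + η * M := by gcongr
    _ = ‖q‖ * Δ + 2 * η * M := by ring

theorem norm_rowMul_sub_add_le {p p' q g : Eucl n} {S S' : Matrix (Fin n) (Fin d) ℝ}
    {η M Δ : ℝ} (hp : ‖p - q‖ ≤ η) (hp' : ‖p' + q‖ ≤ η) (hS : ‖S‖ ≤ M) (hS' : ‖S'‖ ≤ M)
    (hΔ : ‖S - S'‖ ≤ Δ) :
    ‖rowMul (g + p) S - rowMul q S'‖ + ‖rowMul q S' - rowMul (-p') S'‖
      ≤ ‖rowMul g S‖ + (‖q‖ * Δ + 2 * η * M) := by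
  have hη : 0 ≤ η := (norm_nonneg _).trans hp
  have hsplit : rowMul (g + p) S - rowMul q S'
      = rowMul g S + rowMul (p - q) S + rowMul q (S - S') := by
    rw [rowMul_add_left, rowMul_sub_left, rowMul_sub_right]
    abel
  calc ‖rowMul (g + p) S - rowMul q S'‖ + ‖rowMul q S' - rowMul (-p') S'‖
      ≤ (‖rowMul g S‖ + ‖p - q‖ * ‖S‖ + ‖q‖ * ‖S - S'‖) + ‖p' + q‖ * ‖S'‖ := by
        rw [hsplit, ← rowMul_sub_left, sub_neg_eq_add, add_comm q p']
        refine add_le_add (norm_add₃_le.trans ?_) (norm_rowMul_le _ _)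
        gcongr <;> exact norm_rowMul_le _ _
    _ ≤ (‖rowMul g S‖ + η * M + ‖q‖ * Δ) + η * M := by gcongr
    _ = ‖rowMul g S‖ + (‖q‖ * Δ + 2 * η * M) := by ring

variable {U V : Type*} {b : ℝ → Eucl n → U → V → Eucl n}
  {σ : ℝ → Eucl n → U → V → Matrix (Fin n) (Fin d) ℝ}
  {f : ℝ → Eucl n → ℝ → Eucl d → U → V → ℝ}

/-- The largest linear growth of `gameIntegrand` in gradient and Hessian that a driver with
Lipschitz constant `C` allows. Strict supersolutions of the corresponding equation are barriers for
differences of solutions of the Isaacs equation. -/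
def extremalIntegrand (C : ℝ) (b : ℝ → Eucl n → U → V → Eucl n)
    (σ : ℝ → Eucl n → U → V → Matrix (Fin n) (Fin d) ℝ) (t : ℝ) (x p : Eucl n) (Q : Eucl n → ℝ)
    (u : U) (v : V) : ℝ :=
  1 / 2 * ∑ k, Q (euclColumn (σ t x u v) k) + ⟪p, b t x u v⟫ + C * ‖rowMul p (σ t x u v)‖

variable [TopologicalSpace U] [TopologicalSpace V] {T C : ℝ}

namespace RegularCoefficients

theorem driver_sub_le (hr : RegularCoefficients T C b σ f) {t s : ℝ} (ht : t ∈ Icc 0 T)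
    (hs : s ∈ Icc 0 T) {x x' : Eucl n} {u : U} {v : V} {z z' : Eucl d} (ζ : Eucl d) {D : ℝ}
    (hD : |f t x' 0 ζ u v - f s x' 0 ζ u v| ≤ D) :
    f t x 0 z u v - f s x' 0 z' u v ≤ C * (‖z - ζ‖ + ‖ζ - z'‖) + C * ‖x - x'‖ + D := by
  have hlip := (abs_le.1 (hr.f_lip t ht x x' 0 0 z ζ u v)).2
  have hlip' := (abs_le.1 (hr.f_lip s hs x' x' 0 0 ζ z' u v)).2
  simp only [sub_self, abs_zero, norm_zero, add_zero, zero_add] at hlip hlip'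
  linarith [(abs_le.1 hD).2]

theorem gameIntegrand_le (hr : RegularCoefficients T C b σ f) {t s : ℝ} (ht : t ∈ Icc 0 T)
    (hs : s ∈ Icc 0 T) {x x' q g p p' : Eucl n} {u : U} {v : V} {H P P' : Eucl n → ℝ}
    {a c η D M Δ : ℝ} (ha : 0 ≤ a) (hc : 0 ≤ c)
    (hP : ∀ m m', P m + P' m' ≤ a * ‖m - m'‖ ^ 2 + c * (‖m‖ ^ 2 + ‖m'‖ ^ 2))
    (hp : ‖p - q‖ ≤ η) (hp' : ‖p' + q‖ ≤ η)
    (hM : ‖b t x u v‖ ≤ M ∧ ‖σ t x u v‖ ≤ M) (hM' : ‖b s x' u v‖ ≤ M ∧ ‖σ s x' u v‖ ≤ M)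
    (hb : ‖b t x u v - b s x' u v‖ ≤ Δ) (hσ : ‖σ t x u v - σ s x' u v‖ ≤ Δ)
    (hf : |f t x' 0 (rowMul q (σ s x' u v)) u v - f s x' 0 (rowMul q (σ s x' u v)) u v| ≤ D) :
    gameIntegrand b σ f t x (g + p) (fun m => H m + P m) u v
      ≤ gameIntegrand b σ f s x' (-p') (fun m => -P' m) u v + (extremalIntegrand C b σ t x g H u v
        + (a / 2 * Δ ^ 2 + c * M ^ 2 + (1 + C) * (‖q‖ * Δ + 2 * η * M) + C * ‖x - x'‖ + D)) := by
  have hforms := sum_column_forms_le ha hc hP hM.2 hM'.2 hσ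
  have hdrift := inner_add_inner_le_of_norm_sub_le hp hp' hM.1 hM'.1 hb
  have hdriver := hr.driver_sub_le ht hs (x := x) (z := rowMul (g + p) (σ t x u v))
    (z' := rowMul (-p') (σ s x' u v)) _ hf
  have hrow := mul_le_mul_of_nonneg_left
    (norm_rowMul_sub_add_le (g := g) hp hp' hM.2 hM'.2 hσ) hr.pos.le
  simp only [gameIntegrand, extremalIntegrand, Finset.sum_add_distrib, Finset.sum_neg_distrib,
    inner_add_left, inner_neg_left]
  linarith

variable [CompactSpace U] [CompactSpace V] [Nonempty U] [Nonempty V]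

/- At a doubled maximum the two viscosity inequalities nearly contradict strictness of the barrier
`θ`: the margin `α` is at most the error produced by the doubling. -/
theorem barrier_margin_le (hr : RegularCoefficients T C b σ f)
    {w v θ : ℝ → Eucl n → ℝ} {g g' : Eucl n → ℝ}
    (hw : IsViscositySubsolution T (lowerHamiltonian b σ f) g w)
    (hv : IsViscositySupersolution T (lowerHamiltonian b σ f) g' v)
    (hθ : ContDiff ℝ 3 fun q : ℝ × Eucl n => θ q.1 q.2) {t s : ℝ}
    (ht : t ∈ Ico 0 T) (hs : s ∈ Ico 0 T) {x x' q : Eucl n} {p p' : SpaceTime n}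
    {X Y : SpaceTime n →L[ℝ] SpaceTime n} {a c η D M Δ α : ℝ} (ha : 0 ≤ a) (hc : 0 ≤ c)
    (hwX : ∀ᶠ q in 𝓝 (t, x), w q.1 q.2 - θ q.1 q.2
      ≤ w t x - θ t x + quadTest (WithLp.toLp 2 (t, x)) p X q.1 q.2)
    (hvY : ∀ᶠ q in 𝓝 (s, x'),
      -v q.1 q.2 ≤ -v s x' + quadTest (WithLp.toLp 2 (s, x')) p' Y q.1 q.2)
    (hXY : ∀ m m', spatialForm X m + spatialForm Y m'
      ≤ a * ‖m - m'‖ ^ 2 + c * (‖m‖ ^ 2 + ‖m'‖ ^ 2))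
    (hp : ‖p.snd - q‖ ≤ η) (hp' : ‖p'.snd + q‖ ≤ η) (hpt : p.fst + p'.fst ≤ 2 * η)
    (hM : ∀ u v, ‖b t x u v‖ ≤ M ∧ ‖σ t x u v‖ ≤ M)
    (hM' : ∀ u v, ‖b s x' u v‖ ≤ M ∧ ‖σ s x' u v‖ ≤ M)
    (hb : ∀ u v, ‖b t x u v - b s x' u v‖ ≤ Δ) (hσ : ∀ u v, ‖σ t x u v - σ s x' u v‖ ≤ Δ)
    (hf : ∀ u v,
      |f t x' 0 (rowMul q (σ s x' u v)) u v - f s x' 0 (rowMul q (σ s x' u v)) u v| ≤ D)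
    (hstrict : ∀ u v, timeDeriv θ t x
      + extremalIntegrand C b σ t x (spaceGrad θ t x) (secondDirDeriv θ t x) u v ≤ -α) :
    α ≤ 2 * η + (a / 2 * Δ ^ 2 + c * M ^ 2 + (1 + C) * (‖q‖ * Δ + 2 * η * M)
        + C * ‖x - x'‖ + D) := by
  have hsub := hw.of_le_quadTest hθ ht hwX
  have hsuper := hv.of_neg_le_quadTest hs hvY
  have ht' := Ico_subset_Icc_self ht
  have hs' := Ico_subset_Icc_self hs
  have hθ₂ : ContDiff ℝ 2 (θ t) := (contDiff_slice hθ t).of_le (by norm_num)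
  obtain ⟨B, hB⟩ := hr.exists_abs_gameIntegrand_le ht' x (spaceGrad θ t x + p.snd)
    (Q := fun m => secondDirDeriv θ t x m + spatialForm X m)
    ((continuous_secondDirDeriv hθ₂).add (continuous_spatialForm X))
  obtain ⟨B', hB'⟩ := hr.exists_abs_gameIntegrand_le hs' x' (-p'.snd)
    (Q := fun m => -spatialForm Y m) (continuous_spatialForm Y).neg
  have hgame := iSup_iInf_le_add (fun u v => (hB u v).trans (le_max_left B B'))
    (fun u v => (hB' u v).trans (le_max_right B B')) fun u v =>
      (hr.gameIntegrand_le ht' hs' (g := spaceGrad θ t x) (H := secondDirDeriv θ t x) ha hc hXY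
        hp hp' (hM u v) (hM' u v) (hb u v) (hσ u v) (hf u v)).trans (add_le_add_right
          (add_le_add_left (le_sub_iff_add_le'.2 (hstrict u v)) _) _)
  linarith

end RegularCoefficients

end LocalComparison

section StrictBarrier

theorem exists_pos_le_mul_lt {ε₀ β k : ℝ} (hε₀ : 0 < ε₀) (hβ : 0 < β) (hk : 0 ≤ k) :
    ∃ η > 0, η ≤ ε₀ ∧ k * η < β := by
  obtain ⟨η, hη, hkη⟩ := exists_pos_mul_lt hβ k
  exact ⟨min ε₀ η, lt_min hε₀ hη, min_le_left _ _,
    (mul_le_mul_of_nonneg_left (min_le_right _ _) hk).trans_lt hkη⟩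

section PenalizedMax

variable {E : Type*} [NormedAddCommGroup E] [InnerProductSpace ℝ E] {S : Set E} {u v : E → ℝ}
  {A : E →L[ℝ] E} {η : ℝ} {y y' : E}

theorem inner_le_of_penalized_max
    (hmax : ∀ z ∈ S, ∀ z' ∈ S, u z + v z' - 1 / 2 * ⟪A (z - z'), z - z'⟫
      ≤ u y + v y' - 1 / 2 * ⟪A (y - y'), y - y'⟫ + η) (hy' : y' ∈ S) :
    ⟪A (y - y'), y - y'⟫ ≤ 2 * (u y - u y' + η) := by
  have hdiag := hmax y' hy' y' hy'
  rw [sub_self, map_zero, inner_zero_left] at hdiag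
  linarith

theorem add_le_of_penalized_max (hA : A.IsPositive)
    (hmax : ∀ z ∈ S, ∀ z' ∈ S, u z + v z' - 1 / 2 * ⟪A (z - z'), z - z'⟫
      ≤ u y + v y' - 1 / 2 * ⟪A (y - y'), y - y'⟫ + η) {z : E} (hz : z ∈ S) :
    u z + v z ≤ u y + v y' + η := by
  have hdiag := hmax z hz z hz
  rw [sub_self, map_zero, inner_zero_left] at hdiag
  linarith [hA.inner_nonneg_left (y - y')]

end PenalizedMax

variable {n d : ℕ}

theorem sq_le_of_inner_penaltyOp_le {δ ε K : ℝ} (hδ : 0 < δ) (hε : 0 < ε) {z : SpaceTime n}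
    (hz : ⟪penaltyOp n δ ε z, z⟫ ≤ K) : z.fst ^ 2 ≤ K * δ ∧ ‖z.snd‖ ^ 2 ≤ K * ε := by
  rw [inner_penaltyOp_self] at hz
  have htime : 0 ≤ δ⁻¹ * z.fst ^ 2 := by positivity
  have hspace : 0 ≤ ε⁻¹ * ‖z.snd‖ ^ 2 := by positivity
  rw [mul_comm K, mul_comm K, ← inv_mul_le_iff₀ hδ, ← inv_mul_le_iff₀ hε]
  constructor <;> linarith

theorem norm_sq_le_of_inner_penaltyOp_le {δ ε K : ℝ} (hδ : 0 < δ) (hδε : δ ≤ ε) (hK : 0 ≤ K)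
    {z : SpaceTime n} (hz : ⟪penaltyOp n δ ε z, z⟫ ≤ K) : ‖z‖ ^ 2 ≤ 2 * K * ε := by
  obtain ⟨htime, hspace⟩ := sq_le_of_inner_penaltyOp_le hδ (hδ.trans_le hδε) hz
  rw [WithLp.prod_norm_sq_eq_of_L2, Real.norm_eq_abs, sq_abs]
  linarith [mul_le_mul_of_nonneg_left hδε hK]

theorem exists_positive_superjets {S : Set (SpaceTime n)} (hS : IsCompact S)
    {u v : SpaceTime n → ℝ} (hu : ContinuousOn u S) (hv : ContinuousOn v S)
    {z₀ : SpaceTime n} (hz₀ : z₀ ∈ S) (hpos : 0 < u z₀ + v z₀) {e : ℝ} (he : 0 < e) :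
    ∃ ε₀ > 0, ∀ ε δ η : ℝ, ε ≤ ε₀ → 0 < δ → δ ≤ ε → 0 < η → η ≤ ε₀ →
      ∃ y ∈ S, ∃ y' ∈ S, ∃ p p' : SpaceTime n, ∃ X Y : SpaceTime n →L[ℝ] SpaceTime n,
        0 < u y + v y ∧ 0 < u y' + v y' ∧
        (y - y').fst ^ 2 ≤ e * δ ∧ ‖(y - y').snd‖ ^ 2 ≤ e * ε ∧
        ‖p - penaltyOp n δ ε (y - y')‖ ≤ η ∧ ‖p' + penaltyOp n δ ε (y - y')‖ ≤ η ∧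
        HasSuperjetOn u S y p X ∧ HasSuperjetOn v S y' p' Y ∧
        ∀ h h', ⟪X h, h⟫ + ⟪Y h', h'⟫ ≤ ⟪penaltyOp n δ ε (h - h'), h - h'⟫ := by
  obtain ⟨B, hB⟩ := hS.exists_bound_of_continuousOn hu
  have hB₀ : 0 ≤ B := (norm_nonneg _).trans (hB z₀ hz₀)
  obtain ⟨ω, hω, hωe, hωpos⟩ : ∃ ω > 0, ω ≤ e / 4 ∧ 2 * ω < u z₀ + v z₀ :=
    exists_pos_le_mul_lt (by positivity) hpos zero_le_two
  obtain ⟨r, hr, hur⟩ := Metric.uniformContinuousOn_iff.1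
    (hS.uniformContinuousOn_of_continuous (hu.prodMk hv)) ω hω
  obtain ⟨ε₀, hε₀, hε₀ω, hε₀r⟩ : ∃ ε₀ > 0, ε₀ ≤ ω ∧ 2 * (2 * (2 * B + ω)) * ε₀ < r ^ 2 :=
    exists_pos_le_mul_lt hω (by positivity) (by positivity)
  refine ⟨ε₀, hε₀, fun ε δ η hεε₀ hδ hδε hη hηε₀ => ?_⟩
  have hε : 0 < ε := hδ.trans_le hδε
  have hA := isPositive_penaltyOp (n := n) hδ.le hε.le
  obtain ⟨y, hy, y', hy', p, p', X, Y, hmax, hp, hp', hX, hY, hXY⟩ :=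
    exists_superjets_of_doubling hS ⟨z₀, hz₀⟩ hu hv hA hη
  have hinner := inner_le_of_penalized_max hmax hy'
  have hz₀max := add_le_of_penalized_max hA hmax hz₀
  have hdist : dist y y' < r := by
    have huy := (abs_le.1 (hB y hy)).2
    have huy' := (abs_le.1 (hB y' hy')).1
    rw [dist_eq_norm]
    refine lt_of_pow_lt_pow_left₀ 2 hr.le ((norm_sq_le_of_inner_penaltyOp_le hδ hδε
      (K := 2 * (2 * B + ω)) (by positivity) (by linarith)).trans_lt (hε₀r.trans_le' ?_))
    gcongr
  obtain ⟨huω, hvω⟩ := max_lt_iff.1 (hur y hy y' hy' hdist)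
  rw [Real.dist_eq, abs_lt] at huω hvω
  obtain ⟨htime, hspace⟩ := sq_le_of_inner_penaltyOp_le hδ hε (K := e) (by linarith)
  exact ⟨y, hy, y', hy', p, p', X, Y, by linarith, by linarith, htime, hspace, hp, hp',
    hX, hY, hXY⟩

variable {U V : Type*} [TopologicalSpace U] [TopologicalSpace V] {T C : ℝ}
  {b : ℝ → Eucl n → U → V → Eucl n} {σ : ℝ → Eucl n → U → V → Matrix (Fin n) (Fin d) ℝ}
  {f : ℝ → Eucl n → ℝ → Eucl d → U → V → ℝ}

theorem add_spatialForm_le_of_le_penaltyOp {X Y : SpaceTime n →L[ℝ] SpaceTime n} {δ ε : ℝ}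
    (hXY : ∀ h h', ⟪X h, h⟫ + ⟪Y h', h'⟫ ≤ ⟪penaltyOp n δ ε (h - h'), h - h'⟫) (c : ℝ)
    (m m' : Eucl n) :
    spatialForm (X + c • ContinuousLinearMap.id ℝ (SpaceTime n)) m
        + spatialForm (Y + c • ContinuousLinearMap.id ℝ (SpaceTime n)) m'
      ≤ ε⁻¹ * ‖m - m'‖ ^ 2 + c * (‖m‖ ^ 2 + ‖m'‖ ^ 2) := by
  have hform := hXY (spaceDir m) (spaceDir m')
  rw [← spaceDir_sub] at hform
  rw [spatialForm_add_smul_id, spatialForm_add_smul_id, ← spatialForm_penaltyOp δ]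
  linarith! only [hform]

theorem RegularCoefficients.barrier_margin_le_of_superjets [CompactSpace U] [CompactSpace V]
    [Nonempty U] [Nonempty V] (hr : RegularCoefficients T C b σ f)
    {w v θ : ℝ → Eucl n → ℝ} {g g' : Eucl n → ℝ}
    (hw : IsViscositySubsolution T (lowerHamiltonian b σ f) g w)
    (hv : IsViscositySupersolution T (lowerHamiltonian b σ f) g' v)
    (hθ : ContDiff ℝ 3 fun q : ℝ × Eucl n => θ q.1 q.2) {S : Set (SpaceTime n)}
    {δ ε η D M α : ℝ} (hε : 0 < ε) (hM : 0 < M) (hα : 0 < α)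
    {y y' p p' : SpaceTime n} {X Y : SpaceTime n →L[ℝ] SpaceTime n}
    (hy : y.fst ∈ Ico 0 T) (hy' : y'.fst ∈ Ico 0 T) (hSy : S ∈ 𝓝 y) (hSy' : S ∈ 𝓝 y')
    (hX : HasSuperjetOn (fun z : SpaceTime n => w z.fst z.snd - θ z.fst z.snd) S y p X)
    (hY : HasSuperjetOn (fun z : SpaceTime n => -v z.fst z.snd) S y' p' Y)
    (hXY : ∀ h h', ⟪X h, h⟫ + ⟪Y h', h'⟫ ≤ ⟪penaltyOp n δ ε (h - h'), h - h'⟫)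
    (hp : ‖p - penaltyOp n δ ε (y - y')‖ ≤ η) (hp' : ‖p' + penaltyOp n δ ε (y - y')‖ ≤ η)
    (hMy : ∀ u v, ‖b y.fst y.snd u v‖ ≤ M ∧ ‖σ y.fst y.snd u v‖ ≤ M)
    (hMy' : ∀ u v, ‖b y'.fst y'.snd u v‖ ≤ M ∧ ‖σ y'.fst y'.snd u v‖ ≤ M)
    (htime : ∀ u v, ‖b y.fst y'.snd u v - b y'.fst y'.snd u v‖ ≤ D ∧
      ‖σ y.fst y'.snd u v - σ y'.fst y'.snd u v‖ ≤ D ∧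
      ∀ z, ‖z‖ ≤ ε⁻¹ * ‖(y - y').snd‖ * M →
        |f y.fst y'.snd 0 z u v - f y'.fst y'.snd 0 z u v| ≤ D)
    (hstrict : ∀ u v, timeDeriv θ y.fst y.snd + extremalIntegrand C b σ y.fst y.snd
      (spaceGrad θ y.fst y.snd) (secondDirDeriv θ y.fst y.snd) u v ≤ -α) :
    α ≤ 2 * η + (ε⁻¹ / 2 * (C * ‖(y - y').snd‖ + D) ^ 2 + α / 8
      + (1 + C) * (ε⁻¹ * ‖(y - y').snd‖ * (C * ‖(y - y').snd‖ + D) + 2 * η * M)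
      + C * ‖(y - y').snd‖ + D) := by
  have hqnorm : ‖ε⁻¹ • (y - y').snd‖ = ε⁻¹ * ‖(y - y').snd‖ := by
    rw [norm_smul, Real.norm_of_nonneg (by positivity)]
  have hpt : p.fst + p'.fst ≤ 2 * η := by
    have hfst := (le_abs_self _).trans ((WithLp.norm_fst_le ℝ _).trans hp)
    have hfst' := (le_abs_self _).trans ((WithLp.norm_fst_le ℝ _).trans hp')
    rw [WithLp.sub_fst] at hfst
    rw [WithLp.add_fst] at hfst'
    linarith
  have hmargin := hr.barrier_margin_le hw hv hθ hy hy' (x := y.snd) (x' := y'.snd)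
    (q := ε⁻¹ • (y - y').snd) (Δ := C * ‖(y - y').snd‖ + D) (inv_nonneg.2 hε.le)
    (c := 2 * (α / (16 * M ^ 2))) (by positivity)
    (hX.eventually_le_quadTest (v := fun t x => w t x - θ t x) hSy (by positivity))
    (hY.eventually_le_quadTest (v := fun t x => -v t x) hSy' (by positivity))
    (add_spatialForm_le_of_le_penaltyOp hXY _)
    ((WithLp.norm_snd_le ℝ (p - penaltyOp n δ ε (y - y'))).trans hp)
    ((WithLp.norm_snd_le ℝ (p' + penaltyOp n δ ε (y - y'))).trans hp') hpt hMy hMy'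
    (fun u v => (norm_sub_le_norm_sub_add_norm_sub _ (b y.fst y'.snd u v) _).trans
      (add_le_add (hr.b_lip _ (Ico_subset_Icc_self hy) _ _ u v) (htime u v).1))
    (fun u v => (norm_sub_le_norm_sub_add_norm_sub _ (σ y.fst y'.snd u v) _).trans
      (add_le_add (hr.σ_lip _ (Ico_subset_Icc_self hy) _ _ u v) (htime u v).2.1))
    (fun u v => (htime u v).2.2 _ ((norm_rowMul_le _ _).trans (hqnorm ▸
      mul_le_mul_of_nonneg_left (hMy' u v).2 (norm_nonneg _)))) hstrict
  have hκ : 2 * (α / (16 * M ^ 2)) * M ^ 2 = α / 8 := by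
    field_simp
    norm_num
  rwa [hqnorm, hκ] at hmargin

theorem doubling_error_lt {C M R D ε η α r : ℝ} (hC : 0 < C) (hε : 0 < ε) (hα : 0 < α)
    (hrR : r ≤ 2 * R) (hD : 0 ≤ D) (hD₁ : D ≤ 1)
    (hrε : r ^ 2 ≤ α / (8 * (2 * C ^ 2 + C)) * ε) (hCr : C * r < α / 8)
    (hDα : (ε⁻¹ + (1 + C) * (ε⁻¹ * (2 * R)) + 1) * D < α / 8)
    (hηα : (2 + 2 * (1 + C) * M) * η < α / 8) :
    2 * η + (ε⁻¹ / 2 * (C * r + D) ^ 2 + α / 8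
      + (1 + C) * (ε⁻¹ * r * (C * r + D) + 2 * η * M) + C * r + D) < α := by
  have hsquare : ε⁻¹ / 2 * (C * r + D) ^ 2 ≤ C ^ 2 * (ε⁻¹ * r ^ 2) + ε⁻¹ * D := by
    have hyoung : 1 / 2 * (C * r + D) ^ 2 ≤ C ^ 2 * r ^ 2 + D := by
      nlinarith [sq_nonneg (C * r - D)]
    calc ε⁻¹ / 2 * (C * r + D) ^ 2 = ε⁻¹ * (1 / 2 * (C * r + D) ^ 2) := by ring
      _ ≤ ε⁻¹ * (C ^ 2 * r ^ 2 + D) := by gcongr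
      _ = C ^ 2 * (ε⁻¹ * r ^ 2) + ε⁻¹ * D := by ring
  have hcross : (1 + C) * (ε⁻¹ * r * D) ≤ (1 + C) * (ε⁻¹ * (2 * R) * D) := by gcongr
  have hquad : (2 * C ^ 2 + C) * (ε⁻¹ * r ^ 2) ≤ α / 8 := by
    calc (2 * C ^ 2 + C) * (ε⁻¹ * r ^ 2)
        ≤ (2 * C ^ 2 + C) * (α / (8 * (2 * C ^ 2 + C))) := by
          gcongr
          rwa [inv_mul_le_iff₀ hε, mul_comm]
      _ = α / 8 := by field_simp
  linarith

/- The scales are chosen in the order `ε`, `D`, `δ`, `η`: the gradient of the penalty is of size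
`ε⁻¹`, and the time modulus `D` of the coefficients has to beat it before `δ` is fixed. -/
theorem RegularCoefficients.exists_penalty_scales [CompactSpace U] [CompactSpace V]
    (hr : RegularCoefficients T C b σ f) {R ε₀ α : ℝ} (hR : 0 ≤ R) (hε₀ : 0 < ε₀) (hα : 0 < α) :
    ∃ M > 0, (∀ t ∈ Icc 0 T, ∀ x, ‖x‖ ≤ R → ∀ u v, ‖b t x u v‖ ≤ M ∧ ‖σ t x u v‖ ≤ M) ∧
      ∃ ε ≤ ε₀, ∃ δ > 0, δ ≤ ε ∧ ∃ η > 0, η ≤ ε₀ ∧ ∃ D, ∀ t ∈ Icc 0 T, ∀ s ∈ Icc 0 T,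
        (t - s) ^ 2 ≤ α / (8 * (2 * C ^ 2 + C)) * δ → ∀ x r, ‖x‖ ≤ R → r ≤ 2 * R →
        r ^ 2 ≤ α / (8 * (2 * C ^ 2 + C)) * ε →
        (∀ u v, ‖b t x u v - b s x u v‖ ≤ D ∧ ‖σ t x u v - σ s x u v‖ ≤ D ∧
          ∀ z, ‖z‖ ≤ ε⁻¹ * r * M → |f t x 0 z u v - f s x 0 z u v| ≤ D) ∧
        2 * η + (ε⁻¹ / 2 * (C * r + D) ^ 2 + α / 8
          + (1 + C) * (ε⁻¹ * r * (C * r + D) + 2 * η * M) + C * r + D) < α := by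
  have hC := hr.pos
  obtain ⟨M, hM, hbound⟩ := hr.exists_bound R
  obtain ⟨ε, hε, hεε₀, hεα⟩ : ∃ ε > 0, ε ≤ ε₀ ∧
      C ^ 2 * (α / (8 * (2 * C ^ 2 + C))) * ε < (α / 8) ^ 2 :=
    exists_pos_le_mul_lt hε₀ (by positivity) (by positivity)
  obtain ⟨D, hD, hD₁, hDα⟩ : ∃ D > 0, D ≤ 1 ∧
      (ε⁻¹ + (1 + C) * (ε⁻¹ * (2 * R)) + 1) * D < α / 8 :=
    exists_pos_le_mul_lt one_pos (by positivity) (by positivity)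
  obtain ⟨ρ, hρ, hmod⟩ := hr.exists_time_modulus R (ε⁻¹ * (2 * R) * M) hD
  obtain ⟨δ, hδ, hδε, hδρ⟩ : ∃ δ > 0, δ ≤ ε ∧ α / (8 * (2 * C ^ 2 + C)) * δ < ρ ^ 2 :=
    exists_pos_le_mul_lt hε (by positivity) (by positivity)
  obtain ⟨η, hη, hηε₀, hηα⟩ : ∃ η > 0, η ≤ ε₀ ∧ (2 + 2 * (1 + C) * M) * η < α / 8 :=
    exists_pos_le_mul_lt hε₀ (by positivity) (by positivity)
  refine ⟨M, hM, hbound, ε, hεε₀, δ, hδ, hδε, η, hη, hηε₀, D,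
    fun t ht s hs hts x r hx hrR hrε => ⟨fun u v => ?_, ?_⟩⟩
  · obtain ⟨hb, hσ, hf⟩ := hmod t ht s hs (abs_lt_of_sq_lt_sq (hts.trans_lt hδρ) hρ.le) x hx u v
    exact ⟨hb, hσ, fun z hz => hf z (hz.trans (by gcongr))⟩
  · have hCr : C * r < α / 8 := by
      refine lt_of_pow_lt_pow_left₀ 2 (by positivity) (hεα.trans_le' ?_)
      rw [mul_pow, mul_assoc]
      gcongr
    exact doubling_error_lt hC hε hα hrR hD.le hD₁ hrε hCr hDα hηα

theorem RegularCoefficients.sub_le_of_strict_barrier [CompactSpace U] [CompactSpace V]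
    [Nonempty U] [Nonempty V] (hr : RegularCoefficients T C b σ f)
    {w v θ : ℝ → Eucl n → ℝ} {g g' : Eucl n → ℝ}
    (hw : IsViscositySubsolution T (lowerHamiltonian b σ f) g w)
    (hv : IsViscositySupersolution T (lowerHamiltonian b σ f) g' v)
    (hwc : ContinuousOn (fun q : ℝ × Eucl n => w q.1 q.2) (Icc 0 T ×ˢ univ))
    (hvc : ContinuousOn (fun q : ℝ × Eucl n => v q.1 q.2) (Icc 0 T ×ˢ univ))
    (hθ : ContDiff ℝ 3 fun q : ℝ × Eucl n => θ q.1 q.2) {a t₁ R α : ℝ} (ha : 0 ≤ a)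
    (ht₁ : t₁ ≤ T) (hα : 0 < α)
    (hstrict : ∀ t ∈ Ioo a t₁, ∀ x u v, timeDeriv θ t x
      + extremalIntegrand C b σ t x (spaceGrad θ t x) (secondDirDeriv θ t x) u v ≤ -α)
    (hbd : ∀ t ∈ Icc a t₁, ∀ x, ‖x‖ ≤ R → t = a ∨ t = t₁ ∨ ‖x‖ = R → w t x - v t x ≤ θ t x)
    {t : ℝ} (ht : t ∈ Icc a t₁) {x : Eucl n} (hx : ‖x‖ ≤ R) : w t x - v t x ≤ θ t x := by
  by_contra! hcon
  have hC := hr.pos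
  have hpair : Continuous fun z : SpaceTime n => (z.fst, z.snd) :=
    (WithLp.continuous_fst 2 ℝ (Eucl n)).prodMk (WithLp.continuous_snd 2 ℝ (Eucl n))
  have hmaps : MapsTo (fun z : SpaceTime n => (z.fst, z.snd)) (spaceTimeCylinder n a t₁ R)
      (Icc 0 T ×ˢ univ) := fun z hz => ⟨⟨ha.trans hz.1.1, hz.1.2.trans ht₁⟩, mem_univ _⟩
  obtain ⟨ε₀, hε₀, hjets⟩ := exists_positive_superjets (isCompact_spaceTimeCylinder n a t₁ R)
    ((hwc.comp hpair.continuousOn hmaps).sub (hθ.continuous.comp hpair).continuousOn)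
    (hvc.comp hpair.continuousOn hmaps).neg (z₀ := WithLp.toLp 2 (t, x)) ⟨ht, hx⟩
    (by change 0 < w t x - θ t x + -v t x; linarith)
    (e := α / (8 * (2 * C ^ 2 + C))) (by positivity)
  obtain ⟨M, hM, hbound, ε, hεε₀, δ, hδ, hδε, η, hη, hηε₀, D, hscales⟩ :=
    hr.exists_penalty_scales ((norm_nonneg _).trans hx) hε₀ hα
  obtain ⟨y, hyS, y', hyS', p, p', X, Y, hy, hy', hrt, hrx, hp, hp', hX, hY, hXY⟩ :=
    hjets ε δ η hεε₀ hδ hδε hη hηε₀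
  have hinterior : ∀ z ∈ spaceTimeCylinder n a t₁ R,
      0 < w z.fst z.snd - θ z.fst z.snd + -v z.fst z.snd →
      (z.fst ∈ Ioo a t₁ ∧ z.fst ∈ Ico 0 T) ∧ ‖z.snd‖ < R := by
    intro z hz hzpos
    have hnot := mt (hbd z.fst hz.1 z.snd hz.2) (by linarith)
    push Not at hnot
    have htop := hz.1.2.lt_of_ne hnot.2.1
    exact ⟨⟨⟨hz.1.1.lt_of_ne' hnot.1, htop⟩, ha.trans hz.1.1, htop.trans_le ht₁⟩,
      hz.2.lt_of_ne hnot.2.2⟩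
  obtain ⟨⟨hyI, hyT⟩, hyR⟩ := hinterior y hyS hy
  obtain ⟨⟨hyI', hyT'⟩, hyR'⟩ := hinterior y' hyS' hy'
  have hrR : ‖(y - y').snd‖ ≤ 2 * R := (norm_sub_le y.snd y'.snd).trans (by linarith)
  obtain ⟨htime, hlt⟩ := hscales _ (Ico_subset_Icc_self hyT) _ (Ico_subset_Icc_self hyT') hrt _ _
    hyR'.le hrR hrx
  exact hlt.not_ge (hr.barrier_margin_le_of_superjets hw hv hθ (hδ.trans_le hδε) hM hα hyT hyT'
    (spaceTimeCylinder_mem_nhds hyI hyR) (spaceTimeCylinder_mem_nhds hyI' hyR') hX hY hXY hp hp'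
    (hbound _ (Ico_subset_Icc_self hyT) _ hyR.le) (hbound _ (Ico_subset_Icc_self hyT') _ hyR'.le)
    htime (hstrict _ hyI _))

end StrictBarrier

section GrowthBarrier

section LogWeight

variable {E : Type*} [NormedAddCommGroup E]

/-- The weight `1 + log (1 + ‖x‖²)^{1/2}`, whose square governs the growth allowed in `Θ`; the
shift by one makes it at least one. -/
def logWeight (x : E) : ℝ := 1 + 1 / 2 * Real.log (1 + ‖x‖ ^ 2)

/-- The weight `exp (c (1 + log (1 + ‖x‖²)^{1/2})²)`. -/
def expLogWeight (c : ℝ) (x : E) : ℝ := Real.exp (c * logWeight x ^ 2)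

theorem one_le_logWeight (x : E) : 1 ≤ logWeight x := by
  have hlog : 0 ≤ Real.log (1 + ‖x‖ ^ 2) := Real.log_nonneg (by nlinarith [sq_nonneg ‖x‖])
  rw [logWeight]
  linarith

theorem expLogWeight_pos (c : ℝ) (x : E) : 0 < expLogWeight c x := Real.exp_pos _

theorem expLogWeight_mono (x : E) : Monotone fun c => expLogWeight c x := fun c c' hc => by
  change Real.exp _ ≤ Real.exp _
  gcongr

variable [InnerProductSpace ℝ E]

theorem contDiff_logWeight {k : WithTop ℕ∞} : ContDiff ℝ k (logWeight : E → ℝ) :=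
  contDiff_const.add (contDiff_const.mul
    ((contDiff_const.add (contDiff_norm_sq ℝ)).log fun x => by positivity))

theorem hasDerivAt_norm_sq_line (x e : E) (s : ℝ) :
    HasDerivAt (fun s : ℝ => ‖x + s • e‖ ^ 2) (2 * ⟪x + s • e, e⟫) s := by
  have hline : HasDerivAt (fun s : ℝ => x + s • e) e s := by
    simpa only [id_eq, one_smul] using ((hasDerivAt_id s).smul_const e).const_add x
  exact hline.norm_sq

theorem hasDerivAt_logWeight_line (x e : E) (s : ℝ) :
    HasDerivAt (fun s : ℝ => logWeight (x + s • e))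
      (⟪x + s • e, e⟫ / (1 + ‖x + s • e‖ ^ 2)) s :=
  (((((hasDerivAt_norm_sq_line x e s).const_add 1).log (by positivity)).const_mul
    (1 / 2)).const_add 1).congr_deriv (by ring)

theorem hasDerivAt_deriv_logWeight_line (x e : E) :
    HasDerivAt (fun s : ℝ => ⟪x + s • e, e⟫ / (1 + ‖x + s • e‖ ^ 2))
      (‖e‖ ^ 2 / (1 + ‖x‖ ^ 2) - 2 * (⟪x, e⟫ / (1 + ‖x‖ ^ 2)) ^ 2) 0 := by
  have hnum : HasDerivAt (fun s : ℝ => ⟪x + s • e, e⟫) (‖e‖ ^ 2) 0 := by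
    simpa only [inner_add_left, real_inner_smul_left, real_inner_self_eq_norm_sq, id_eq, one_mul]
      using ((hasDerivAt_id (0 : ℝ)).mul_const (‖e‖ ^ 2)).const_add ⟪x, e⟫
  refine (hnum.fun_div ((hasDerivAt_norm_sq_line x e 0).const_add 1)
    (by positivity)).congr_deriv ?_
  rw [zero_smul, add_zero]
  field_simp

theorem hasDerivAt_expLogWeight_line (c : ℝ) (x e : E) (s : ℝ) :
    HasDerivAt (fun s : ℝ => expLogWeight c (x + s • e))
      (expLogWeight c (x + s • e)
        * (2 * c * logWeight (x + s • e) * (⟪x + s • e, e⟫ / (1 + ‖x + s • e‖ ^ 2)))) s := by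
  refine (((hasDerivAt_logWeight_line x e s).fun_pow 2).const_mul c).exp.congr_deriv ?_
  rw [expLogWeight, Nat.cast_ofNat, Nat.add_one_sub_one, pow_one]
  ring

theorem deriv_deriv_expLogWeight_line (c : ℝ) (x e : E) :
    deriv (deriv fun s : ℝ => expLogWeight c (x + s • e)) 0
      = expLogWeight c x * ((2 * c * logWeight x * (⟪x, e⟫ / (1 + ‖x‖ ^ 2))) ^ 2
        + 2 * c * (⟪x, e⟫ / (1 + ‖x‖ ^ 2)) ^ 2
        + 2 * c * logWeight x * (‖e‖ ^ 2 / (1 + ‖x‖ ^ 2)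
          - 2 * (⟪x, e⟫ / (1 + ‖x‖ ^ 2)) ^ 2)) := by
  rw [funext fun s => (hasDerivAt_expLogWeight_line c x e s).deriv]
  refine ((hasDerivAt_expLogWeight_line c x e 0).fun_mul
    (((hasDerivAt_logWeight_line x e 0).const_mul (2 * c)).fun_mul
      (hasDerivAt_deriv_logWeight_line x e))).deriv.trans ?_
  rw [zero_smul, add_zero]
  ring

theorem inner_div_sq_le (x e : E) :
    (⟪x, e⟫ / (1 + ‖x‖ ^ 2)) ^ 2 ≤ ‖e‖ ^ 2 / (1 + ‖x‖ ^ 2) := by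
  have hcauchy : ⟪x, e⟫ ^ 2 ≤ (1 + ‖x‖ ^ 2) * ‖e‖ ^ 2 := by
    calc ⟪x, e⟫ ^ 2 ≤ (‖x‖ * ‖e‖) ^ 2 := sq_le_sq' (neg_le_of_abs_le (abs_real_inner_le_norm x e))
          (real_inner_le_norm x e)
      _ ≤ (1 + ‖x‖ ^ 2) * ‖e‖ ^ 2 := by
          rw [mul_pow]
          gcongr
          exact le_add_of_nonneg_left zero_le_one
  rw [div_pow, div_le_div_iff₀ (by positivity) (by positivity)]
  calc ⟪x, e⟫ ^ 2 * (1 + ‖x‖ ^ 2) ≤ (1 + ‖x‖ ^ 2) * ‖e‖ ^ 2 * (1 + ‖x‖ ^ 2) := by gcongr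
    _ = ‖e‖ ^ 2 * (1 + ‖x‖ ^ 2) ^ 2 := by ring

theorem deriv_deriv_expLogWeight_line_le {c : ℝ} (hc : 0 ≤ c) (x e : E) :
    deriv (deriv fun s : ℝ => expLogWeight c (x + s • e)) 0
      ≤ expLogWeight c x * logWeight x ^ 2
        * ((4 * c ^ 2 + 4 * c) * (‖e‖ ^ 2 / (1 + ‖x‖ ^ 2))) := by
  rw [deriv_deriv_expLogWeight_line, mul_assoc (expLogWeight c x)]
  refine mul_le_mul_of_nonneg_left ?_ (expLogWeight_pos c x).le
  have hweight := one_le_logWeight x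
  set P := logWeight x
  have hsq : 1 ≤ P ^ 2 := one_le_pow₀ hweight
  have hle : P ≤ P ^ 2 := le_self_pow₀ hweight two_ne_zero
  calc (2 * c * P * (⟪x, e⟫ / (1 + ‖x‖ ^ 2))) ^ 2 + 2 * c * (⟪x, e⟫ / (1 + ‖x‖ ^ 2)) ^ 2
        + 2 * c * P * (‖e‖ ^ 2 / (1 + ‖x‖ ^ 2) - 2 * (⟪x, e⟫ / (1 + ‖x‖ ^ 2)) ^ 2)
      ≤ (4 * c ^ 2 * P ^ 2 + 2 * c * 1) * (⟪x, e⟫ / (1 + ‖x‖ ^ 2)) ^ 2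
        + 2 * c * P * (‖e‖ ^ 2 / (1 + ‖x‖ ^ 2)) := by
        have hdrop : 0 ≤ 4 * c * P * (⟪x, e⟫ / (1 + ‖x‖ ^ 2)) ^ 2 := by positivity
        linarith
    _ ≤ (4 * c ^ 2 * P ^ 2 + 2 * c * P ^ 2) * (‖e‖ ^ 2 / (1 + ‖x‖ ^ 2))
        + 2 * c * P ^ 2 * (‖e‖ ^ 2 / (1 + ‖x‖ ^ 2)) := by
        gcongr
        exact inner_div_sq_le x e
    _ = P ^ 2 * ((4 * c ^ 2 + 4 * c) * (‖e‖ ^ 2 / (1 + ‖x‖ ^ 2))) := by ring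

end LogWeight

variable {n d : ℕ}

/-- The barrier `l exp ((L (t₁ - t) + G) (1 + log (1 + ‖x‖²)^{1/2})²) + K exp (-m (t - a))` on
`[a, t₁]`: its first term dominates functions of `Θ` at infinity, its second term dominates at the
initial time `a` and vanishes at later times as `m → ∞`. -/
def growthBarrier (n : ℕ) (l L G K m a t₁ : ℝ) (t : ℝ) (x : Eucl n) : ℝ :=
  l * expLogWeight (L * (t₁ - t) + G) x + K * Real.exp (-m * (t - a))

variable {l L G K m a t₁ : ℝ}

theorem contDiff_growthBarrier {k : WithTop ℕ∞} :
    ContDiff ℝ k fun q : ℝ × Eucl n => growthBarrier n l L G K m a t₁ q.1 q.2 := by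
  have hweight : ContDiff ℝ k fun q : ℝ × Eucl n => logWeight q.2 :=
    contDiff_logWeight.comp contDiff_snd
  have hcoeff : ContDiff ℝ k fun q : ℝ × Eucl n => L * (t₁ - q.1) + G := by fun_prop
  have htime : ContDiff ℝ k fun q : ℝ × Eucl n => -m * (q.1 - a) := by fun_prop
  exact (contDiff_const.mul (hcoeff.mul (hweight.pow 2)).exp).add (contDiff_const.mul htime.exp)

theorem timeDeriv_growthBarrier (t : ℝ) (x : Eucl n) :
    timeDeriv (growthBarrier n l L G K m a t₁) t x
      = -(l * L * (expLogWeight (L * (t₁ - t) + G) x * logWeight x ^ 2))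
        - m * K * Real.exp (-m * (t - a)) := by
  have hcoeff : HasDerivAt (fun s => (L * (t₁ - s) + G) * logWeight x ^ 2)
      (L * (-1) * logWeight x ^ 2) t :=
    ((((hasDerivAt_id t).const_sub t₁).const_mul L).add_const G).mul_const _
  have htime : HasDerivAt (fun s => -m * (s - a)) (-m * 1) t :=
    ((hasDerivAt_id t).sub_const a).const_mul (-m)
  refine ((hcoeff.exp.const_mul l).add (htime.exp.const_mul K)).deriv.trans ?_
  rw [expLogWeight]
  ring

theorem deriv_growthBarrier_line (t : ℝ) (x e : Eucl n) (s : ℝ) :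
    deriv (fun s : ℝ => growthBarrier n l L G K m a t₁ t (x + s • e)) s
      = l * deriv (fun s : ℝ => expLogWeight (L * (t₁ - t) + G) (x + s • e)) s := by
  simp only [growthBarrier, deriv_add_const, deriv_const_mul_field]

theorem secondDirDeriv_growthBarrier (t : ℝ) (x e : Eucl n) :
    secondDirDeriv (growthBarrier n l L G K m a t₁) t x e
      = l * deriv (deriv fun s : ℝ => expLogWeight (L * (t₁ - t) + G) (x + s • e)) 0 := by
  rw [secondDirDeriv, funext (deriv_growthBarrier_line t x e), deriv_const_mul_field]

theorem spaceGrad_growthBarrier (t : ℝ) (x : Eucl n) :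
    spaceGrad (growthBarrier n l L G K m a t₁) t x
      = (l * (expLogWeight (L * (t₁ - t) + G) x
        * (2 * (L * (t₁ - t) + G) * logWeight x / (1 + ‖x‖ ^ 2)))) • x := by
  refine ext_inner_right ℝ fun e => ?_
  have hdiff : Differentiable ℝ (growthBarrier n l L G K m a t₁ t) :=
    (contDiff_slice contDiff_growthBarrier t).differentiable one_ne_zero
  rw [inner_spaceGrad hdiff.differentiableAt, deriv_growthBarrier_line,
    (hasDerivAt_expLogWeight_line _ x e 0).deriv, real_inner_smul_left, zero_smul, add_zero]
  ring

theorem sq_norm_le_of_linear_growth {E F : Type*} [SeminormedAddCommGroup E]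
    [SeminormedAddCommGroup F] {x : E} {S : F} {M : ℝ} (hS : ‖S‖ ≤ M * (1 + ‖x‖)) :
    ‖S‖ ^ 2 / (1 + ‖x‖ ^ 2) ≤ 2 * M ^ 2 := by
  rw [div_le_iff₀ (by positivity)]
  calc ‖S‖ ^ 2 ≤ (M * (1 + ‖x‖)) ^ 2 := by gcongr
    _ = M ^ 2 * (1 + ‖x‖) ^ 2 := mul_pow _ _ _
    _ ≤ M ^ 2 * (2 * (1 ^ 2 + ‖x‖ ^ 2)) := by
        gcongr
        exact add_sq_le
    _ = 2 * M ^ 2 * (1 + ‖x‖ ^ 2) := by ring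

variable {M G₁ : ℝ} {t : ℝ} {x : Eucl n}

theorem sum_secondDirDeriv_growthBarrier_le {S : Matrix (Fin n) (Fin d) ℝ} (hl : 0 ≤ l)
    (hS : ‖S‖ ≤ M * (1 + ‖x‖)) (hG : 0 ≤ L * (t₁ - t) + G) (hG₁ : L * (t₁ - t) + G ≤ G₁) :
    1 / 2 * ∑ k, secondDirDeriv (growthBarrier n l L G K m a t₁) t x (euclColumn S k)
      ≤ l * (expLogWeight (L * (t₁ - t) + G) x * logWeight x ^ 2)
        * (M ^ 2 * (4 * G₁ ^ 2 + 4 * G₁)) := by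
  have hG₁₀ : 0 ≤ G₁ := hG.trans hG₁
  set c := L * (t₁ - t) + G
  have hE := expLogWeight_pos c x
  calc 1 / 2 * ∑ k, secondDirDeriv (growthBarrier n l L G K m a t₁) t x (euclColumn S k)
      ≤ 1 / 2 * ∑ k, l * (expLogWeight c x * logWeight x ^ 2 * ((4 * c ^ 2 + 4 * c)
          * (‖euclColumn S k‖ ^ 2 / (1 + ‖x‖ ^ 2)))) := by
        gcongr with k
        rw [secondDirDeriv_growthBarrier]
        gcongr
        exact deriv_deriv_expLogWeight_line_le hG x _
    _ = 1 / 2 * (l * (expLogWeight c x * logWeight x ^ 2)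
          * ((4 * c ^ 2 + 4 * c) * (‖S‖ ^ 2 / (1 + ‖x‖ ^ 2)))) := by
        simp only [← Finset.mul_sum, ← Finset.sum_div, sum_norm_euclColumn_sq]
        ring
    _ ≤ 1 / 2 * (l * (expLogWeight c x * logWeight x ^ 2)
          * ((4 * G₁ ^ 2 + 4 * G₁) * (2 * M ^ 2))) := by
        gcongr
        exact sq_norm_le_of_linear_growth hS
    _ = l * (expLogWeight c x * logWeight x ^ 2) * (M ^ 2 * (4 * G₁ ^ 2 + 4 * G₁)) := by ring

theorem norm_spaceGrad_growthBarrier_mul_le {r : ℝ} (hl : 0 ≤ l) (hr : 0 ≤ r)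
    (hrM : r ≤ M * (1 + ‖x‖)) (hG : 0 ≤ L * (t₁ - t) + G) (hG₁ : L * (t₁ - t) + G ≤ G₁) :
    ‖spaceGrad (growthBarrier n l L G K m a t₁) t x‖ * r
      ≤ l * (expLogWeight (L * (t₁ - t) + G) x * logWeight x ^ 2) * (4 * G₁ * M) := by
  have hG₁₀ : 0 ≤ G₁ := hG.trans hG₁
  set c := L * (t₁ - t) + G
  have hE := expLogWeight_pos c x
  have hweight := one_le_logWeight x
  have hM : 0 ≤ M := nonneg_of_mul_nonneg_left (hr.trans hrM) (by positivity)
  have hx : ‖x‖ * (1 + ‖x‖) / (1 + ‖x‖ ^ 2) ≤ 2 := by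
    rw [div_le_iff₀ (by positivity)]
    nlinarith [sq_nonneg (‖x‖ - 1)]
  rw [spaceGrad_growthBarrier, norm_smul, Real.norm_of_nonneg (by positivity)]
  calc l * (expLogWeight c x * (2 * c * logWeight x / (1 + ‖x‖ ^ 2))) * ‖x‖ * r
      ≤ l * (expLogWeight c x * (2 * c * logWeight x / (1 + ‖x‖ ^ 2))) * ‖x‖
          * (M * (1 + ‖x‖)) := by gcongr
    _ = l * (expLogWeight c x * logWeight x) * (2 * c) * M
          * (‖x‖ * (1 + ‖x‖) / (1 + ‖x‖ ^ 2)) := by ring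
    _ ≤ l * (expLogWeight c x * logWeight x ^ 2) * (2 * G₁) * M * 2 := by
        gcongr
        exact le_self_pow₀ hweight two_ne_zero
    _ = l * (expLogWeight c x * logWeight x ^ 2) * (4 * G₁ * M) := by ring

variable {U V : Type*} {C : ℝ} {b : ℝ → Eucl n → U → V → Eucl n}
  {σ : ℝ → Eucl n → U → V → Matrix (Fin n) (Fin d) ℝ} {u : U} {v : V}

/-- A rate `L` of decrease in time of the exponent of `growthBarrier` that makes the barrier a
strict supersolution, if `M` bounds the linear growth of the coefficients and `G₁` the exponent. -/
def barrierRate (C M G₁ : ℝ) : ℝ :=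
  M ^ 2 * (4 * G₁ ^ 2 + 4 * G₁) + 4 * G₁ * M * (1 + C) + 1

theorem growthBarrier_strict (hC : 0 ≤ C) (hl : 0 ≤ l) (hmK : 0 ≤ m * K)
    (hb : ‖b t x u v‖ ≤ M * (1 + ‖x‖)) (hσ : ‖σ t x u v‖ ≤ M * (1 + ‖x‖))
    (hG : 0 ≤ L * (t₁ - t) + G) (hG₁ : L * (t₁ - t) + G ≤ G₁) (hL : barrierRate C M G₁ ≤ L) :
    timeDeriv (growthBarrier n l L G K m a t₁) t x
      + extremalIntegrand C b σ t x (spaceGrad (growthBarrier n l L G K m a t₁) t x)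
        (secondDirDeriv (growthBarrier n l L G K m a t₁) t x) u v ≤ -l := by
  have hsecond := sum_secondDirDeriv_growthBarrier_le (K := K) (m := m) (a := a) hl hσ hG hG₁
  have hdrift := (real_inner_le_norm _ _).trans (norm_spaceGrad_growthBarrier_mul_le
    (K := K) (m := m) (a := a) hl (norm_nonneg _) hb hG hG₁)
  have hrow := mul_le_mul_of_nonneg_left ((norm_rowMul_le _ _).trans
    (norm_spaceGrad_growthBarrier_mul_le (K := K) (m := m) (a := a) hl (norm_nonneg _) hσ hG hG₁))
    hC
  have htail : 0 ≤ m * K * Real.exp (-m * (t - a)) := by positivity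
  have hweight : 1 ≤ expLogWeight (L * (t₁ - t) + G) x * logWeight x ^ 2 :=
    one_le_mul_of_one_le_of_one_le (Real.one_le_exp (by positivity))
      (one_le_pow₀ (one_le_logWeight x))
  rw [timeDeriv_growthBarrier, extremalIntegrand]
  rw [barrierRate] at hL
  set W := expLogWeight (L * (t₁ - t) + G) x * logWeight x ^ 2
  have hrate := mul_le_mul_of_nonneg_left hL (mul_nonneg hl (zero_le_one.trans hweight))
  have hlW := mul_le_mul_of_nonneg_left hweight hl
  linarith

end GrowthBarrier

section Comparison

theorem forall_Icc_of_backward_step {P : ℝ → Prop} {a₀ T δ : ℝ} (hδ : 0 < δ) (hT : P T)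
    (hstep : ∀ a ∈ Icc a₀ T, ∀ t₁ ∈ Icc a T, t₁ - a ≤ δ → P t₁ → P a) : ∀ t ∈ Icc a₀ T, P t := by
  suffices hsteps : ∀ k : ℕ, ∀ t ∈ Icc a₀ T, T - t ≤ k * δ → P t by
    intro t ht
    obtain ⟨k, hk⟩ := exists_nat_ge ((T - t) / δ)
    exact hsteps k t ht ((div_le_iff₀ hδ).1 hk)
  intro k
  induction k with
  | zero =>
    intro t ht htT
    rw [Nat.cast_zero, zero_mul, sub_nonpos] at htT
    exact htT.antisymm ht.2 ▸ hT
  | succ k ih =>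
    intro t ht htT
    rw [Nat.cast_succ, add_mul, one_mul] at htT
    have htmin : t ≤ min T (t + δ) := le_min ht.2 (by linarith)
    refine hstep t ht (min T (t + δ)) ⟨htmin, min_le_left _ _⟩
      (by linarith [min_le_right T (t + δ)]) (ih _ ⟨ht.1.trans htmin, min_le_left _ _⟩ ?_)
    rcases min_choice T (t + δ) with hmin | hmin <;> rw [hmin]
    · rw [sub_self]
      positivity
    · linarith

variable {n d : ℕ} {T : ℝ} {w v : ℝ → Eucl n → ℝ}

theorem MemTheta.exists_growth_exponent (hw : MemTheta T w) :
    ∃ A ≥ 0, ∀ G ≥ A, ∀ ε > 0, ∃ R, ∀ t ∈ Icc 0 T, ∀ x, R ≤ ‖x‖ →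
      |w t x| ≤ ε * expLogWeight G x := by
  obtain ⟨-, A, hA, hdecay⟩ := hw
  refine ⟨A, hA.le, fun G hG ε hε => ?_⟩
  obtain ⟨R, hR⟩ := hdecay ε hε
  refine ⟨R, fun t ht x hx => ?_⟩
  have hlog : Real.log ((‖x‖ ^ 2 + 1) ^ ((1 : ℝ) / 2)) = logWeight x - 1 := by
    rw [Real.log_rpow (by positivity), logWeight, add_comm (‖x‖ ^ 2)]
    ring
  have hweighted := hR t ht x hx
  rw [hlog, neg_mul, Real.exp_neg, ← div_eq_mul_inv, div_le_iff₀ (Real.exp_pos _)] at hweighted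
  calc |w t x| ≤ ε * Real.exp (A * (logWeight x - 1) ^ 2) := hweighted
    _ ≤ ε * expLogWeight A x := by
      rw [expLogWeight]
      gcongr
      · exact sub_nonneg.2 (one_le_logWeight x)
      · exact sub_le_self _ zero_le_one
    _ ≤ ε * expLogWeight G x := mul_le_mul_of_nonneg_left (expLogWeight_mono x hG) hε.le

theorem MemTheta.exists_sub_le_expLogWeight (hw : MemTheta T w) (hv : MemTheta T v) :
    ∃ G ≥ 0, ∀ l > 0, ∃ R, ∀ t ∈ Icc 0 T, ∀ x, R ≤ ‖x‖ →
      w t x - v t x ≤ l * expLogWeight G x := by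
  obtain ⟨A, hA, hwA⟩ := hw.exists_growth_exponent
  obtain ⟨B, -, hvB⟩ := hv.exists_growth_exponent
  refine ⟨max A B, hA.trans (le_max_left _ _), fun l hl => ?_⟩
  obtain ⟨Rw, hRw⟩ := hwA (max A B) (le_max_left _ _) (l / 2) (half_pos hl)
  obtain ⟨Rv, hRv⟩ := hvB (max A B) (le_max_right _ _) (l / 2) (half_pos hl)
  refine ⟨max Rw Rv, fun t ht x hx => ?_⟩
  have hwx := (abs_le.1 (hRw t ht x ((le_max_left _ _).trans hx))).2
  have hvx := (abs_le.1 (hRv t ht x ((le_max_right _ _).trans hx))).1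
  linarith

section Barrier

variable {l L G K m a t₁ t y : ℝ} {x : Eucl n}

theorem le_growthBarrier (hl : 0 ≤ l) (hK : 0 ≤ K) (hrate : 0 ≤ L * (t₁ - t))
    (hy : (t = a ∧ y ≤ K) ∨ y ≤ 0 ∨ y ≤ l * expLogWeight G x) :
    y ≤ growthBarrier n l L G K m a t₁ t x := by
  have hexp : 0 ≤ K * Real.exp (-m * (t - a)) := by positivity
  have hweight : 0 ≤ l * expLogWeight (L * (t₁ - t) + G) x :=
    mul_nonneg hl (expLogWeight_pos _ x).le
  rw [growthBarrier]
  rcases hy with ⟨rfl, hy⟩ | hy | hy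
  · rw [sub_self, mul_zero, Real.exp_zero, mul_one]
    linarith
  · linarith
  · have hmono : l * expLogWeight G x ≤ l * expLogWeight (L * (t₁ - t) + G) x :=
      mul_le_mul_of_nonneg_left (expLogWeight_mono x (le_add_of_nonneg_left hrate)) hl
    linarith

theorem le_of_forall_le_growthBarrier (ht : a < t)
    (hy : ∀ m ≥ 0, y ≤ growthBarrier n l L G K m a t₁ t x) :
    y ≤ l * expLogWeight (L * (t₁ - t) + G) x := by
  have hexp : Tendsto (fun m : ℝ => Real.exp (-m * (t - a))) atTop (𝓝 0) :=
    Real.tendsto_exp_atBot.comp (tendsto_neg_atTop_atBot.atBot_mul_const (sub_pos.2 ht))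
  have hlim := tendsto_const_nhds (x := l * expLogWeight (L * (t₁ - t) + G) x).add
    (hexp.const_mul K)
  rw [mul_zero, add_zero] at hlim
  exact ge_of_tendsto hlim ((eventually_ge_atTop 0).mono hy)

theorem nonpos_of_forall_le_mul {E : ℝ} (hy : ∀ l > 0, y ≤ l * E) : y ≤ 0 := by
  have hlim : Tendsto (fun l : ℝ => l * E) (𝓝[>] 0) (𝓝 (0 * E)) :=
    (tendsto_id.mono_left nhdsWithin_le_nhds).mul_const E
  rw [zero_mul] at hlim
  exact ge_of_tendsto hlim (eventually_mem_nhdsWithin.mono hy)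

end Barrier

theorem left_le_of_forall_Ioc_le {a t₁ : ℝ} (hat : a < t₁) (ha : 0 ≤ a) (ht₁ : t₁ ≤ T)
    (hwc : ContinuousOn (fun q : ℝ × Eucl n => w q.1 q.2) (Icc 0 T ×ˢ univ))
    (hvc : ContinuousOn (fun q : ℝ × Eucl n => v q.1 q.2) (Icc 0 T ×ˢ univ)) {x : Eucl n}
    (hle : ∀ t ∈ Ioc a t₁, w t x ≤ v t x) : w a x ≤ v a x := by
  have hsub : Ioc a t₁ ⊆ Icc 0 T := fun t ht => ⟨ha.trans ht.1.le, ht.2.trans ht₁⟩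
  have hpair : ContinuousOn (fun s : ℝ => (s, x)) (Icc 0 T) := by fun_prop
  have hmaps : MapsTo (fun s : ℝ => (s, x)) (Icc 0 T) (Icc 0 T ×ˢ univ) :=
    fun s hs => ⟨hs, mem_univ _⟩
  have haT : a ∈ Icc 0 T := ⟨ha, hat.le.trans ht₁⟩
  have hcl : a ∈ closure (Ioc a t₁) := closure_Ioc hat.ne ▸ left_mem_Icc.2 hat.le
  exact ContinuousWithinAt.closure_le hcl (f := fun s => w s x) (g := fun s => v s x)
    ((hwc.comp hpair hmaps a haT).mono hsub) ((hvc.comp hpair hmaps a haT).mono hsub) hle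

variable {U V : Type*} [TopologicalSpace U] [TopologicalSpace V] {C : ℝ}
  {b : ℝ → Eucl n → U → V → Eucl n} {σ : ℝ → Eucl n → U → V → Matrix (Fin n) (Fin d) ℝ}
  {f : ℝ → Eucl n → ℝ → Eucl d → U → V → ℝ}

theorem RegularCoefficients.of_lipschitz {C' : ℝ} (hC : 0 < C)
    (hb : ∀ x, ContinuousOn (fun q : ℝ × U × V => b q.1 x q.2.1 q.2.2) (Icc 0 T ×ˢ univ))
    (hσ : ∀ x, ContinuousOn (fun q : ℝ × U × V => σ q.1 x q.2.1 q.2.2) (Icc 0 T ×ˢ univ))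
    (hf : ∀ x y z,
      ContinuousOn (fun q : ℝ × U × V => f q.1 x y z q.2.1 q.2.2) (Icc 0 T ×ˢ univ))
    (hbσ_lip : ∀ t ∈ Icc 0 T, ∀ x x' u v,
      ‖b t x u v - b t x' u v‖ + ‖σ t x u v - σ t x' u v‖ ≤ C * ‖x - x'‖)
    (hf_lip : ∀ t ∈ Icc 0 T, ∀ x x' y y' z z' u v,
      |f t x y z u v - f t x' y' z' u v| ≤ C' * (‖x - x'‖ + |y - y'| + ‖z - z'‖)) :
    RegularCoefficients T (max C C') b σ f where
  pos := lt_max_of_lt_left hC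
  b_cont := hb
  σ_cont := hσ
  f_cont := hf
  b_lip t ht x x' u v := (le_add_of_nonneg_right (norm_nonneg _)).trans
    ((hbσ_lip t ht x x' u v).trans (by gcongr; exact le_max_left C C'))
  σ_lip t ht x x' u v := (le_add_of_nonneg_left (norm_nonneg _)).trans
    ((hbσ_lip t ht x x' u v).trans (by gcongr; exact le_max_left C C'))
  f_lip t ht x x' y y' z z' u v :=
    (hf_lip t ht x x' y y' z z' u v).trans (by gcongr; exact le_max_right C C')

variable [CompactSpace U] [CompactSpace V]

theorem RegularCoefficients.exists_linear_growth (hr : RegularCoefficients T C b σ f) :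
    ∃ M ≥ 0, ∀ t ∈ Icc 0 T, ∀ x u v,
      ‖b t x u v‖ ≤ M * (1 + ‖x‖) ∧ ‖σ t x u v‖ ≤ M * (1 + ‖x‖) := by
  obtain ⟨M, hM, hbound⟩ := hr.exists_bound 0
  have hC := hr.pos
  refine ⟨M + C, by positivity, fun t ht x u v => ?_⟩
  have hMC : M + C * ‖x‖ ≤ (M + C) * (1 + ‖x‖) := by nlinarith [norm_nonneg x]
  obtain ⟨hb₀, hσ₀⟩ := hbound t ht 0 norm_zero.le u v
  have hb := hr.b_lip t ht x 0 u v
  have hσ := hr.σ_lip t ht x 0 u v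
  rw [sub_zero] at hb hσ
  exact ⟨by linarith [norm_le_norm_add_norm_sub' (b t x u v) (b t 0 u v)],
    by linarith [norm_le_norm_add_norm_sub' (σ t x u v) (σ t 0 u v)]⟩

variable [Nonempty U] [Nonempty V] {g g' : Eucl n → ℝ} {a t₁ G L M l : ℝ}

theorem RegularCoefficients.exists_sub_le_growthBarrier (hr : RegularCoefficients T C b σ f)
    (hw : IsViscositySubsolution T (lowerHamiltonian b σ f) g w)
    (hv : IsViscositySupersolution T (lowerHamiltonian b σ f) g' v)
    (hwc : ContinuousOn (fun q : ℝ × Eucl n => w q.1 q.2) (Icc 0 T ×ˢ univ))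
    (hvc : ContinuousOn (fun q : ℝ × Eucl n => v q.1 q.2) (Icc 0 T ×ˢ univ))
    (hbound : ∀ t ∈ Icc 0 T, ∀ x u v,
      ‖b t x u v‖ ≤ M * (1 + ‖x‖) ∧ ‖σ t x u v‖ ≤ M * (1 + ‖x‖))
    (ha : a ∈ Icc 0 T) (ht₁ : t₁ ≤ T) (hG : 0 ≤ G) (hL₀ : 0 ≤ L)
    (hL : barrierRate C M (G + 1) ≤ L) (hshort : L * (t₁ - a) ≤ 1) (hl : 0 < l)
    (hgrow : ∃ R, ∀ t ∈ Icc 0 T, ∀ x, R ≤ ‖x‖ → w t x - v t x ≤ l * expLogWeight G x)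
    (hterm : ∀ x, w t₁ x ≤ v t₁ x) :
    ∃ K, ∀ m ≥ 0, ∀ t ∈ Icc a t₁, ∀ x, w t x - v t x ≤ growthBarrier n l L G K m a t₁ t x := by
  obtain ⟨R, hR⟩ := hgrow
  obtain ⟨K, hK⟩ := (isCompact_closedBall (0 : Eucl n) R).exists_bound_of_continuousOn
    ((hwc.sub hvc).comp (Continuous.prodMk_right a).continuousOn fun x _ => ⟨ha, mem_univ x⟩)
  have hmem : ∀ {t}, t ∈ Icc a t₁ → t ∈ Icc 0 T := fun ht => ⟨ha.1.trans ht.1, ht.2.trans ht₁⟩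
  have hrate : ∀ {t}, t ∈ Icc a t₁ → 0 ≤ L * (t₁ - t) := fun ht =>
    mul_nonneg hL₀ (sub_nonneg.2 ht.2)
  refine ⟨max K 0, fun m hm t ht x => hr.sub_le_of_strict_barrier hw hv hwc hvc (R := max R ‖x‖)
    contDiff_growthBarrier ha.1 ht₁ hl (fun t ht x u v => ?_) (fun t ht x _ hbd => ?_) ht
    (le_max_right _ _)⟩
  · have ht' := Ioo_subset_Icc_self ht
    have hle : L * (t₁ - t) ≤ L * (t₁ - a) := by gcongr; exact ht.1.le
    exact growthBarrier_strict hr.pos.le hl.le (mul_nonneg hm (le_max_right _ _))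
      (hbound t (hmem ht') x u v).1 (hbound t (hmem ht') x u v).2 (add_nonneg (hrate ht') hG)
      (by linarith) hL
  · refine le_growthBarrier hl.le (le_max_right _ _) (hrate ht) ?_
    rcases le_or_gt R ‖x‖ with hRx | hRx
    · exact .inr (.inr (hR t (hmem ht) x hRx))
    rcases hbd with rfl | rfl | hbd
    · exact .inl ⟨rfl, (le_abs_self _).trans
        ((hK x (mem_closedBall_zero_iff.2 hRx.le)).trans (le_max_left _ _))⟩
    · exact .inr (.inl (sub_nonpos.2 (hterm x)))
    · exact absurd (hbd ▸ le_max_left R _) hRx.not_ge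

theorem RegularCoefficients.comparison (hr : RegularCoefficients T C b σ f)
    (hw : IsViscositySubsolution T (lowerHamiltonian b σ f) g w)
    (hv : IsViscositySupersolution T (lowerHamiltonian b σ f) g v)
    (hwΘ : MemTheta T w) (hvΘ : MemTheta T v) :
    ∀ t ∈ Icc 0 T, ∀ x, w t x ≤ v t x := by
  obtain ⟨G, hG, hgrow⟩ := hwΘ.exists_sub_le_expLogWeight hvΘ
  obtain ⟨M, hM, hbound⟩ := hr.exists_linear_growth
  have hL : 0 < barrierRate C M (G + 1) := by
    have hC := hr.pos
    rw [barrierRate]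
    positivity
  refine forall_Icc_of_backward_step (inv_pos.2 hL) (fun x => (hw.1 x).trans (hv.1 x))
    fun a ha t₁ ht₁ hshort hterm x => ?_
  rcases ht₁.1.eq_or_lt with rfl | hat
  · exact hterm x
  rw [← one_div, le_div_iff₀' hL] at hshort
  refine left_le_of_forall_Ioc_le hat ha.1 ht₁.2 hwΘ.1 hvΘ.1 fun t ht => sub_nonpos.1 ?_
  refine nonpos_of_forall_le_mul
    (E := expLogWeight (barrierRate C M (G + 1) * (t₁ - t) + G) x) fun l hl => ?_
  obtain ⟨K, hK⟩ := hr.exists_sub_le_growthBarrier hw hv hwΘ.1 hvΘ.1 hbound ha ht₁.2 hG hL.le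
    le_rfl hshort hl (hgrow l hl) hterm
  exact le_of_forall_le_growthBarrier ht.1 fun m hm => hK m hm t (Ioc_subset_Icc_self ht) x

end Comparison

theorem IsViscositySolution.congr {n : ℕ} {T : ℝ}
    {H H' : ℝ → Eucl n → ℝ → Eucl n → Matrix (Fin n) (Fin n) ℝ → ℝ} {g : Eucl n → ℝ}
    {w : ℝ → Eucl n → ℝ} (hw : IsViscositySolution T H g w)
    (h : ∀ t ∈ Ico 0 T, ∀ x y p X, X.IsSymm → H t x y p X = H' t x y p X) :
    IsViscositySolution T H' g w := by
  have hjet : ∀ φ : ℝ → Eucl n → ℝ, IsTestFunction φ → ∀ t ∈ Ico 0 T, ∀ x,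
      H t x (φ t x) (spaceGrad φ t x) (spaceHess φ t x)
        = H' t x (φ t x) (spaceGrad φ t x) (spaceHess φ t x) := fun φ hφ t ht x =>
    h t ht _ _ _ _ (isSymm_spaceHess ((contDiff_slice hφ.1 t).of_le (by norm_num)))
  exact ⟨⟨hw.1.1, fun φ hφ t ht x hmax => hjet φ hφ t ht x ▸ hw.1.2 φ hφ t ht x hmax⟩,
    ⟨hw.2.1, fun φ hφ t ht x hmin => hjet φ hφ t ht x ▸ hw.2.2 φ hφ t ht x hmin⟩⟩

theorem value_of_game_under_isaacs_condition_general
    {n d : ℕ} {T : ℝ} {U V : Type*} [TopologicalSpace U] [CompactSpace U] [Nonempty U]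
    [TopologicalSpace V] [CompactSpace V] [Nonempty V]
    (b : ℝ → Eucl n → U → V → Eucl n)
    (σ : ℝ → Eucl n → U → V → Matrix (Fin n) (Fin d) ℝ)
    (f : ℝ → Eucl n → ℝ → Eucl d → U → V → ℝ) (Φ : Eucl n → ℝ)
    (hb_cont : ∀ x, ContinuousOn (fun q : ℝ × U × V => b q.1 x q.2.1 q.2.2) (Icc 0 T ×ˢ univ))
    (hσ_cont : ∀ x, ContinuousOn (fun q : ℝ × U × V => σ q.1 x q.2.1 q.2.2) (Icc 0 T ×ˢ univ))
    (hbσ_lip : ∃ C > 0, ∀ t ∈ Icc 0 T, ∀ x x' u v,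
      ‖b t x u v - b t x' u v‖ + ‖σ t x u v - σ t x' u v‖ ≤ C * ‖x - x'‖)
    (hf_cont : ∀ x y z,
      ContinuousOn (fun q : ℝ × U × V => f q.1 x y z q.2.1 q.2.2) (Icc 0 T ×ˢ univ))
    (hf_lip : ∃ C > 0, ∀ t ∈ Icc 0 T, ∀ x x' y y' z z' u v,
      |f t x y z u v - f t x' y' z' u v| ≤ C * (‖x - x'‖ + |y - y'| + ‖z - z'‖))
    (hIsaacs : ∀ t ∈ Icc 0 T, ∀ x y p X, X.IsSymm →
      lowerHamiltonian b σ f t x y p X = upperHamiltonian b σ f t x y p X)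
    (W Uval : ℝ → Eucl n → ℝ) (hWΘ : MemTheta T W) (hUΘ : MemTheta T Uval)
    (hW : IsViscositySolution T (lowerHamiltonian b σ f) Φ W)
    (hU : IsViscositySolution T (upperHamiltonian b σ f) Φ Uval) :
    ∀ t ∈ Icc 0 T, ∀ x, W t x = Uval t x := by
  obtain ⟨C, hC, hbσ_lip⟩ := hbσ_lip
  obtain ⟨C', -, hf_lip⟩ := hf_lip
  have hr := RegularCoefficients.of_lipschitz hC hb_cont hσ_cont hf_cont hbσ_lip hf_lip
  have hU' : IsViscositySolution T (lowerHamiltonian b σ f) Φ Uval :=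
    hU.congr fun t ht x y p X hX => (hIsaacs t (Ico_subset_Icc_self ht) x y p X hX).symm
  exact fun t ht x => le_antisymm (hr.comparison hW.1 hU'.2 hWΘ hUΘ t ht x)
    (hr.comparison hU'.1 hW.2 hUΘ hWΘ t ht x)

end ViscosityComparison

/-- **Remark 6.2 (existence of a value).** Under the Isaacs condition `H⁻ = H⁺`, a viscosity
solution `W ∈ Θ` of the lower Isaacs equation and a viscosity solution `Uval ∈ Θ` of the
upper Isaacs equation coincide: the game has a value. -/
theorem value_of_game_under_isaacs_condition
    {n d : ℕ} (hn : 1 ≤ n) (hd : 1 ≤ d) {T : ℝ} (hT : 0 < T)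
    {U V : Type*} [MetricSpace U] [CompactSpace U] [Nonempty U]
    [MetricSpace V] [CompactSpace V] [Nonempty V]
    (b : ℝ → Eucl n → U → V → Eucl n)
    (σ : ℝ → Eucl n → U → V → Matrix (Fin n) (Fin d) ℝ)
    (f : ℝ → Eucl n → ℝ → Eucl d → U → V → ℝ)
    (Φ : Eucl n → ℝ)
    -- (H4.1)(i): for fixed `x`, `b(·,x,·,·)` and `σ(·,x,·,·)` are continuous in `(t,u,v)`
    (hb_cont : ∀ x : Eucl n, ContinuousOn
      (fun q : ℝ × U × V => b q.1 x q.2.1 q.2.2)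
      (Set.Icc (0 : ℝ) T ×ˢ (Set.univ : Set (U × V))))
    (hσ_cont : ∀ x : Eucl n, ContinuousOn
      (fun q : ℝ × U × V => σ q.1 x q.2.1 q.2.2)
      (Set.Icc (0 : ℝ) T ×ˢ (Set.univ : Set (U × V))))
    -- (H4.1)(ii): `b` and `σ` are Lipschitz in `x`, uniformly in `(t,u,v)`
    (hbσ_lip : ∃ C > (0 : ℝ), ∀ t ∈ Set.Icc (0 : ℝ) T, ∀ (x x' : Eucl n) (u : U) (v : V),
      ‖b t x u v - b t x' u v‖ + ‖σ t x u v - σ t x' u v‖ ≤ C * ‖x - x'‖)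
    -- (H4.2)(i): for fixed `(x,y,z)`, `f(·,x,y,z,·,·)` is continuous in `(t,u,v)`
    (hf_cont : ∀ (x : Eucl n) (y : ℝ) (z : Eucl d), ContinuousOn
      (fun q : ℝ × U × V => f q.1 x y z q.2.1 q.2.2)
      (Set.Icc (0 : ℝ) T ×ˢ (Set.univ : Set (U × V))))
    -- (H4.2): `f` is Lipschitz in `(x,y,z)`, uniformly in `(t,u,v)`
    (hf_lip : ∃ C > (0 : ℝ), ∀ t ∈ Set.Icc (0 : ℝ) T,
      ∀ (x x' : Eucl n) (y y' : ℝ) (z z' : Eucl d) (u : U) (v : V),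
      |f t x y z u v - f t x' y' z' u v| ≤ C * (‖x - x'‖ + |y - y'| + ‖z - z'‖))
    -- (H4.2): `Φ` is Lipschitz
    (hΦ_lip : ∃ C > (0 : ℝ), ∀ x x' : Eucl n, |Φ x - Φ x'| ≤ C * ‖x - x'‖)
    -- Isaacs condition
    (hIsaacs : ∀ t ∈ Set.Icc (0 : ℝ) T, ∀ (x : Eucl n) (y : ℝ) (p : Eucl n)
      (X : Matrix (Fin n) (Fin n) ℝ), X.IsSymm →
      lowerHamiltonian b σ f t x y p X = upperHamiltonian b σ f t x y p X)
    (W Uval : ℝ → Eucl n → ℝ)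
    (hWΘ : MemTheta T W) (hUΘ : MemTheta T Uval)
    (hW : IsViscositySolution T (lowerHamiltonian b σ f) Φ W)
    (hU : IsViscositySolution T (upperHamiltonian b σ f) Φ Uval) :
    ∀ t ∈ Set.Icc (0 : ℝ) T, ∀ x : Eucl n, W t x = Uval t x :=
  value_of_game_under_isaacs_condition_general b σ f Φ hb_cont hσ_cont hbσ_lip hf_cont hf_lip
    hIsaacs W Uval hWΘ hUΘ hW hU
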